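/- Let n and r be positive integers with r ≤ 2^n − 2, and let k be the unique integer satisfying 2^{k−1} − 1 ≤ r ≤ 2^k − 2. Then there exists a smooth unirational complex r-fold quadric bundle X over S = ℙ^{n−k} × ℙ^k such that X is not stably rational. -/

import Mathlib

/-!
The quadric bundle is the hypersurface `∑ a_i(y) z_i² = 0`, where `y = (y_0, …, y_k)` are the
homogeneous coordinates of `ℙ^k` (the factor `ℙ^{n-k}` does not enter the equation) and
`a_i = P_i + ∑_j c_{ij} y_j^{d_i}` with `d_i` odd and `c_{ij}` algebraically independent over `ℚ`
(`aa`, `VeryGen`).  The `P_i` (`PP`) are `y_0 F`, `y_1`, `y_2` and `y_0 ∏_{j ∈ ε} y_j y_0` for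
distinct further sets `ε ⊆ {1, …, k}`; up to squares and the factor `F`, they are `y_0` times
coefficients of the Pfister form `π_y = ⊗_j ⟨1, y_j y_0⟩`.  The form
`F = 9 (∑ y_j)^{2k+4} - y_0 y_1 (∏ y_j)²` (`FF`) becomes a square locally at the points where some
coordinates vanish and `∑ y_j` does not, so there a zero of the degenerate quadric
`∑ P_i z_i² = 0` yields a zero of `π_y` (`bad_point`).

*Smoothness and flatness.*  The derivations `∂/∂c_{ij}` extend from `ℚ(c)` to `ℂ`.  Applied to the
equations of a singular point of the total space, or of a common zero of all `a_i`, they give a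
contradiction (`VeryGen.smooth`, `VeryGen.flat`).

*Unirationality.*  Since `a_1` and `a_2` are linear, the purely transcendental extension on which
`-a_1 / a_2` becomes a square is obtained by solving a linear equation for `y_1`.  Over it the
quadric has a point, hence a rational parametrisation (`VeryGen.exists_rational_point`).

*Failure of stable rationality.*  Over the double cover `w² = -a_0 a_1` the quadric also has a
point, so the function field `K` of the cone over the bundle times an affine space embeds into the
function field `L` of a double cover of an affine space (`VeryGen.exists_point_double_cover`).
There is a valuation on `L` with `c_{ij}` in its maximal ideal, whose residue field contains
`κ(y)(√(-y_0 y_1 F))` and over which the reduction of `π_y` is anisotropic: modulo `3` the element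
`-y_0 y_1 F` is a square, so the generic Pfister form stays anisotropic (`aniso_pfc_QA`,
`exists_main_valuation`).  Thus the generic point `y` is good, meaning that after scaling it reduces
to a point with nonzero coordinates and anisotropic Pfister form (`GoodAt`).

If `K` were `ℂ(t_1, …, t_d)`, the tautological point of the quadric would be given by polynomials
in `t`, and restricting to a line joining the generic parameter to a constant one gives a rational
curve in `ℙ^k` over which the quadric has a section, with a good point at one end and a constant
point at the other.  A constant point is never good, as `-1` times a quotient of complex numbers is
a square (`not_goodAt_const`).  Yet goodness propagates along such curves (`goodAt_zero`).  Indeed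
the edges of the Newton polygon of the curve give, over the residue field `E`, polynomial curves
`ξ(s)` over which the degenerate quadric has a section, and for these goodness of the top
coefficient implies goodness of the lowest one (`key_lemma`).  To see this, consider forms over
`E[s]` that are isometric to `π_ξ` over `E(s)`.  At each finite place `π_ξ` either has good
reduction or is hyperbolic (by `bad_point` and the fact that isotropic Pfister forms are
hyperbolic, `round_hyp_pc`), so a form of the class that degenerates there does not come from a
maximal lattice (`springer`, `local_good`, `local_bad`).  A lattice that is minimal with respect to
the anisotropic place at infinity then carries a form with constant coefficients
(`exists_constant_form`); being anisotropic over `E`, it stays so at `s = 0`, which forces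
goodness there.
-/

noncomputable section
open MvPolynomial

/-- The rational function field `ℂ(t₁, …, t_d)`. -/
abbrev RatFF (d : ℕ) : Type := FractionRing (MvPolynomial (Fin d) ℂ)

/-- An affine ℂ-algebra `R` (a chart, or an affine cone, of a variety `V`) has stably
rational fraction field: `Frac(R)(y₁,…,y_m) ≅ ℂ(t₁,…,t_d)` for some `m`, `d`.
If `R` is the coordinate ring of the affine cone over a projective variety `V`
(so that `Frac R = ℂ(V)(t)` is stably birational to `ℂ(V)`), this holds if and only if
`V` is stably rational, i.e. `V × ℙᵐ` is birational to a projective space for some `m`. -/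
def IsStablyRationalSpec (R : Type*) [CommRing R] [Algebra ℂ R] : Prop :=
  ∃ m d : ℕ, Nonempty (FractionRing (MvPolynomial (Fin m) R) ≃ₐ[ℂ] RatFF d)

/-- The fraction field of the affine ℂ-algebra `R` embeds into a purely transcendental
extension of `ℂ`.  If `R` is the coordinate ring of the affine cone over a projective
variety `V`, this holds if and only if `V` is unirational. -/
def IsUnirationalSpec (R : Type*) [CommRing R] [Algebra ℂ R] : Prop :=
  ∃ d : ℕ, Nonempty (FractionRing R →ₐ[ℂ] RatFF d)

/-- `Z` is an algebraic (Zariski closed) subset of a parameter space `V` with coordinates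
`coords`: it is the common zero locus of a set of polynomial functions in the coordinates. -/
def IsAlgSubsetOn {V : Type*} (coords : Set (V → ℂ)) (Z : Set V) : Prop :=
  ∃ S : Set (V → ℂ),
    S ⊆ ↑(Algebra.adjoin ℂ coords) ∧ Z = {v | ∀ f ∈ S, f v = 0}

/-- `P` holds for a very general point of the parameter space `V`: it holds away from a
countable union of proper algebraic subsets. -/
def VeryGenerallyOn {V : Type*} (coords : Set (V → ℂ)) (P : V → Prop) : Prop :=
  ∃ Z : ℕ → Set V,
    (∀ m, IsAlgSubsetOn coords (Z m) ∧ Z m ≠ Set.univ) ∧ ∀ v, (∀ m, v ∉ Z m) → P v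

noncomputable section
open MvPolynomial

namespace QB2

/-- Bihomogeneous coordinate ring of the base `S = ℙ^{n-k} × ℙ^k`. -/
abbrev PolyB (n k : ℕ) := MvPolynomial (Fin (n-k+1) ⊕ Fin (k+1)) ℂ

/-- `f` is bihomogeneous of bidegree `(p, q)` on `ℙ^{n-k} × ℙ^k` (in particular `f = 0`
if `p < 0` or `q < 0`), i.e. `f` is a section of `O_S(p, q)`. -/
def BiHomog {n k : ℕ} (f : PolyB n k) (p q : ℤ) : Prop :=
  ∀ m : (Fin (n-k+1) ⊕ Fin (k+1)) →₀ ℕ, coeff m f ≠ 0 →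
    ((∑ i, m (Sum.inl i) : ℤ) = p ∧ (∑ j, m (Sum.inr j) : ℤ) = q)

/-- Coordinate ring of the affine cone: base variables and fibre variables `z₀,…,z_{r+1}`. -/
abbrev Amb (n k r : ℕ) := MvPolynomial ((Fin (n-k+1) ⊕ Fin (k+1)) ⊕ Fin (r+2)) ℂ

/-- Symmetric matrices `A = (a_{ij})` of bihomogeneous polynomials with
`a_{ij}` a section of `L_i ⊗ L_j ⊗ L` where `L_i = O_S(e₁ i, e₂ i)` and `L = O_S(c₁, c₂)`:
these are the line bundle valued quadratic forms `q : 𝓔 → L` on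
`𝓔 = ⊕ L_i^{-1}` over `S = ℙ^{n-k} × ℙ^k`, defining the `r`-fold quadric bundle
`X = {q = 0} ⊂ ℙ(𝓔)` over `S`, given locally by `∑ a_{ij} z_i z_j = 0`. -/
def SymMat (n k r : ℕ) (e₁ e₂ : Fin (r+2) → ℤ) (c₁ c₂ : ℤ) : Type :=
  {a : Fin (r+2) → Fin (r+2) → PolyB n k //
    (∀ i j, a i j = a j i) ∧
      ∀ i j, BiHomog (a i j) (e₁ i + e₁ j + c₁) (e₂ i + e₂ j + c₂)}

variable {n k r : ℕ} {e₁ e₂ : Fin (r+2) → ℤ} {c₁ c₂ : ℤ}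

/-- The quadratic form `q = ∑ a_{ij} z_i z_j` as a polynomial on the affine cone. -/
def qpoly (A : SymMat n k r e₁ e₂ c₁ c₂) : Amb n k r :=
  ∑ i, ∑ j, (rename Sum.inl (A.1 i j)) * X (Sum.inr i) * X (Sum.inr j)

/-- `A` defines a quadric bundle over `S = ℙ^{n-k} × ℙ^k`: the quadratic form is nonzero on
each fibre (so `X = {q = 0} → S` is flat) and generically non-degenerate (so the generic
fibre of `X → S` is a smooth `r`-dimensional quadric over `ℂ(S)`). -/
def IsQuadricBundle (A : SymMat n k r e₁ e₂ c₁ c₂) : Prop :=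
  (Matrix.det (Matrix.of fun i j => A.1 i j) ≠ 0) ∧
    ∀ (x : Fin (n-k+1) → ℂ) (y : Fin (k+1) → ℂ), x ≠ 0 → y ≠ 0 →
      ∃ i j, eval (Sum.elim x y) (A.1 i j) ≠ 0

/-- Substitution `x_{i₁} = 1`, `y_{i₂} = 1`, `z_j = 1`: the equation of `X` on a standard
affine chart of `ℙ(𝓔)`. -/
def chartSub (i₁ : Fin (n-k+1)) (i₂ : Fin (k+1)) (j : Fin (r+2)) (p : Amb n k r) :
    Amb n k r :=
  aeval (fun v =>
    if v = Sum.inl (Sum.inl i₁) ∨ v = Sum.inl (Sum.inr i₂) ∨ v = Sum.inr j then 1 else X v) p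

/-- The total space `X = {q = 0} ⊂ ℙ(𝓔)` is smooth over `ℂ` (Jacobian criterion on all
standard affine charts). -/
def SmoothTotalSpace (A : SymMat n k r e₁ e₂ c₁ c₂) : Prop :=
  ∀ (i₁ : Fin (n-k+1)) (i₂ : Fin (k+1)) (j : Fin (r+2))
    (p : (Fin (n-k+1) ⊕ Fin (k+1)) ⊕ Fin (r+2) → ℂ),
    eval p (chartSub i₁ i₂ j (qpoly A)) = 0 →
      ∃ v, eval p (pderiv v (chartSub i₁ i₂ j (qpoly A))) ≠ 0

/-- Coordinate ring of the affine multicone over `X = {q = 0} ⊂ ℙ(𝓔)`; the corresponding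
affine variety is stably birational to `X`. -/
def ConeRing (A : SymMat n k r e₁ e₂ c₁ c₂) : Type :=
  Amb n k r ⧸ Ideal.span {qpoly A}

instance (A : SymMat n k r e₁ e₂ c₁ c₂) : CommRing (ConeRing A) := Ideal.Quotient.commRing _
instance (A : SymMat n k r e₁ e₂ c₁ c₂) : Algebra ℂ (ConeRing A) := Ideal.Quotient.algebra ℂ

end QB2

/-! ### Diagonal forms and Pfister forms -/

/-- The value at `v` of the diagonal quadratic form with coefficients `a`. -/
def dq {R ι : Type*} [CommRing R] [Fintype ι] (a v : ι → R) : R := ∑ i, a i * v i ^ 2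

/-- The symmetric bilinear form attached to the diagonal form with coefficients `a`. -/
def db {R ι : Type*} [CommRing R] [Fintype ι] (a v w : ι → R) : R := ∑ i, a i * v i * w i

/-- A diagonal form is anisotropic if it only vanishes at the zero vector. -/
def Aniso {R ι : Type*} [CommRing R] [Fintype ι] (a : ι → R) : Prop :=
  ∀ v : ι → R, dq a v = 0 → v = 0

/-- The coefficients of the Pfister form `⊗ ⟨1, b_i⟩`, indexed by subsets of `Fin k`. -/
def pc {R : Type*} [CommRing R] {k : ℕ} (b : Fin k → R) (ε : Fin k → Bool) : R :=
  ∏ i, if ε i then b i else 1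

section DiagForms
variable {R ι : Type*} [CommRing R] [Fintype ι]

theorem dq_add (a v w : ι → R) : dq a (v + w) = dq a v + dq a w + 2 * db a v w := by
  simp only [dq, db, Finset.mul_sum, ← Finset.sum_add_distrib, Pi.add_apply]
  exact Finset.sum_congr rfl fun i _ => by ring

theorem dq_smul (a v : ι → R) (c : R) : dq a (c • v) = c ^ 2 * dq a v := by
  simp only [dq, Finset.mul_sum, Pi.smul_apply, smul_eq_mul]
  exact Finset.sum_congr rfl fun i _ => by ring

theorem dq_zero (a : ι → R) : dq a 0 = 0 := by simp [dq]

theorem db_smul_right (a v w : ι → R) (c : R) : db a v (c • w) = c * db a v w := by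
  simp only [db, Finset.mul_sum, Pi.smul_apply, smul_eq_mul]
  exact Finset.sum_congr rfl fun i _ => by ring

theorem db_self (a v : ι → R) : db a v v = dq a v := by
  simp only [db, dq]; exact Finset.sum_congr rfl fun i _ => by ring

theorem dq_sum_elim {ι' : Type*} [Fintype ι'] (a : ι → R) (a' : ι' → R) (v : ι ⊕ ι' → R) :
    dq (Sum.elim a a') v = dq a (v ∘ Sum.inl) + dq a' (v ∘ Sum.inr) := by
  simp [dq]

theorem dq_smul_coeff (a v : ι → R) (c : R) : dq (c • a) v = c * dq a v := by
  simp only [dq, Finset.mul_sum, Pi.smul_apply, smul_eq_mul, mul_assoc]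

theorem dq_map {S : Type*} [CommRing S] (f : R →+* S) (a v : ι → R) :
    dq (fun i => f (a i)) (fun i => f (v i)) = f (dq a v) := by
  simp [dq, map_sum]

theorem dq_reindex {ι' : Type*} [Fintype ι'] (e : ι' ≃ ι) (a v : ι → R) :
    dq (a ∘ e) (v ∘ e) = dq a v := by
  simp only [dq, Function.comp]
  exact Equiv.sum_comp e (fun i => a i * v i ^ 2)

end DiagForms

section Round
variable {K ι : Type*} [Field K] [Fintype ι]

/-- Every nonzero value of the form is the multiplier of a linear similarity of the form. -/
def Round (a : ι → K) : Prop :=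
  ∀ v, dq a v ≠ 0 → ∃ σ : (ι → K) →ₗ[K] (ι → K), ∀ x, dq a (σ x) = dq a v * dq a x

/-- The doubling `φ ⊥ bφ`. -/
def dbl (a : ι → K) (b : K) : ι ⊕ ι → K := Sum.elim a (b • a)

/-- Every isotropic vector can be completed to a totally isotropic space of half dimension. -/
def Hyp (a : ι → K) : Prop :=
  (∃ v, v ≠ 0 ∧ dq a v = 0) → ∃ N : Submodule K (ι → K),
    (∀ v ∈ N, dq a v = 0) ∧ Fintype.card ι ≤ 2 * Module.finrank K N

/-- The linear map into a direct sum with given components. -/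
def pairMap (f g : (ι → K) →ₗ[K] (ι → K)) : (ι → K) →ₗ[K] (ι ⊕ ι → K) where
  toFun x := Sum.elim (f x) (g x)
  map_add' x y := by funext i; cases i <;> simp
  map_smul' c x := by funext i; cases i <;> simp

theorem round_dbl {a : ι → K} (h : Round a) (b : K) : Round (dbl a b) := by
  intro v hv
  set v1 := v ∘ Sum.inl
  set v2 := v ∘ Sum.inr
  have hval : ∀ w, dq (dbl a b) w = dq a (w ∘ Sum.inl) + b * dq a (w ∘ Sum.inr) := by
    intro w; rw [dbl, dq_sum_elim, dq_smul_coeff]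
  let p1 : (ι ⊕ ι → K) →ₗ[K] (ι → K) := LinearMap.funLeft K K Sum.inl
  let p2 : (ι ⊕ ι → K) →ₗ[K] (ι → K) := LinearMap.funLeft K K Sum.inr
  have mk : ∀ f g : (ι ⊕ ι → K) →ₗ[K] (ι → K), ∃ σ : (ι ⊕ ι → K) →ₗ[K] (ι ⊕ ι → K),
      ∀ x, σ x ∘ Sum.inl = f x ∧ σ x ∘ Sum.inr = g x := by
    intro f g
    refine ⟨⟨⟨fun x => Sum.elim (f x) (g x), ?_⟩, ?_⟩, ?_⟩
    · intro x y; funext i; cases i <;> simp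
    · intro c x; funext i; cases i <;> simp
    · intro x; constructor <;> rfl
  rw [hval] at hv
  simp only [hval]
  change dq a v1 + b * dq a v2 ≠ 0 at hv
  change ∃ σ : (ι ⊕ ι → K) →ₗ[K] (ι ⊕ ι → K), ∀ x, _ = (dq a v1 + b * dq a v2) * _
  by_cases h1 : dq a v1 = 0
  · have h2 : dq a v2 ≠ 0 := by intro h2; simp [h1, h2] at hv
    obtain ⟨σ, hσ⟩ := h v2 h2
    obtain ⟨Φ, hΦ⟩ := mk (b • (σ ∘ₗ p2)) (σ ∘ₗ p1)
    refine ⟨Φ, fun x => ?_⟩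
    rw [(hΦ x).1, (hΦ x).2]
    simp only [LinearMap.smul_apply, LinearMap.comp_apply, dq_smul, hσ, h1]
    change b ^ 2 * (dq a v2 * dq a (x ∘ Sum.inr)) + b * (dq a v2 * dq a (x ∘ Sum.inl)) = _
    ring
  by_cases h2 : dq a v2 = 0
  · obtain ⟨σ, hσ⟩ := h v1 h1
    obtain ⟨Φ, hΦ⟩ := mk (σ ∘ₗ p1) (σ ∘ₗ p2)
    refine ⟨Φ, fun x => ?_⟩
    rw [(hΦ x).1, (hΦ x).2]
    simp only [LinearMap.comp_apply, hσ, h2]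
    change dq a v1 * dq a (x ∘ Sum.inl) + b * (dq a v1 * dq a (x ∘ Sum.inr)) = _
    ring
  obtain ⟨σ, hσ⟩ := h v1 h1
  obtain ⟨τ, hτ⟩ := h v2 h2
  let s : (ι → K) →ₗ[K] (ι → K) := (dq a v1 * dq a v2)⁻¹ • (σ ∘ₗ τ)
  obtain ⟨Φ, hΦ⟩ := mk (σ ∘ₗ (p1 + (-(b * dq a v2)) • (s ∘ₗ p2)))
    (τ ∘ₗ (p1 + (dq a v1) • (s ∘ₗ p2)))
  refine ⟨Φ, fun x => ?_⟩
  rw [(hΦ x).1, (hΦ x).2]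
  have hs : ∀ y, dq a (s y) = (dq a v1 * dq a v2)⁻¹ * dq a y := by
    intro y
    simp only [s, LinearMap.smul_apply, LinearMap.comp_apply, dq_smul, hσ, hτ]
    field_simp
  simp only [LinearMap.comp_apply, LinearMap.add_apply, LinearMap.smul_apply, hσ, hτ, dq_add,
    dq_smul, db_smul_right, hs]
  have hp1 : p1 x = x ∘ Sum.inl := rfl
  have hp2 : p2 x = x ∘ Sum.inr := rfl
  rw [hp1, hp2]
  field_simp
  ring

theorem hyp_dbl {a : ι → K} (h : Round a) (hh : Hyp a) (b : K) : Hyp (dbl a b) := by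
  classical
  have hval : ∀ w, dq (dbl a b) w = dq a (w ∘ Sum.inl) + b * dq a (w ∘ Sum.inr) := by
    intro w; rw [dbl, dq_sum_elim, dq_smul_coeff]
  rintro ⟨v, hv0, hv⟩
  by_cases hiso : ∃ v, v ≠ 0 ∧ dq a v = 0
  · obtain ⟨N, hN, hc⟩ := hh hiso
    let f : (N × N) →ₗ[K] (ι ⊕ ι → K) :=
      { toFun := fun x => Sum.elim x.1.1 x.2.1
        map_add' := fun x y => by funext i; cases i <;> simp
        map_smul' := fun c x => by funext i; cases i <;> simp }
    refine ⟨LinearMap.range f, ?_, ?_⟩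
    · rintro _ ⟨x, rfl⟩
      rw [hval]
      have e1 : dq a (f x ∘ Sum.inl) = 0 := hN _ x.1.2
      have e2 : dq a (f x ∘ Sum.inr) = 0 := hN _ x.2.2
      rw [e1, e2]; ring
    · rw [LinearMap.finrank_range_of_inj, Module.finrank_prod, Fintype.card_sum]
      · omega
      · intro x y hxy
        refine Prod.ext (Subtype.ext (funext fun i => ?_)) (Subtype.ext (funext fun i => ?_))
        · exact congrFun hxy (Sum.inl i)
        · exact congrFun hxy (Sum.inr i)
  · push Not at hiso
    have h2 : dq a (v ∘ Sum.inr) ≠ 0 := by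
      intro h2
      rw [hval, h2, mul_zero, add_zero] at hv
      have e1 : v ∘ Sum.inl = 0 := by by_contra hc; exact hiso _ hc hv
      have e2 : v ∘ Sum.inr = 0 := by by_contra hc; exact hiso _ hc h2
      apply hv0; funext i; cases i with
      | inl i => exact congrFun e1 i
      | inr i => exact congrFun e2 i
    have hσ : ∃ σ : (ι → K) →ₗ[K] (ι → K), ∀ x, dq a (σ x) = -b * dq a x := by
      rw [hval] at hv
      by_cases h1 : dq a (v ∘ Sum.inl) = 0
      · refine ⟨0, fun x => ?_⟩
        have : b = 0 := by
          rw [h1, zero_add] at hv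
          exact (mul_eq_zero.1 hv).resolve_right h2
        simp [this, dq_zero]
      · obtain ⟨σ, hσ⟩ := h _ h1
        obtain ⟨τ, hτ⟩ := h _ h2
        refine ⟨(dq a (v ∘ Sum.inr))⁻¹ • (σ ∘ₗ τ), fun x => ?_⟩
        simp only [LinearMap.smul_apply, LinearMap.comp_apply, dq_smul, hσ, hτ]
        rw [eq_neg_of_add_eq_zero_left hv]
        field_simp
    obtain ⟨σ, hσ⟩ := hσ
    refine ⟨LinearMap.range (pairMap σ LinearMap.id), ?_, ?_⟩
    · rintro _ ⟨x, rfl⟩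
      rw [hval]
      change dq a (σ x) + b * dq a x = 0
      rw [hσ]; ring
    · rw [LinearMap.finrank_range_of_inj]
      · simp [two_mul]
      · intro x y hxy
        funext i
        exact congrFun hxy (Sum.inr i)

theorem round_reindex {ι' : Type*} [Fintype ι'] (e : ι' ≃ ι) {a : ι → K} (h : Round a) :
    Round (a ∘ e) := by
  intro v hv
  have hkey : ∀ w : ι' → K, dq (a ∘ e) w = dq a (w ∘ e.symm) := by
    intro w
    rw [← dq_reindex e a (w ∘ e.symm)]
    congr 1; funext i; simp
  rw [hkey] at hv
  obtain ⟨σ, hσ⟩ := h _ hv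
  refine ⟨LinearMap.funLeft K K e ∘ₗ σ ∘ₗ LinearMap.funLeft K K e.symm, fun x => ?_⟩
  simp only [hkey]
  rw [← hσ]
  congr 1
  funext i
  simp [LinearMap.funLeft]

theorem hyp_reindex {ι' : Type*} [Fintype ι'] (e : ι' ≃ ι) {a : ι → K} (h : Hyp a) :
    Hyp (a ∘ e) := by
  have hkey : ∀ w : ι' → K, dq (a ∘ e) w = dq a (w ∘ e.symm) := by
    intro w
    rw [← dq_reindex e a (w ∘ e.symm)]
    congr 1; funext i; simp
  rintro ⟨v, hv0, hv⟩
  obtain ⟨N, hN, hc⟩ := h ⟨v ∘ e.symm, by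
    intro h0; apply hv0; funext i
    simpa using congrFun h0 (e i), by rw [← hkey]; exact hv⟩
  refine ⟨N.map (LinearEquiv.funCongrLeft K K e).toLinearMap, ?_, ?_⟩
  · rintro _ ⟨w, hw, rfl⟩
    rw [hkey]
    have := hN w hw
    convert this using 2
    funext i
    simp [LinearEquiv.funCongrLeft, LinearMap.funLeft]
  · rw [LinearEquiv.finrank_map_eq, Fintype.card_congr e]; exact hc

theorem pc_cons {k : ℕ} (b : Fin (k + 1) → K) :
    ∃ e : (Fin (k + 1) → Bool) ≃ (Fin k → Bool) ⊕ (Fin k → Bool),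
      pc b = dbl (pc (fun i => b i.succ)) (b 0) ∘ e := by
  refine ⟨((Fin.consEquiv (fun _ => Bool)).symm.trans (Equiv.boolProdEquivSum _)), ?_⟩
  funext ε
  simp only [pc, Function.comp, Fin.prod_univ_succ]
  simp only [Equiv.trans_apply, Fin.consEquiv, dbl]
  cases h : ε 0
  · simp [h, Equiv.boolProdEquivSum, pc, Fin.tail]
    rfl
  · simp [h, Equiv.boolProdEquivSum, pc, Fin.tail]
    exact Or.inl rfl

theorem round_hyp_pc : ∀ (k : ℕ) (b : Fin k → K), Round (pc b) ∧ Hyp (pc b) := by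
  intro k
  induction k with
  | zero =>
    intro b
    have hval : ∀ v : (Fin 0 → Bool) → K, dq (pc b) v = v default ^ 2 := by
      intro v; simpa [dq, pc] using congrArg (fun e => v e ^ 2) (Subsingleton.elim _ _)
    constructor
    · intro v _
      refine ⟨v default • LinearMap.id, fun x => ?_⟩
      simp [hval, mul_pow]
    · rintro ⟨v, hv0, hv⟩
      exfalso
      apply hv0
      rw [hval] at hv
      funext i
      rw [Subsingleton.elim i default]
      exact pow_eq_zero_iff (two_ne_zero) |>.1 hv
  | succ k ih =>
    intro b
    obtain ⟨e, he⟩ := pc_cons b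
    obtain ⟨h1, h2⟩ := ih (fun i => b i.succ)
    rw [he]
    exact ⟨round_reindex e (round_dbl h1 _), hyp_reindex e (hyp_dbl h1 h2 _)⟩

end Round

/-! ### Degenerate forms over a discrete valuation ring with a large isotropic subspace -/

section Springer
open Matrix
variable {κ ι : Type*} [Field κ] [Fintype ι] [DecidableEq ι]

theorem cc_eq_zero_iff (f : PowerSeries κ) : PowerSeries.constantCoeff f = 0 ↔ (PowerSeries.X : PowerSeries κ) ∣ f :=
  PowerSeries.X_dvd_iff.symm

/-- Over `κ⟦X⟧`, a form `B` which degenerates modulo `X`, and which has a totally isotropic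
subspace of at least half the dimension, admits a vector `v`, nonzero modulo `X`, such that
`B v ≡ 0` modulo `X` and `v ⬝ B v ≡ 0` modulo `X²`: the lattice of all vectors is then not
maximal.  Otherwise the reduction of the (saturated) isotropic lattice would meet the radical of
`B` modulo `X` trivially, which contradicts a dimension count. -/
theorem springer (B : Matrix ι ι (PowerSeries κ)) (hB : B.IsSymm) {η : Type*} [Fintype η]
    (f : η → ι → PowerSeries κ) (hf : LinearIndependent (PowerSeries κ) f)
    (horth : ∀ i j, f i ⬝ᵥ B *ᵥ f j = 0) (hcard : Fintype.card ι ≤ 2 * Fintype.card η)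
    (hdet : PowerSeries.constantCoeff B.det = 0) :
    ∃ v : ι → PowerSeries κ, (∃ i, PowerSeries.constantCoeff (v i) ≠ 0) ∧
      (∀ i, PowerSeries.constantCoeff ((B *ᵥ v) i) = 0) ∧ PowerSeries.X ^ 2 ∣ v ⬝ᵥ B *ᵥ v := by
  classical
  by_contra hno
  push Not at hno
  let S := Submodule.span (PowerSeries κ) (Set.range f)
  have hSorth : ∀ v ∈ S, ∀ w ∈ S, v ⬝ᵥ B *ᵥ w = 0 := by
    intro v hv w hw
    induction hv, hw using Submodule.span_induction₂ with
    | mem_mem x y hx hy =>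
      obtain ⟨i, rfl⟩ := hx; obtain ⟨j, rfl⟩ := hy; exact horth i j
    | zero_left y hy => simp
    | zero_right x hx => simp
    | add_left x y z _ _ _ h1 h2 => rw [add_dotProduct, h1, h2, add_zero]
    | add_right x y z _ _ _ h1 h2 => rw [mulVec_add, dotProduct_add, h1, h2, add_zero]
    | smul_left r x y _ _ h1 => rw [smul_dotProduct, h1, smul_zero]
    | smul_right r x y _ _ h1 => rw [mulVec_smul, dotProduct_smul, h1, smul_zero]
  -- the saturation of the span of the given vectors
  let M : Submodule (PowerSeries κ) (ι → PowerSeries κ) :=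
    { carrier := {v | ∃ c : PowerSeries κ, c ≠ 0 ∧ c • v ∈ S}
      zero_mem' := ⟨1, one_ne_zero, by simp⟩
      add_mem' := by
        rintro v w ⟨c, hc, hcv⟩ ⟨d, hd, hdw⟩
        refine ⟨c * d, mul_ne_zero hc hd, ?_⟩
        rw [smul_add, mul_comm, mul_smul, mul_comm, mul_smul]
        exact S.add_mem (S.smul_mem _ hcv) (S.smul_mem _ hdw)
      smul_mem' := by
        rintro r v ⟨c, hc, hcv⟩
        exact ⟨c, hc, by rw [smul_comm]; exact S.smul_mem _ hcv⟩ }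
  have hMorth : ∀ v ∈ M, ∀ w ∈ M, v ⬝ᵥ B *ᵥ w = 0 := by
    rintro v ⟨c, hc, hcv⟩ w ⟨d, hd, hdw⟩
    have := hSorth _ hcv _ hdw
    rw [smul_dotProduct, mulVec_smul, dotProduct_smul] at this
    simpa [hc, hd] using this
  have hsat : ∀ v : ι → PowerSeries κ, (PowerSeries.X : PowerSeries κ) • v ∈ M → v ∈ M := by
    rintro v ⟨c, hc, hcv⟩
    exact ⟨c * PowerSeries.X, mul_ne_zero hc PowerSeries.X_ne_zero, by rwa [mul_smul]⟩
  have hrank : Fintype.card η ≤ Module.finrank (PowerSeries κ) M := by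
    have hf' : LinearIndependent (PowerSeries κ)
        (fun i => (⟨f i, 1, one_ne_zero, by
          rw [one_smul]; exact Submodule.subset_span ⟨i, rfl⟩⟩ : M)) :=
      LinearIndependent.of_comp M.subtype hf
    simpa using hf'.fintype_card_le_finrank
  let b := Module.finBasis (PowerSeries κ) M
  set d := Module.finrank (PowerSeries κ) M with hd
  let red : (ι → PowerSeries κ) → (ι → κ) := fun v i => PowerSeries.constantCoeff (v i)
  let Bb : Matrix ι ι κ := B.map PowerSeries.constantCoeff
  have hred : ∀ v, Bb *ᵥ red v = red (B *ᵥ v) := by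
    intro v; funext i
    simp [Bb, red, mulVec, dotProduct, map_sum]
  let mb : Fin d → ι → κ := fun i => red (b i : ι → PowerSeries κ)
  have hlift : ∀ c : Fin d → κ, ∃ m ∈ M, red m = ∑ i, c i • mb i ∧
      m = ∑ i, PowerSeries.C (c i) • (b i : ι → PowerSeries κ) := by
    intro c
    refine ⟨∑ i, PowerSeries.C (c i) • (b i : ι → PowerSeries κ),
      M.sum_mem fun i _ => M.smul_mem _ (b i).2, ?_, rfl⟩
    funext j
    simp [red, mb, Finset.sum_apply, map_sum]
  -- the reductions of a basis, pushed forward by the reduced form, are independent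
  have hind : LinearIndependent κ (fun i => Bb *ᵥ mb i) := by
    rw [Fintype.linearIndependent_iff]
    intro c hc
    obtain ⟨m, hm, hmr, hme⟩ := hlift c
    have hBm : red (B *ᵥ m) = 0 := by
      rw [← hred, hmr, mulVec_sum]
      simpa [mulVec_smul] using hc
    have hm0 : red m = 0 := by
      by_contra hne
      obtain ⟨i, hi⟩ := Function.ne_iff.1 hne
      exact hno m ⟨i, hi⟩ (fun i => congrFun hBm i) (by rw [hMorth m hm m hm]; exact dvd_zero _)
    have : ∃ y : ι → PowerSeries κ, m = (PowerSeries.X : PowerSeries κ) • y := by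
      have : ∀ i, ∃ y, m i = PowerSeries.X * y := fun i => (cc_eq_zero_iff _).1 (congrFun hm0 i)
      choose y hy using this
      exact ⟨y, funext fun i => by simp [hy]⟩
    obtain ⟨y, hy⟩ := this
    have hyM : y ∈ M := hsat y (hy ▸ hm)
    have heq : ∑ i, PowerSeries.C (c i) • b i = (PowerSeries.X : PowerSeries κ) • (⟨y, hyM⟩ : M) := by
      apply Subtype.ext
      simp only [Submodule.coe_sum, Submodule.coe_smul]
      rw [← hme, hy]
    intro i
    have := congrArg (fun z => b.repr z i) heq
    simp only [map_sum, map_smul, Finsupp.coe_finsetSum, Finset.sum_apply, Finsupp.smul_apply,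
      Module.Basis.repr_self, smul_eq_mul, Finsupp.single_apply, mul_ite, mul_one, mul_zero,
      Finset.sum_ite_eq', Finset.mem_univ, if_true] at this
    simpa using congrArg PowerSeries.constantCoeff this
  have hdet' : Bb.det = 0 := by
    have := RingHom.map_det (PowerSeries.constantCoeff (R := κ)) B
    rw [hdet] at this
    exact this.symm
  obtain ⟨v0, hv0, hv0B⟩ := Matrix.exists_mulVec_eq_zero_iff.2 hdet'
  have hBbs : Bb.IsSymm := hB.map _
  -- the orthogonal complement of the reduced lattice contains that lattice and the radical
  let T : (ι → κ) →ₗ[κ] (Fin d → κ) := Matrix.mulVecLin (Matrix.of fun i j => (Bb *ᵥ mb i) j)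
  have hT : ∀ v i, T v i = (Bb *ᵥ mb i) ⬝ᵥ v := fun v i => rfl
  have hTrange : Module.finrank κ (LinearMap.range T) = d := by
    have := LinearIndependent.rank_matrix (M := Matrix.of fun i j => (Bb *ᵥ mb i) j) hind
    simpa [Matrix.rank] using this
  have hker : d + 1 ≤ Module.finrank κ (LinearMap.ker T) := by
    have hmem : ∀ i : Option (Fin d), (i.elim v0 mb) ∈ LinearMap.ker T := by
      intro i
      rw [LinearMap.mem_ker]
      funext j
      rw [hT]
      have hsw : ∀ v, (Bb *ᵥ mb j) ⬝ᵥ v = mb j ⬝ᵥ (Bb *ᵥ v) := by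
        intro v
        rw [dotProduct_mulVec, ← mulVec_transpose, hBbs.eq]
      cases i with
      | none => simp [hsw, hv0B]
      | some i =>
        simp only [Option.elim]
        rw [hsw]
        simp only [mb, hred]
        have := congrArg PowerSeries.constantCoeff (hMorth _ (b j).2 _ (b i).2)
        simpa [red, dotProduct, map_sum] using this
    have hli : LinearIndependent κ (fun i : Option (Fin d) => i.elim v0 mb) := by
      rw [Fintype.linearIndependent_iff]
      intro c hc
      have h1 : ∑ i, c (some i) • (Bb *ᵥ mb i) = 0 := by
        have := congrArg (fun z => Bb *ᵥ z) hc
        simpa [Fintype.sum_option, mulVec_add, mulVec_smul, hv0B, mulVec_sum] using this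
      have h2 := Fintype.linearIndependent_iff.1 hind _ h1
      have h3 : c none = 0 := by
        simpa [Fintype.sum_option, h2, hv0] using hc
      intro i
      cases i with
      | none => exact h3
      | some i => exact h2 i
    have hli' : LinearIndependent κ
        (fun i : Option (Fin d) => (⟨i.elim v0 mb, hmem i⟩ : LinearMap.ker T)) :=
      LinearIndependent.of_comp (LinearMap.ker T).subtype hli
    simpa using hli'.fintype_card_le_finrank
  have := LinearMap.finrank_range_add_finrank_ker T
  rw [hTrange, Module.finrank_fintype_fun_eq_card] at this
  omega

end Springer

/-! ### Minimal lattices over a polynomial ring -/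

section Harder
open Matrix
variable {E ι : Type*} [Field E] [Fintype ι] [DecidableEq ι]

theorem coeff_prod_of_deg_le {α : Type*} (s : Finset α) (f : α → Polynomial E) (d : α → ℕ)
    (h : ∀ i ∈ s, (f i).natDegree ≤ d i) :
    (∏ i ∈ s, f i).natDegree ≤ ∑ i ∈ s, d i ∧
      (∏ i ∈ s, f i).coeff (∑ i ∈ s, d i) = ∏ i ∈ s, (f i).coeff (d i) := by
  classical
  induction s using Finset.induction_on with
  | empty => simp
  | insert a s ha ih =>
    obtain ⟨h1, h2⟩ := ih (fun i hi => h i (Finset.mem_insert_of_mem hi))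
    have h3 := h a (Finset.mem_insert_self a s)
    rw [Finset.prod_insert ha, Finset.sum_insert ha, Finset.prod_insert ha]
    exact ⟨Polynomial.natDegree_mul_le.trans (add_le_add h3 h1), by
      rw [Polynomial.coeff_mul_add_eq_of_natDegree_le h3 h1, h2]⟩

theorem coeff_det_of_deg_le (B : Matrix ι ι (Polynomial E)) (d : ι → ℕ)
    (h : ∀ i j, (B i j).natDegree ≤ d i + d j) :
    B.det.natDegree ≤ 2 * ∑ i, d i ∧
      B.det.coeff (2 * ∑ i, d i) = (Matrix.of fun i j => (B i j).coeff (d i + d j)).det := by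
  have key : ∀ σ : Equiv.Perm ι, ∑ i, (d (σ i) + d i) = 2 * ∑ i, d i := by
    intro σ
    rw [Finset.sum_add_distrib, Equiv.sum_comp σ d, two_mul]
  have hp := fun σ : Equiv.Perm ι =>
    coeff_prod_of_deg_le Finset.univ (fun i => B (σ i) i) (fun i => d (σ i) + d i)
      (fun i _ => h _ _)
  simp only [key] at hp
  constructor
  · rw [Matrix.det_apply]
    apply Polynomial.natDegree_sum_le_of_forall_le
    intro σ _
    exact (Polynomial.natDegree_smul_le _ _).trans (hp σ).1
  · rw [Matrix.det_apply, Matrix.det_apply, Polynomial.finsetSum_coeff]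
    refine Finset.sum_congr rfl fun σ _ => ?_
    rw [Polynomial.coeff_smul, (hp σ).2]
    rfl

/-- The determinant of a scalar matrix with one column replaced. -/
theorem det_smul_one_updateCol (p : Polynomial E) (v : ι → Polynomial E) (i : ι) :
    ((p • (1 : Matrix ι ι (Polynomial E))).updateCol i v).det =
      p ^ (Fintype.card ι - 1) * v i := by
  rw [← Matrix.cramer_apply, Matrix.cramer_smul, Matrix.cramer_one]
  simp

theorem updateCol_form (B : Matrix ι ι (Polynomial E)) (p : Polynomial E)
    (v : ι → Polynomial E) (i : ι) (T : Matrix ι ι (Polynomial E))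
    (hT : T = (p • (1 : Matrix ι ι (Polynomial E))).updateCol i v) (a b : ι) :
    (Tᵀ * B * T) a b =
      (if a = i then v else p • Pi.single a 1) ⬝ᵥ B *ᵥ (if b = i then v else p • Pi.single b 1) := by
  have hcol : ∀ a, (fun l => T l a) = (if a = i then v else p • Pi.single a 1) := by
    intro a; funext l
    rw [hT, Matrix.updateCol_apply]
    split_ifs with h
    · rfl
    · simp [Matrix.one_apply, Pi.single_apply]
  rw [← hcol a, ← hcol b]
  simp [Matrix.mul_apply, dotProduct, mulVec, Finset.mul_sum, Finset.sum_mul]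
  rw [Finset.sum_comm]
  exact Finset.sum_congr rfl fun _ _ => Finset.sum_congr rfl fun _ _ => by ring

/-- A class of forms over `E[u]`, stable under change of lattice, which is anisotropic with even
degrees at infinity, and in which no form with nonconstant discriminant is minimal at all finite
places, contains a form with constant coefficients. -/
theorem exists_constant_form (F : Set (Matrix ι ι (Polynomial E))) (hne : F.Nonempty)
    (hQ : ∀ B ∈ F, ∀ v : ι → Polynomial E, v ≠ 0 →
      v ⬝ᵥ B *ᵥ v ≠ 0 ∧ Even (v ⬝ᵥ B *ᵥ v).natDegree)
    (hCS : ∀ B ∈ F, ∀ v w : ι → Polynomial E,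
      2 * (v ⬝ᵥ B *ᵥ w).natDegree ≤ (v ⬝ᵥ B *ᵥ v).natDegree + (w ⬝ᵥ B *ᵥ w).natDegree)
    (hop : ∀ B ∈ F, ∀ (p : Polynomial E) (T B' : Matrix ι ι (Polynomial E)), p ≠ 0 → T.det ≠ 0 →
      p ^ 2 • B' = Tᵀ * B * T → B' ∈ F)
    (hloc : ∀ B ∈ F, ∀ p : Polynomial E, Irreducible p → p ∣ B.det →
      ∃ v : ι → Polynomial E, v ≠ 0 ∧ (∀ i, (v i).degree < p.degree) ∧
        (∀ i, p ∣ (B *ᵥ v) i) ∧ p ^ 2 ∣ v ⬝ᵥ B *ᵥ v) (hsymm : ∀ B ∈ F, B.IsSymm) :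
    ∃ B0 : Matrix ι ι E, B0.map Polynomial.C ∈ F := by
  classical
  let meas : Matrix ι ι (Polynomial E) → ℕ ×ₗ ℕ := fun B =>
    toLex (B.det.natDegree, ∑ i, (B i i).natDegree)
  obtain ⟨_, ⟨B, hBF, rfl⟩, hmin⟩ := (wellFounded_lt (α := ℕ ×ₗ ℕ)).has_min (Set.image meas F)
    (hne.image _)
  have hmin' : ∀ B' ∈ F, ¬ meas B' < meas B := fun B' h => hmin _ ⟨B', h, rfl⟩
  have hentry : ∀ i j, (Pi.single i 1 : ι → Polynomial E) ⬝ᵥ B *ᵥ Pi.single j 1 = B i j := by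
    intro i j; simp
  have hsing : ∀ i, (Pi.single i 1 : ι → Polynomial E) ≠ 0 := fun i h => by
    simpa using congrFun h i
  have heven : ∀ i, ∃ m, (B i i).natDegree = 2 * m := by
    intro i
    have := (hQ B hBF (Pi.single i 1) (hsing i)).2
    rw [hentry] at this
    obtain ⟨m, hm⟩ := this
    exact ⟨m, by omega⟩
  choose d hd using heven
  have hdeg : ∀ i j, (B i j).natDegree ≤ d i + d j := by
    intro i j
    have := hCS B hBF (Pi.single i 1) (Pi.single j 1)
    simp only [hentry, hd] at this
    omega
  obtain ⟨hdet1, hdet2⟩ := coeff_det_of_deg_le B d hdeg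
  have hl : (Matrix.of fun i j => (B i j).coeff (d i + d j)).det ≠ 0 := by
    intro h0
    obtain ⟨c, hc0, hc⟩ := Matrix.exists_mulVec_eq_zero_iff.2 h0
    obtain ⟨i, hi, himax⟩ := Finset.exists_max_image (Finset.univ.filter fun i => c i ≠ 0) d (by
      obtain ⟨i, hi⟩ := Function.ne_iff.1 hc0
      exact ⟨i, by simpa using hi⟩)
    simp only [Finset.mem_filter, Finset.mem_univ, true_and] at hi himax
    let t : ι → Polynomial E := fun j => Polynomial.C (c j / c i) * Polynomial.X ^ (d i - d j)
    have hti : t i = 1 := by simp [t, hi]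
    have ht0 : t ≠ 0 := fun h => by simpa [hti] using congrFun h i
    let T := (((1 : Polynomial E) • (1 : Matrix ι ι (Polynomial E)))).updateCol i t
    have hTdet : T.det = 1 := by
      rw [show T.det = _ from det_smul_one_updateCol 1 t i]; simp [hti]
    have hform := updateCol_form B 1 t i T rfl
    have hB'F : Tᵀ * B * T ∈ F := hop B hBF 1 T _ one_ne_zero (by simp [hTdet]) (by simp)
    apply hmin' _ hB'F
    have hval : t ⬝ᵥ B *ᵥ t ≠ 0 := (hQ B hBF t ht0).1
    have hterm : ∀ a b, (t a * (B a b * t b)).natDegree ≤ 2 * d i ∧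
        (t a * (B a b * t b)).coeff (2 * d i) =
          (c a / c i) * ((B a b).coeff (d a + d b) * (c b / c i)) := by
      intro a b
      by_cases ha : c a = 0
      · simp [t, ha]
      by_cases hb : c b = 0
      · simp [t, hb]
      have h1 := himax a ha
      have h2 := himax b hb
      have e : t a * (B a b * t b) = Polynomial.C (c a / c i * (c b / c i)) *
          (B a b * Polynomial.X ^ (2 * d i - (d a + d b))) := by
        have : 2 * d i - (d a + d b) = (d i - d a) + (d i - d b) := by omega
        rw [this]
        simp only [t, Polynomial.C_mul, pow_add]; ring
      rw [e]
      constructor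
      · refine (Polynomial.natDegree_C_mul_le _ _).trans ?_
        refine Polynomial.natDegree_mul_le.trans ?_
        rw [Polynomial.natDegree_X_pow]
        have := hdeg a b; omega
      · rw [Polynomial.coeff_C_mul, Polynomial.coeff_mul_X_pow']
        rw [if_pos (by omega), show 2 * d i - (2 * d i - (d a + d b)) = d a + d b by omega]
        ring
    have hsum : t ⬝ᵥ B *ᵥ t = ∑ a, ∑ b, t a * (B a b * t b) := by
      simp [dotProduct, mulVec, Finset.mul_sum]
    have hle : (t ⬝ᵥ B *ᵥ t).natDegree ≤ 2 * d i := by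
      rw [hsum]
      refine Polynomial.natDegree_sum_le_of_forall_le _ _ fun a _ => ?_
      exact Polynomial.natDegree_sum_le_of_forall_le _ _ fun b _ => (hterm a b).1
    have hco : (t ⬝ᵥ B *ᵥ t).coeff (2 * d i) = 0 := by
      rw [hsum]
      simp only [Polynomial.finsetSum_coeff, hterm]
      refine Finset.sum_eq_zero fun a _ => ?_
      rw [← Finset.mul_sum]
      have := congrFun hc a
      simp only [mulVec, dotProduct, Matrix.of_apply, Pi.zero_apply] at this
      have h' : ∑ b, (B a b).coeff (d a + d b) * (c b / c i) = 0 := by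
        simp only [div_eq_mul_inv, ← mul_assoc]
        rw [← Finset.sum_mul, this, zero_mul]
      rw [h', mul_zero]
    have hlt : (t ⬝ᵥ B *ᵥ t).natDegree < 2 * d i := by
      refine lt_of_le_of_ne hle fun h => hval ?_
      rw [← Polynomial.leadingCoeff_eq_zero, Polynomial.leadingCoeff, h, hco]
    rw [Prod.Lex.toLex_lt_toLex]
    right
    refine ⟨by simp [Matrix.det_mul, hTdet], ?_⟩
    refine Finset.sum_lt_sum (fun a _ => ?_) ⟨i, Finset.mem_univ _, ?_⟩
    · rw [hform]
      by_cases ha : a = i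
      · subst ha; simp only [if_true]; rw [hd]; exact hle
      · simp only [ha, if_false, one_smul, hentry]; exact le_rfl
    · rw [hform]; simp only [if_true]; rw [hd]; exact hlt
  have hdetdeg : B.det.natDegree = 2 * ∑ i, d i := by
    refine le_antisymm hdet1 (Polynomial.le_natDegree_of_ne_zero ?_)
    rw [hdet2]; exact hl
  have hdetne : B.det ≠ 0 := by
    intro h; rw [h] at hdet2; exact hl (by simpa using hdet2.symm)
  have hzero : ∑ i, d i = 0 := by
    by_contra hpos
    obtain ⟨p, hp, hpd⟩ := Polynomial.exists_irreducible_of_natDegree_pos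
      (f := B.det) (by omega)
    obtain ⟨v, hv0, hvdeg, hvB, hvQ⟩ := hloc B hBF p hp hpd
    obtain ⟨i, hi⟩ := Function.ne_iff.1 hv0
    have hp0 : p ≠ 0 := hp.ne_zero
    let T := (p • (1 : Matrix ι ι (Polynomial E))).updateCol i v
    have hTdet : T.det = p ^ (Fintype.card ι - 1) * v i := det_smul_one_updateCol p v i
    have hform := updateCol_form B p v i T rfl
    have hdiv : ∀ a b, p ^ 2 ∣ (Tᵀ * B * T) a b := by
      intro a b
      rw [hform]
      split_ifs with ha hb hb
      · exact hvQ
      · rw [mulVec_smul, dotProduct_smul, dotProduct_mulVec, ← mulVec_transpose,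
          (hsymm B hBF).eq, smul_eq_mul, pow_two]
        refine mul_dvd_mul_left p ?_
        simpa using hvB b
      · rw [smul_dotProduct, smul_eq_mul, pow_two]
        refine mul_dvd_mul_left p ?_
        simpa using hvB a
      · rw [smul_dotProduct, mulVec_smul, dotProduct_smul, smul_eq_mul, smul_eq_mul, ← mul_assoc,
          pow_two]
        exact dvd_mul_right _ _
    choose B' hB' using hdiv
    have hB'eq : p ^ 2 • (Matrix.of B') = Tᵀ * B * T := by
      ext1 a b
      rw [hB' a b]; rfl
    have hB'F : Matrix.of B' ∈ F :=
      hop B hBF p T _ hp0 (by rw [hTdet]; exact mul_ne_zero (pow_ne_zero _ hp0) hi) hB'eq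
    apply hmin' _ hB'F
    rw [Prod.Lex.toLex_lt_toLex]
    left
    have hN : Fintype.card ι = (Fintype.card ι - 1) + 1 :=
      (Nat.succ_pred_eq_of_pos (Fintype.card_pos_iff.2 ⟨i⟩)).symm
    have hdd := congrArg Matrix.det hB'eq
    rw [Matrix.det_smul, Matrix.det_mul, Matrix.det_mul, Matrix.det_transpose, hTdet] at hdd
    have hdd' : p ^ 2 * (Matrix.of B').det = v i ^ 2 * B.det := by
      have hpp : (p ^ (Fintype.card ι - 1)) ^ 2 ≠ 0 := pow_ne_zero _ (pow_ne_zero _ hp0)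
      apply mul_left_cancel₀ hpp
      rw [hN] at hdd
      simp only [Nat.add_sub_cancel] at hdd
      rw [show (p ^ 2) ^ (Fintype.card ι - 1 + 1) = (p ^ (Fintype.card ι - 1)) ^ 2 * p ^ 2 by
        ring] at hdd
      rw [← mul_assoc, hdd]; ring
    have hB'ne : (Matrix.of B').det ≠ 0 := by
      intro h; rw [h, mul_zero] at hdd'
      exact mul_ne_zero (pow_ne_zero _ hi) hdetne hdd'.symm
    have hdeg2 := congrArg Polynomial.natDegree hdd'
    rw [Polynomial.natDegree_mul (pow_ne_zero _ hp0) hB'ne,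
      Polynomial.natDegree_mul (pow_ne_zero _ hi) hdetne, Polynomial.natDegree_pow,
      Polynomial.natDegree_pow] at hdeg2
    have := Polynomial.natDegree_lt_natDegree hi (hvdeg i)
    change (Matrix.of B').det.natDegree < B.det.natDegree
    omega
  have hd0 : ∀ i, d i = 0 := fun i => Finset.sum_eq_zero_iff.1 hzero i (Finset.mem_univ i)
  refine ⟨Matrix.of fun i j => (B i j).coeff 0, ?_⟩
  convert hBF using 1
  ext1 i j
  have := hdeg i j
  rw [hd0, hd0] at this
  simp only [Matrix.map_apply, Matrix.of_apply]
  exact (Polynomial.eq_C_of_natDegree_le_zero this).symm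

end Harder

/-! ### Completion of a polynomial ring at a point -/

section Completion
open Matrix
variable {E κ : Type*} [Field E] [Field κ]

/-- Expansion of a polynomial over `E` as a power series at a point `θ` with coordinates in an
extension `κ` of `E`. -/
def expAt (i : E →+* κ) (θ : κ) : Polynomial E →+* PowerSeries κ :=
  Polynomial.coeToPowerSeries.ringHom.comp
    ((Polynomial.taylorAlgHom θ).toRingHom.comp (Polynomial.mapRingHom i))

theorem expAt_apply (i : E →+* κ) (θ : κ) (f : Polynomial E) :
    expAt i θ f = ((Polynomial.taylor θ (f.map i) : Polynomial κ) : PowerSeries κ) := rfl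

theorem expAt_injective (i : E →+* κ) (θ : κ) : Function.Injective (expAt i θ) := by
  intro f g h
  rw [expAt_apply, expAt_apply, Polynomial.coe_inj] at h
  exact Polynomial.map_injective i i.injective (Polynomial.taylor_injective θ h)

theorem constantCoeff_expAt (i : E →+* κ) (θ : κ) (f : Polynomial E) :
    PowerSeries.constantCoeff (expAt i θ f) = f.eval₂ i θ := by
  rw [expAt_apply, Polynomial.constantCoeff_coe, Polynomial.taylor_coeff_zero,
    Polynomial.eval_map]

theorem coeff_one_expAt (i : E →+* κ) (θ : κ) (f : Polynomial E) :
    PowerSeries.coeff 1 (expAt i θ f) = f.derivative.eval₂ i θ := by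
  rw [expAt_apply, Polynomial.coeff_coe, Polynomial.taylor_coeff_one, Polynomial.derivative_map,
    Polynomial.eval_map]

theorem powerSeries_X_sq_dvd_iff (f : PowerSeries κ) :
    PowerSeries.X ^ 2 ∣ f ↔ PowerSeries.constantCoeff f = 0 ∧ PowerSeries.coeff 1 f = 0 := by
  rw [PowerSeries.X_pow_dvd_iff]
  constructor
  · intro h
    exact ⟨by simpa using h 0 (by norm_num), h 1 (by norm_num)⟩
  · rintro ⟨h0, h1⟩ m hm
    interval_cases m
    · simpa using h0
    · exact h1

/-- A power series with constant term a nonzero square is a square. -/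
theorem exists_sqrt_powerSeries [CharZero κ] (f : PowerSeries κ) (s : κ) (hs : s ≠ 0)
    (hf : PowerSeries.constantCoeff f = s ^ 2) :
    ∃ g : PowerSeries κ, g ^ 2 = f ∧ PowerSeries.constantCoeff g = s := by
  have : HenselianRing (PowerSeries κ) (Ideal.span {PowerSeries.X}) := inferInstance
  have hmem : ∀ x : PowerSeries κ, x ∈ Ideal.span {(PowerSeries.X : PowerSeries κ)} ↔
      PowerSeries.constantCoeff x = 0 := by
    intro x; rw [Ideal.mem_span_singleton, PowerSeries.X_dvd_iff]
  obtain ⟨g, hg, hgs⟩ := HenselianRing.is_henselian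
    (I := Ideal.span {(PowerSeries.X : PowerSeries κ)})
    (Polynomial.X ^ 2 - Polynomial.C f) (Polynomial.monic_X_pow_sub_C f two_ne_zero)
    (PowerSeries.C s) (by rw [hmem]; simp [hf]) (by
      apply IsUnit.map
      rw [PowerSeries.isUnit_iff_constantCoeff]
      simp [hs])
  refine ⟨g, ?_, ?_⟩
  · have : g ^ 2 - f = 0 := by simpa [Polynomial.IsRoot] using hg
    exact sub_eq_zero.1 this
  · rw [hmem] at hgs
    have : PowerSeries.constantCoeff g - s = 0 := by simpa using hgs
    exact sub_eq_zero.1 this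

theorem eval₂_root_eq_zero_iff (p : Polynomial E) (f : Polynomial E) :
    f.eval₂ (AdjoinRoot.of p) (AdjoinRoot.root p) = 0 ↔ p ∣ f := by
  rw [← AdjoinRoot.mk_eq_zero, ← AdjoinRoot.aeval_eq]
  rfl

theorem sq_dvd_of_expAt [CharZero E] (p : Polynomial E) [hp : Fact (Irreducible p)]
    (f : Polynomial E)
    (h : PowerSeries.X ^ 2 ∣ expAt (AdjoinRoot.of p) (AdjoinRoot.root p) f) : p ^ 2 ∣ f := by
  rw [powerSeries_X_sq_dvd_iff, constantCoeff_expAt, coeff_one_expAt, eval₂_root_eq_zero_iff,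
    eval₂_root_eq_zero_iff] at h
  obtain ⟨⟨g, rfl⟩, h2⟩ := h
  rw [Polynomial.derivative_mul] at h2
  have h3 : p ∣ p.derivative * g := by
    have := dvd_sub h2 (dvd_mul_right p g.derivative)
    simpa using this
  have hsep : p.Separable := hp.out.separable
  have : p ∣ g := hsep.dvd_of_dvd_mul_left h3
  rw [pow_two]
  exact mul_dvd_mul_left p this

/-- A non-maximality witness in the completion at an irreducible polynomial `p` descends to
polynomials. -/
theorem local_descend [CharZero E] {ι : Type*} [Fintype ι] (B : Matrix ι ι (Polynomial E))
    (hB : B.IsSymm) (p : Polynomial E) [hp : Fact (Irreducible p)]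
    (v : ι → PowerSeries (AdjoinRoot p)) (hv : ∃ i, PowerSeries.constantCoeff (v i) ≠ 0)
    (hBv : ∀ i, PowerSeries.constantCoeff
      (((B.map (expAt (AdjoinRoot.of p) (AdjoinRoot.root p))) *ᵥ v) i) = 0)
    (hQ : PowerSeries.X ^ 2 ∣ v ⬝ᵥ (B.map (expAt (AdjoinRoot.of p) (AdjoinRoot.root p))) *ᵥ v) :
    ∃ w : ι → Polynomial E, w ≠ 0 ∧ (∀ i, (w i).degree < p.degree) ∧
        (∀ i, p ∣ (B *ᵥ w) i) ∧ p ^ 2 ∣ w ⬝ᵥ B *ᵥ w := by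
  set c := expAt (AdjoinRoot.of p) (AdjoinRoot.root p) with hc
  have hlift : ∀ i, ∃ w : Polynomial E, w.degree < p.degree ∧
      PowerSeries.constantCoeff (c w) = PowerSeries.constantCoeff (v i) := by
    intro i
    obtain ⟨f, hf⟩ := AdjoinRoot.mk_surjective (PowerSeries.constantCoeff (v i))
    refine ⟨f % p, EuclideanDomain.mod_lt f hp.out.ne_zero, ?_⟩
    rw [← hf, hc, constantCoeff_expAt]
    have h1 : AdjoinRoot.mk p (f % p) = AdjoinRoot.mk p f := by
      rw [AdjoinRoot.mk_eq_mk]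
      exact (EuclideanDomain.mod_eq_sub_mul_div f p) ▸ ⟨-(f / p), by ring⟩
    rw [← h1, ← AdjoinRoot.aeval_eq]; rfl
  choose w hwdeg hw using hlift
  have hdiff : ∀ i, ∃ y, v i = c (w i) + PowerSeries.X * y := by
    intro i
    have : (PowerSeries.X : PowerSeries (AdjoinRoot p)) ∣ v i - c (w i) := by
      rw [PowerSeries.X_dvd_iff, map_sub, hw, sub_self]
    obtain ⟨y, hy⟩ := this
    exact ⟨y, by rw [← hy]; ring⟩
  choose y hy using hdiff
  have hv' : v = (fun i => c (w i)) + (PowerSeries.X : PowerSeries (AdjoinRoot p)) • y := by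
    funext i; simp [hy i]
  have hmul : ∀ i, ((B.map c) *ᵥ (fun i => c (w i))) i = c ((B *ᵥ w) i) := by
    intro i; simp [mulVec, dotProduct, map_sum]
  have hBw : ∀ i, PowerSeries.constantCoeff (c ((B *ᵥ w) i)) = 0 := by
    intro i
    have := hBv i
    rw [hv', mulVec_add, mulVec_smul, Pi.add_apply, hmul, map_add] at this
    simpa using this
  have hBs : (B.map c).IsSymm := hB.map _
  refine ⟨w, ?_, hwdeg, fun i => ?_, ?_⟩
  · rintro rfl
    obtain ⟨i, hi⟩ := hv
    apply hi
    rw [← hw]; simp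
  · rw [← eval₂_root_eq_zero_iff, ← constantCoeff_expAt]; exact hBw i
  · apply sq_dvd_of_expAt
    have hcast : c (w ⬝ᵥ B *ᵥ w) = (fun i => c (w i)) ⬝ᵥ (B.map c) *ᵥ (fun i => c (w i)) := by
      simp only [dotProduct, map_sum, map_mul, hmul]
    rw [← hc, hcast]
    set w' : ι → PowerSeries (AdjoinRoot p) := fun i => c (w i)
    have hexp : v ⬝ᵥ (B.map c) *ᵥ v = w' ⬝ᵥ (B.map c) *ᵥ w' +
        (2 * PowerSeries.X * (y ⬝ᵥ (B.map c) *ᵥ w') +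
          PowerSeries.X ^ 2 * (y ⬝ᵥ (B.map c) *ᵥ y)) := by
      have hsw : w' ⬝ᵥ (B.map c) *ᵥ y = y ⬝ᵥ (B.map c) *ᵥ w' := by
        rw [dotProduct_mulVec, ← mulVec_transpose, hBs.eq, dotProduct_comm]
      rw [hv']
      simp only [mulVec_add, mulVec_smul, add_dotProduct, dotProduct_add, smul_dotProduct,
        dotProduct_smul, smul_eq_mul, hsw]
      ring
    have hX : (PowerSeries.X : PowerSeries (AdjoinRoot p)) ∣ y ⬝ᵥ (B.map c) *ᵥ w' := by
      refine Finset.dvd_sum fun i _ => Dvd.dvd.mul_left ?_ _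
      rw [PowerSeries.X_dvd_iff, hmul]; exact hBw i
    have h2 : PowerSeries.X ^ 2 ∣ 2 * PowerSeries.X * (y ⬝ᵥ (B.map c) *ᵥ w') +
          PowerSeries.X ^ 2 * (y ⬝ᵥ (B.map c) *ᵥ y) := by
      refine dvd_add ?_ (dvd_mul_right _ _)
      rw [pow_two, mul_comm 2, mul_assoc]
      exact mul_dvd_mul_left _ (hX.mul_left 2)
    rw [hexp] at hQ
    exact (dvd_add_left h2).1 hQ

end Completion

/-! ### The degenerate quadric and the Pfister form it is compared with -/

section Coeffs
variable {R S : Type*} [CommRing R] [CommRing S]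

/-- The slots of the Pfister form attached to homogeneous coordinates `x`. -/
def slots {k : ℕ} (x : Fin (k + 1) → R) : Fin k → R := fun i => x i.succ * x 0

/-- The coefficients of the Pfister form `⊗ ⟨1, x_i x_0⟩`. -/
def pfc {k : ℕ} (x : Fin (k + 1) → R) : (Fin k → Bool) → R := pc (slots x)

/-- The singleton `{j}`, as an index of a Pfister form. -/
def sgl {k : ℕ} (j : Fin k) : Fin k → Bool := fun i => decide (i = j)

/-- Number of elements of an index of a Pfister form. -/
def wt {k : ℕ} (ε : Fin k → Bool) : ℕ := ∑ i, if ε i then 1 else 0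

/-- The homogeneous polynomial `9 (∑ x_j)^{2k+4} - x_0 x_1 (∏ x_j)²` (in the variables
`x_0, …, x_k`): a square at the points where some, but not all, coordinates vanish and
`∑ x_j ≠ 0`, yet globally not a square. -/
def FF {k : ℕ} (x : Fin (k + 2 + 1) → R) : R :=
  9 * (∑ j, x j) ^ (2 * (k + 2) + 4) - x 0 * x 1 * (∏ j, x j) ^ 2

/-- The coefficients of the degenerate quadric. -/
def PP {k r : ℕ} (e : Fin (r + 3) → (Fin (k + 2) → Bool)) (x : Fin (k + 2 + 1) → R)
    (i : Fin (r + 3)) : R :=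
  if i = 0 then x 0 * FF x else if i = 1 then x 1 else if i = 2 then x 2 else x 0 * pfc x (e i)

/-- The coefficient `PP e x i` is homogeneous in `x` of degree `2 * ee e i + 1`. -/
def ee {k r : ℕ} (e : Fin (r + 3) → (Fin (k + 2) → Bool)) (i : Fin (r + 3)) : ℕ :=
  if i = 0 then k + 2 + 2 else if i = 1 then 0 else if i = 2 then 0 else wt (e i)

/-- A numbering of some of the indices of the Pfister form, starting with
`∅`, `{0}`, `{1}`. -/
structure PfNumbering {k r : ℕ} (e : Fin (r + 3) → (Fin (k + 2) → Bool)) : Prop where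
  inj : Function.Injective e
  zero : e 0 = fun _ => false
  one : e 1 = sgl 0
  two : e 2 = sgl 1

theorem pc_empty {k : ℕ} (b : Fin k → R) : pc b (fun _ => false) = 1 := by simp [pc]

theorem pc_sgl {k : ℕ} (b : Fin k → R) (j : Fin k) : pc b (sgl j) = b j := by
  simp [pc, sgl]

theorem pc_map {k : ℕ} (f : R →+* S) (b : Fin k → R) (ε : Fin k → Bool) :
    f (pc b ε) = pc (fun i => f (b i)) ε := by
  simp only [pc, map_prod]
  refine Finset.prod_congr rfl fun i _ => ?_
  split_ifs <;> simp

theorem pfc_map {k : ℕ} (f : R →+* S) (x : Fin (k + 1) → R) (ε : Fin k → Bool) :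
    f (pfc x ε) = pfc (fun j => f (x j)) ε := by
  simp only [pfc, pc_map, slots, map_mul]
  rfl

theorem FF_map {k : ℕ} (f : R →+* S) (x : Fin (k + 2 + 1) → R) :
    f (FF x) = FF (fun j => f (x j)) := by
  simp [FF, map_sum, map_prod, map_ofNat]

theorem PP_map {k r : ℕ} (f : R →+* S) (e : Fin (r + 3) → (Fin (k + 2) → Bool))
    (x : Fin (k + 2 + 1) → R) (i : Fin (r + 3)) :
    f (PP e x i) = PP e (fun j => f (x j)) i := by
  simp only [PP]
  split_ifs <;> simp [FF_map, pfc_map]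

theorem pfc_smul {k : ℕ} (c : R) (x : Fin (k + 1) → R) (ε : Fin k → Bool) :
    pfc (fun j => c * x j) ε = (c ^ wt ε) ^ 2 * pfc x ε := by
  simp only [pfc, pc, wt, slots, ← Finset.prod_pow_eq_pow_sum, ← Finset.prod_pow,
    ← Finset.prod_mul_distrib]
  refine Finset.prod_congr rfl fun i _ => ?_
  split_ifs <;> ring

theorem FF_smul {k : ℕ} (c : R) (x : Fin (k + 2 + 1) → R) :
    FF (fun j => c * x j) = (c ^ (k + 2 + 2)) ^ 2 * FF x := by
  simp only [FF, ← Finset.mul_sum, Finset.prod_mul_distrib, Finset.prod_const, Finset.card_univ,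
    Fintype.card_fin]
  ring

theorem PP_smul {k r : ℕ} (e : Fin (r + 3) → (Fin (k + 2) → Bool)) (c : R)
    (x : Fin (k + 2 + 1) → R) (i : Fin (r + 3)) :
    PP e (fun j => c * x j) i = c * (c ^ ee e i) ^ 2 * PP e x i := by
  simp only [PP, ee]
  split_ifs
  · rw [FF_smul]; ring
  · ring
  · ring
  · rw [pfc_smul]; ring

theorem dq_extend {ι ι' : Type*} [Fintype ι] [Fintype ι'] (f : ι → ι')
    (hf : Function.Injective f) (a : ι' → R) (u : ι → R) :
    dq a (Function.extend f u 0) = dq (a ∘ f) u := by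
  classical
  simp only [dq]
  rw [← Finset.sum_subset (Finset.subset_univ (Finset.univ.image f))]
  · rw [Finset.sum_image (fun x _ y _ h => hf h)]
    exact Finset.sum_congr rfl fun i _ => by rw [hf.extend_apply]; rfl
  · intro x _ hx
    rw [Function.extend_apply']
    · simp
    · rintro ⟨i, rfl⟩; exact hx (by simp)

theorem extend_ne_zero {ι ι' : Type*} (f : ι → ι')
    (hf : Function.Injective f) (u : ι → R) (hu : u ≠ 0) :
    Function.extend f u 0 ≠ 0 := by
  intro h
  apply hu
  funext i
  rw [← hf.extend_apply u 0 i, h]; rfl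

/-- If `FF x` is a square, a zero of the degenerate quadric gives a zero of the Pfister form. -/
theorem pfister_zero_of_sqrt [IsDomain R] {k r : ℕ} {e : Fin (r + 3) → (Fin (k + 2) → Bool)}
    (he : PfNumbering e) (x : Fin (k + 2 + 1) → R) (hx : x 0 ≠ 0) (s : R) (hs : s ^ 2 = FF x)
    (hs0 : s ≠ 0) (W : Fin (r + 3) → R) (hW : W ≠ 0) (hz : dq (PP e x) W = 0) :
    ∃ v, v ≠ 0 ∧ dq (pfc x) v = 0 := by
  let u : Fin (r + 3) → R := fun i =>
    (if i = 0 then x 0 * s else if i = 1 then 1 else if i = 2 then 1 else x 0) * W i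
  refine ⟨Function.extend e u 0, extend_ne_zero e he.inj u ?_, ?_⟩
  · obtain ⟨i, hi⟩ := Function.ne_iff.1 hW
    intro h
    have := congrFun h i
    refine mul_ne_zero ?_ hi this
    split_ifs
    · exact mul_ne_zero hx hs0
    · exact one_ne_zero
    · exact one_ne_zero
    · exact hx
  · rw [dq_extend e he.inj]
    have : dq (pfc x ∘ e) u = x 0 * dq (PP e x) W := by
      simp only [dq, Finset.mul_sum]
      refine Finset.sum_congr rfl fun i _ => ?_
      simp only [Function.comp, u, PP]
      split_ifs with h0 h1 h2
      · rw [h0, he.zero, pfc, pc_empty, ← hs]; ring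
      · rw [h1, he.one, pfc, pc_sgl, slots]
        rw [show (Fin.succ (0 : Fin (k + 2))) = 1 from rfl]; ring
      · rw [h2, he.two, pfc, pc_sgl, slots]
        rw [show (Fin.succ (1 : Fin (k + 2))) = 2 from rfl]; ring
      · ring
    rw [this, hz, mul_zero]

/-- A zero of the form `∑ x_j Y_j²` gives a zero of the Pfister form. -/
theorem pfister_zero_of_linear [IsDomain R] {k : ℕ} (x : Fin (k + 1) → R) (hx : x 0 ≠ 0)
    (Y : Fin (k + 1) → R) (hY : Y ≠ 0) (hz : dq x Y = 0) : ∃ v, v ≠ 0 ∧ dq (pfc x) v = 0 := by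
  let f : Fin (k + 1) → (Fin k → Bool) := Fin.cases (fun _ => false) sgl
  have hf : Function.Injective f := by
    intro i j
    refine Fin.cases ?_ (fun i => ?_) i <;> refine Fin.cases ?_ (fun j => ?_) j
    · simp
    · intro h
      have := congrFun h j
      simp [f, sgl] at this
    · intro h
      have := congrFun h i
      simp [f, sgl] at this
    · intro h
      have := congrFun h i
      simp only [f, sgl, Fin.cases_succ, decide_true] at this
      rw [of_decide_eq_true this.symm]
  let u : Fin (k + 1) → R := Fin.cases (x 0 * Y 0) (fun j => Y j.succ)
  refine ⟨Function.extend f u 0, extend_ne_zero f hf u ?_, ?_⟩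
  · obtain ⟨i, hi⟩ := Function.ne_iff.1 hY
    intro h
    have := congrFun h i
    revert hi this
    refine Fin.cases ?_ (fun i => ?_) i
    · intro hi h
      exact mul_ne_zero hx hi h
    · intro hi h
      exact hi h
  · rw [dq_extend f hf]
    have : dq (pfc x ∘ f) u = x 0 * dq x Y := by
      simp only [dq, Fin.sum_univ_succ, Function.comp, f, u, Fin.cases_zero, Fin.cases_succ, pfc,
        pc_empty, pc_sgl, slots, mul_add, Finset.mul_sum]
      congr 1
      · ring
      · exact Finset.sum_congr rfl fun i _ => by ring
    rw [this, hz, mul_zero]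

/-- At a point where some, but not all, of the coordinates vanish, a zero of the degenerate
quadric gives a zero of the Pfister form. -/
theorem bad_point {κ : Type*} [Field κ] [CharZero κ] {k r : ℕ}
    {e : Fin (r + 3) → (Fin (k + 2) → Bool)} (he : PfNumbering e)
    (x : Fin (k + 2 + 1) → PowerSeries κ) (hx : ∀ j, x j ≠ 0)
    (hbad : ∃ j, PowerSeries.constantCoeff (x j) = 0)
    (hprim : ∃ j, PowerSeries.constantCoeff (x j) ≠ 0)
    (W : Fin (r + 3) → PowerSeries κ) (hW : W ≠ 0) (hz : dq (PP e x) W = 0) :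
    ∃ v, v ≠ 0 ∧ dq (pfc x) v = 0 := by
  by_cases hG : ∑ j, PowerSeries.constantCoeff (x j) = 0
  · obtain ⟨j0, hj0⟩ := hprim
    have hunit : IsUnit (x j0) := by
      rw [PowerSeries.isUnit_iff_constantCoeff]; exact isUnit_iff_ne_zero.2 hj0
    obtain ⟨y, hy⟩ := hunit.exists_left_inv
    have hy0 : PowerSeries.constantCoeff y * PowerSeries.constantCoeff (x j0) = 1 := by
      rw [← map_mul, hy, map_one]
    obtain ⟨Y, hY2, hYc⟩ := exists_sqrt_powerSeries
      (-(y * ∑ j ∈ Finset.univ.erase j0, x j)) 1 one_ne_zero (by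
        rw [← Finset.add_sum_erase _ _ (Finset.mem_univ j0)] at hG
        rw [map_neg, map_mul, map_sum, eq_neg_of_add_eq_zero_right hG, mul_neg, hy0]
        norm_num)
    refine pfister_zero_of_linear x (hx 0) (fun j => if j = j0 then Y else 1) ?_ ?_
    · intro h
      have := congrFun h j0
      simp only [if_true] at this
      rw [this] at hYc; simp at hYc
    · rw [dq, ← Finset.add_sum_erase _ _ (Finset.mem_univ j0)]
      simp only [if_true, hY2]
      have hsum : ∑ j ∈ Finset.univ.erase j0, x j * (if j = j0 then Y else 1) ^ 2 =
          ∑ j ∈ Finset.univ.erase j0, x j :=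
        Finset.sum_congr rfl fun j hj => by rw [if_neg (Finset.ne_of_mem_erase hj)]; ring
      rw [hsum]
      linear_combination (- ∑ j ∈ Finset.univ.erase j0, x j) * hy
  · obtain ⟨j, hj⟩ := hbad
    have hc : PowerSeries.constantCoeff (FF x) =
        (3 * (∑ j, PowerSeries.constantCoeff (x j)) ^ (k + 2 + 2)) ^ 2 := by
      rw [FF_map, FF, Finset.prod_eq_zero (Finset.mem_univ j) hj]
      ring
    obtain ⟨s, hs, hsc⟩ := exists_sqrt_powerSeries _ _
      (mul_ne_zero three_ne_zero (pow_ne_zero _ hG)) hc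
    refine pfister_zero_of_sqrt he x (hx 0) s hs ?_ W hW hz
    rintro rfl
    rw [map_zero] at hsc
    exact mul_ne_zero three_ne_zero (pow_ne_zero _ hG) hsc.symm

/-- An isotropic diagonal form over the residue field with unit coefficients stays isotropic
over the power series. -/
theorem lift_isotropic {κ ι : Type*} [Field κ] [CharZero κ] [Fintype ι]
    (a : ι → PowerSeries κ) (ha : ∀ i, PowerSeries.constantCoeff (a i) ≠ 0) (v : ι → κ)
    (hv : v ≠ 0) (hz : dq (fun i => PowerSeries.constantCoeff (a i)) v = 0) :
    ∃ w, w ≠ 0 ∧ dq a w = 0 := by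
  classical
  obtain ⟨i0, hi0⟩ := Function.ne_iff.1 hv
  have hunit : IsUnit (a i0) := by
    rw [PowerSeries.isUnit_iff_constantCoeff]; exact isUnit_iff_ne_zero.2 (ha i0)
  obtain ⟨y, hy⟩ := hunit.exists_left_inv
  have hy0 : PowerSeries.constantCoeff y * PowerSeries.constantCoeff (a i0) = 1 := by
    rw [← map_mul, hy, map_one]
  obtain ⟨Y, hY2, hYc⟩ := exists_sqrt_powerSeries
    (-(y * ∑ i ∈ Finset.univ.erase i0, a i * PowerSeries.C (v i) ^ 2)) (v i0) hi0 (by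
      rw [dq, ← Finset.add_sum_erase _ _ (Finset.mem_univ i0)] at hz
      simp only [map_neg, map_mul, map_sum, map_pow, PowerSeries.constantCoeff_C]
      rw [eq_neg_of_add_eq_zero_right hz]
      linear_combination (v i0 ^ 2) * hy0)
  refine ⟨fun i => if i = i0 then Y else PowerSeries.C (v i), ?_, ?_⟩
  · intro h
    have := congrFun h i0
    simp only [if_true] at this
    rw [this] at hYc; exact hi0 (by simpa using hYc.symm)
  · rw [dq, ← Finset.add_sum_erase _ _ (Finset.mem_univ i0)]
    simp only [if_true, hY2]
    have hsum : ∑ i ∈ Finset.univ.erase i0, a i * (if i = i0 then Y else PowerSeries.C (v i)) ^ 2 =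
        ∑ i ∈ Finset.univ.erase i0, a i * PowerSeries.C (v i) ^ 2 :=
      Finset.sum_congr rfl fun j hj => by rw [if_neg (Finset.ne_of_mem_erase hj)]
    rw [hsum]
    linear_combination (- ∑ i ∈ Finset.univ.erase i0, a i * PowerSeries.C (v i) ^ 2) * hy

end Coeffs

/-! ### The key lemma: goodness at infinity propagates to zero -/

section KeyLemma
open Matrix

/-- The point `x` has nonzero coordinates and its Pfister form is anisotropic. -/
def Good {E : Type*} [Field E] {k : ℕ} (x : Fin (k + 1) → E) : Prop :=
  (∀ j, x j ≠ 0) ∧ Aniso (pfc x)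

theorem pfc_ne_zero {R : Type*} [CommRing R] [IsDomain R] {k : ℕ} {x : Fin (k + 1) → R}
    (hx : ∀ j, x j ≠ 0) (ε : Fin k → Bool) : pfc x ε ≠ 0 := by
  rw [pfc, pc, Finset.prod_ne_zero_iff]
  intro i _
  split_ifs
  · exact mul_ne_zero (hx _) (hx _)
  · exact one_ne_zero

theorem Good.smul {E : Type*} [Field E] {k : ℕ} {x : Fin (k + 1) → E} (h : Good x) {c : E}
    (hc : c ≠ 0) : Good (fun j => c * x j) := by
  refine ⟨fun j => mul_ne_zero hc (h.1 j), fun v hv => ?_⟩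
  have : dq (pfc x) (fun ε => c ^ wt ε * v ε) = 0 := by
    rw [← hv, dq, dq]
    refine Finset.sum_congr rfl fun ε _ => ?_
    rw [pfc_smul]; ring
  have h0 := h.2 _ this
  funext ε
  have := congrFun h0 ε
  simpa [hc] using this

theorem good_smul_iff {E : Type*} [Field E] {k : ℕ} {x : Fin (k + 1) → E} {c : E}
    (hc : c ≠ 0) : Good (fun j => c * x j) ↔ Good x := by
  refine ⟨fun h => ?_, fun h => h.smul hc⟩
  have := h.smul (inv_ne_zero hc)
  simpa [← mul_assoc, hc] using this

variable {E ι : Type*} [Field E] [Fintype ι]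

/-- Degree estimates for a diagonal form over `E[u]` whose weighted leading form is
anisotropic. -/
theorem dq_degree (D : ι → Polynomial E) (d : ι → ℕ) (hD : ∀ i, (D i).natDegree ≤ 2 * d i)
    (han : Aniso (fun i => (D i).coeff (2 * d i))) (v : ι → Polynomial E) (hv : v ≠ 0) :
    ∃ m, (∀ i, v i ≠ 0 → d i + (v i).natDegree ≤ m) ∧ dq D v ≠ 0 ∧
      (dq D v).natDegree = 2 * m := by
  classical
  obtain ⟨i0, hi0, hmax⟩ := Finset.exists_max_image (Finset.univ.filter fun i => v i ≠ 0)
    (fun i => d i + (v i).natDegree) (by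
      obtain ⟨i, hi⟩ := Function.ne_iff.1 hv
      exact ⟨i, by simpa using hi⟩)
  simp only [Finset.mem_filter, Finset.mem_univ, true_and] at hi0 hmax
  set m := d i0 + (v i0).natDegree with hm
  have hle : (dq D v).natDegree ≤ 2 * m := by
    refine Polynomial.natDegree_sum_le_of_forall_le _ _ fun i _ => ?_
    by_cases hi : v i = 0
    · simp [hi]
    have h1 := hmax i hi
    have h2 := hD i
    refine Polynomial.natDegree_mul_le.trans ?_
    rw [Polynomial.natDegree_pow]; omega
  have hco : (dq D v).coeff (2 * m) = dq (fun i => (D i).coeff (2 * d i))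
      (fun i => if d i ≤ m then (v i).coeff (m - d i) else 0) := by
    simp only [dq, Polynomial.finsetSum_coeff]
    refine Finset.sum_congr rfl fun i _ => ?_
    by_cases hi : v i = 0
    · simp [hi]
    have h1 := hmax i hi
    have h2 := hD i
    rw [if_pos (by omega), show 2 * m = 2 * d i + ((m - d i) + (m - d i)) by omega, pow_two,
      pow_two, Polynomial.coeff_mul_add_eq_of_natDegree_le h2 (Polynomial.natDegree_mul_le.trans
        (by omega)), Polynomial.coeff_mul_add_eq_of_natDegree_le (by omega) (by omega)]
  have hne : (dq D v).coeff (2 * m) ≠ 0 := by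
    rw [hco]
    intro h
    have := congrFun (han _ h) i0
    simp only [if_pos (show d i0 ≤ m by omega), Pi.zero_apply] at this
    rw [show m - d i0 = (v i0).natDegree by omega] at this
    exact hi0 (Polynomial.leadingCoeff_eq_zero.1 this)
  exact ⟨m, hmax, fun h => hne (by simp [h]), le_antisymm hle
    (Polynomial.le_natDegree_of_ne_zero hne)⟩

theorem db_degree (D : ι → Polynomial E) (d : ι → ℕ) (hD : ∀ i, (D i).natDegree ≤ 2 * d i)
    (v w : ι → Polynomial E) (m n : ℕ) (hv : ∀ i, v i ≠ 0 → d i + (v i).natDegree ≤ m)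
    (hw : ∀ i, w i ≠ 0 → d i + (w i).natDegree ≤ n) : (db D v w).natDegree ≤ m + n := by
  refine Polynomial.natDegree_sum_le_of_forall_le _ _ fun i _ => ?_
  by_cases hvi : v i = 0
  · simp [hvi]
  by_cases hwi : w i = 0
  · simp [hwi]
  have h1 := hv i hvi
  have h2 := hw i hwi
  have h3 := hD i
  refine Polynomial.natDegree_mul_le.trans ?_
  have := Polynomial.natDegree_mul_le (p := D i) (q := v i)
  omega

/-- The class of forms over `R` that become, over the fraction field, isometric to the diagonal
form `D`. -/
def FormClass {R : Type*} [CommRing R] [DecidableEq ι] (D : ι → R) : Set (Matrix ι ι R) :=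
  {B | ∃ (h : R) (G : Matrix ι ι R), h ≠ 0 ∧ G.det ≠ 0 ∧ h ^ 2 • B = Gᵀ * diagonal D * G}

theorem db_eq {R : Type*} [CommRing R] [DecidableEq ι] (D v w : ι → R) :
    v ⬝ᵥ diagonal D *ᵥ w = db D v w := by
  simp only [dotProduct, mulVec_diagonal, db]
  exact Finset.sum_congr rfl fun i _ => by ring

theorem form_eq {R : Type*} [CommRing R] [DecidableEq ι] {D : ι → R} {B G : Matrix ι ι R} {h : R}
    (hB : h ^ 2 • B = Gᵀ * diagonal D * G) (v w : ι → R) :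
    h ^ 2 * (v ⬝ᵥ B *ᵥ w) = db D (G *ᵥ v) (G *ᵥ w) := by
  rw [← db_eq, ← smul_eq_mul, ← dotProduct_smul, ← smul_mulVec, hB]
  rw [← mulVec_mulVec, ← mulVec_mulVec, dotProduct_mulVec, vecMul_transpose]

theorem FormClass.map {R S : Type*} [CommRing R] [CommRing S] [DecidableEq ι] (f : R →+* S)
    (hf : Function.Injective f) {D : ι → R} {B : Matrix ι ι R} (hB : B ∈ FormClass D) :
    B.map f ∈ FormClass (fun i => f (D i)) := by
  obtain ⟨h, G, hh, hG, hE⟩ := hB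
  refine ⟨f h, G.map f, fun h0 => hh (hf (by rw [h0, map_zero])), ?_, ?_⟩
  · intro h0
    apply hG
    apply hf
    rw [map_zero, ← h0]
    exact RingHom.map_det f G
  · have := congrArg (fun M => M.map f) hE
    simp only [Matrix.map_mul] at this
    rw [Matrix.diagonal_map (map_zero f)] at this
    have ht : (G.map f)ᵀ = Gᵀ.map f := rfl
    rw [ht, ← this]
    ext1 i j
    simp

theorem FormClass.isSymm {R : Type*} [CommRing R] [IsDomain R] [DecidableEq ι] {D : ι → R}
    {B : Matrix ι ι R} (hB : B ∈ FormClass D) : B.IsSymm := by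
  obtain ⟨h, G, hh, hG, hE⟩ := hB
  have : (h ^ 2 • B)ᵀ = h ^ 2 • B := by
    rw [hE]; simp [Matrix.mul_assoc]
  ext1 i j
  have := congrFun (congrFun this i) j
  simp only [transpose_smul, Matrix.smul_apply, smul_eq_mul] at this
  exact mul_left_cancel₀ (pow_ne_zero 2 hh) this

/-- A nonzero vector of power series is a power of `X` times a vector that is nonzero
modulo `X`. -/
theorem exists_primitive_powerSeries (w : ι → PowerSeries E) (hw : w ≠ 0) :
    ∃ (m : ℕ) (w' : ι → PowerSeries E), w = (PowerSeries.X ^ m : PowerSeries E) • w' ∧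
      ∃ i, PowerSeries.constantCoeff (w' i) ≠ 0 := by
  classical
  obtain ⟨i, hi⟩ := Function.ne_iff.1 hw
  have hex : ∃ m, ∃ i, PowerSeries.coeff m (w i) ≠ 0 := by
    by_contra hno
    push Not at hno
    exact hi (PowerSeries.ext fun m => by simpa using hno m i)
  have hdvd : ∀ i, PowerSeries.X ^ (Nat.find hex) ∣ w i := by
    intro i
    rw [PowerSeries.X_pow_dvd_iff]
    intro m hm
    have := Nat.find_min hex hm
    push Not at this
    exact this i
  choose w' hw' using hdvd
  refine ⟨Nat.find hex, w', funext fun i => by simp [hw' i], ?_⟩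
  obtain ⟨j, hj⟩ := Nat.find_spec hex
  refine ⟨j, ?_⟩
  rw [hw' j, PowerSeries.coeff_X_pow_mul'] at hj
  simpa using hj

end KeyLemma

section KeyLemma2
open Matrix

/-- Good reduction: if `D` has unit coefficients, a form in its class which degenerates modulo
`X` is not maximal, because `B ⊥ -D` is hyperbolic. -/
theorem local_good {κ ι : Type*} [Field κ] [Fintype ι] [DecidableEq ι] (D : ι → PowerSeries κ)
    (hD : ∀ i, PowerSeries.constantCoeff (D i) ≠ 0) (B : Matrix ι ι (PowerSeries κ))
    (hB : B ∈ FormClass D) (hdet : PowerSeries.constantCoeff B.det = 0) :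
    ∃ v : ι → PowerSeries κ, (∃ i, PowerSeries.constantCoeff (v i) ≠ 0) ∧
      (∀ i, PowerSeries.constantCoeff ((B *ᵥ v) i) = 0) ∧ PowerSeries.X ^ 2 ∣ v ⬝ᵥ B *ᵥ v := by
  have hsymm := FormClass.isSymm hB
  obtain ⟨h, G, hh, hG, hE⟩ := hB
  let M : Matrix (ι ⊕ ι) (ι ⊕ ι) (PowerSeries κ) := fromBlocks B 0 0 (-diagonal D)
  have hM : ∀ v1 v2 w1 w2 : ι → PowerSeries κ, Sum.elim v1 v2 ⬝ᵥ M *ᵥ Sum.elim w1 w2 =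
      v1 ⬝ᵥ B *ᵥ w1 - db D v2 w2 := by
    intro v1 v2 w1 w2
    rw [fromBlocks_mulVec]
    simp only [Sum.elim_comp_inl, Sum.elim_comp_inr, sumElim_dotProduct_sumElim, zero_mulVec,
      add_zero, zero_add, neg_mulVec, dotProduct_neg, db_eq]
    ring
  let f : ι → ι ⊕ ι → PowerSeries κ := fun a => Sum.elim (h • Pi.single a 1) (G *ᵥ Pi.single a 1)
  have hf : LinearIndependent (PowerSeries κ) f := by
    rw [Fintype.linearIndependent_iff]
    intro c hc i
    have := congrFun hc (Sum.inl i)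
    simp [f, Finset.sum_apply, Pi.single_apply, hh] at this
    exact this
  obtain ⟨v, hv, hMv, hQ⟩ := springer M
    (IsSymm.fromBlocks hsymm (by simp) (IsSymm.neg (isSymm_diagonal D))) f hf
    (fun a b => by
      rw [hM, ← form_eq hE, mulVec_smul, smul_dotProduct, dotProduct_smul, smul_eq_mul,
        smul_eq_mul]
      ring)
    (by simp [two_mul]) (by
      simp only [M, det_fromBlocks_zero₂₁, map_mul, hdet, zero_mul])
  obtain ⟨v1, v2, rfl⟩ : ∃ v1 v2, v = Sum.elim v1 v2 :=
    ⟨v ∘ Sum.inl, v ∘ Sum.inr, (Sum.elim_comp_inl_inr v).symm⟩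
  have h2 : ∀ i, PowerSeries.constantCoeff (v2 i) = 0 := by
    intro i
    have := hMv (Sum.inr i)
    simpa [M, fromBlocks_mulVec, neg_mulVec, mulVec_diagonal, hD i] using this
  have h1 : ∀ i, PowerSeries.constantCoeff ((B *ᵥ v1) i) = 0 := by
    intro i
    have := hMv (Sum.inl i)
    simpa [M, fromBlocks_mulVec] using this
  refine ⟨v1, ?_, h1, ?_⟩
  · obtain ⟨i | i, hi⟩ := hv
    · exact ⟨i, hi⟩
    · exact absurd (h2 i) hi
  · rw [hM] at hQ
    have : PowerSeries.X ^ 2 ∣ db D v2 v2 := by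
      refine Finset.dvd_sum fun i _ => ?_
      rw [mul_assoc, ← pow_two]
      exact Dvd.dvd.mul_left (pow_dvd_pow_of_dvd (PowerSeries.X_dvd_iff.2 (h2 i)) 2) _
    have := dvd_add hQ this
    simpa using this

/-- If `D` is a Pfister form which becomes isotropic, a form in its class which degenerates
modulo `X` is not maximal, because the form is hyperbolic. -/
theorem local_bad {κ : Type*} [Field κ] [CharZero κ] {k : ℕ} (b : Fin k → PowerSeries κ)
    (hiso : ∃ v, v ≠ 0 ∧ dq (pc b) v = 0)
    (B : Matrix (Fin k → Bool) (Fin k → Bool) (PowerSeries κ))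
    (hB : B ∈ FormClass (pc b)) (hdet : PowerSeries.constantCoeff B.det = 0) :
    ∃ v : (Fin k → Bool) → PowerSeries κ, (∃ i, PowerSeries.constantCoeff (v i) ≠ 0) ∧
      (∀ i, PowerSeries.constantCoeff ((B *ᵥ v) i) = 0) ∧ PowerSeries.X ^ 2 ∣ v ⬝ᵥ B *ᵥ v := by
  have hsymm := FormClass.isSymm hB
  obtain ⟨h, G, hh, hG, hE⟩ := hB
  let R := PowerSeries κ
  let K := FractionRing R
  let j : R →+* K := algebraMap R K
  have hj : Function.Injective j := IsFractionRing.injective R K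
  have hpc : pc (fun i => j (b i)) = fun ε => j (pc b ε) := funext fun ε => (pc_map j b ε).symm
  obtain ⟨N, hN, hcard⟩ := (round_hyp_pc k (fun i => j (b i))).2 (by
    obtain ⟨v, hv0, hv⟩ := hiso
    refine ⟨fun ε => j (v ε), ?_, ?_⟩
    · intro h0; apply hv0; funext ε
      exact hj (by simpa using congrFun h0 ε)
    · rw [hpc, dq_map, hv, map_zero])
  have hNb : ∀ v ∈ N, ∀ w ∈ N, db (pc (fun i => j (b i))) v w = 0 := by
    intro v hv w hw
    have h1 := hN _ (N.add_mem hv hw)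
    rw [dq_add, hN v hv, hN w hw] at h1
    have : CharZero K := by
      have : CharZero R := charZero_of_injective_ringHom (PowerSeries.C_injective (R := κ))
      exact charZero_of_injective_ringHom hj
    simpa using h1
  let β := Module.finBasis K N
  have hclear : ∀ a, ∃ (c : R) (w : (Fin k → Bool) → R), c ≠ 0 ∧
      ∀ ε, j (w ε) = j c * (β a : (Fin k → Bool) → K) ε := by
    intro a
    obtain ⟨c, hc⟩ := IsLocalization.exist_integer_multiples_of_finite (nonZeroDivisors R)
      (β a : (Fin k → Bool) → K)
    choose w hw using hc
    exact ⟨c, w, nonZeroDivisors.ne_zero c.2, fun ε => by rw [hw ε, Algebra.smul_def]⟩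
  choose c w hc hw using hclear
  have hwb : ∀ a a', db (pc b) (w a) (w a') = 0 := by
    intro a a'
    apply hj
    have h1 := hNb _ (β a).2 _ (β a').2
    rw [map_zero]
    have : j (db (pc b) (w a) (w a')) = j (c a) * j (c a') *
        db (pc (fun i => j (b i))) (β a) (β a') := by
      simp only [db, map_sum, map_mul, hw, hpc, Finset.mul_sum]
      exact Finset.sum_congr rfl fun _ _ => by ring
    rw [this, h1, mul_zero]
  have hwi : LinearIndependent R w := by
    rw [Fintype.linearIndependent_iff]
    intro t ht a
    have h1 : ∑ a, (j (t a) * j (c a)) • β a = 0 := by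
      apply Subtype.ext
      funext ε
      have := congrArg j (congrFun ht ε)
      simp only [Finset.sum_apply, Pi.smul_apply, smul_eq_mul, map_sum, map_mul, hw] at this
      simp only [Submodule.coe_sum, Submodule.coe_smul, Finset.sum_apply, Pi.smul_apply,
        smul_eq_mul, mul_assoc]
      simpa using this
    have h2 := Fintype.linearIndependent_iff.1 β.linearIndependent _ h1 a
    have h3 : j (t a) = 0 := by
      refine (mul_eq_zero.1 h2).resolve_right fun h0 => hc a (hj (by rw [h0, map_zero]))
    exact hj (by rw [h3, map_zero])
  have hadj : ∀ v, G *ᵥ (G.adjugate *ᵥ v) = G.det • v := by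
    intro v
    rw [mulVec_mulVec, mul_adjugate, smul_mulVec, one_mulVec]
  have hfi : LinearIndependent R (fun a => G.adjugate *ᵥ w a) := by
    rw [Fintype.linearIndependent_iff]
    intro t ht a
    have h1 : ∑ a, (G.det * t a) • w a = 0 := by
      have := congrArg (fun z => G *ᵥ z) ht
      simp only [mulVec_sum, mulVec_smul, hadj, mulVec_zero] at this
      simpa [smul_smul, mul_comm] using this
    exact (mul_eq_zero.1 (Fintype.linearIndependent_iff.1 hwi _ h1 a)).resolve_left hG
  refine springer B hsymm _ hfi (fun a a' => ?_) (by simpa using hcard) hdet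
  have h1 := form_eq hE (G.adjugate *ᵥ w a) (G.adjugate *ᵥ w a')
  rw [hadj, hadj, db_smul_right] at h1
  have h2 : db (pc b) (G.det • w a) (w a') = G.det * db (pc b) (w a) (w a') := by
    simp only [db, Finset.mul_sum, Pi.smul_apply, smul_eq_mul]
    exact Finset.sum_congr rfl fun _ _ => by ring
  rw [h2, hwb, mul_zero, mul_zero] at h1
  exact (mul_eq_zero.1 h1).resolve_left (pow_ne_zero 2 hh)

variable {E : Type*} [Field E] [CharZero E] {k r : ℕ}

/-- The coprime case of `key_lemma`. -/
theorem key_lemma_coprime {e : Fin (r + 3) → (Fin (k + 2) → Bool)} (he : PfNumbering e)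
    (ξ : Fin (k + 2 + 1) → Polynomial E) (W : Fin (r + 3) → Polynomial E) (hW : W ≠ 0)
    (hz : dq (PP e ξ) W = 0) (N : ℕ) (hN : ∀ j, (ξ j).natDegree ≤ N)
    (htop : Good fun j => (ξ j).coeff N)
    (hcop : ∀ p : Polynomial E, Irreducible p → ∃ j, ¬ p ∣ ξ j) :
    Good fun j => (ξ j).coeff 0 := by
  have hξ0 : ∀ j, ξ j ≠ 0 := fun j h => htop.1 j (by simp [h])
  -- the expansion of the data at a point
  have hexp0 : ∀ {κ : Type _} [Field κ] (i : E →+* κ) (θ : κ) (j), expAt i θ (ξ j) ≠ 0 :=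
    fun i θ j h => hξ0 j (expAt_injective i θ (by rw [h, map_zero]))
  have hexpW : ∀ {κ : Type _} [Field κ] (i : E →+* κ) (θ : κ),
      (fun a => expAt i θ (W a)) ≠ 0 ∧
        dq (PP e (fun j => expAt i θ (ξ j))) (fun a => expAt i θ (W a)) = 0 := by
    intro κ _ i θ
    constructor
    · intro h; apply hW; funext a
      exact expAt_injective i θ (by simpa using congrFun h a)
    · have : PP e (fun j => expAt i θ (ξ j)) = fun a => expAt i θ (PP e ξ a) :=
        funext fun a => (PP_map _ e ξ a).symm
      rw [this, dq_map, hz, map_zero]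
  set D := pfc ξ with hDdef
  let d : (Fin (k + 2) → Bool) → ℕ := fun ε => N * wt ε
  have hDc : ∀ ε, (D ε).natDegree ≤ 2 * d ε ∧
      (D ε).coeff (2 * d ε) = pfc (fun j => (ξ j).coeff N) ε := by
    intro ε
    have := coeff_prod_of_deg_le Finset.univ (fun i => if ε i then slots ξ i else 1)
      (fun i => if ε i then N + N else 0) (fun i _ => by
        split_ifs
        · exact Polynomial.natDegree_mul_le.trans (add_le_add (hN _) (hN _))
        · simp)
    have hs : ∑ i, (if ε i then N + N else 0) = 2 * d ε := by
      simp only [d, wt, Finset.mul_sum]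
      refine Finset.sum_congr rfl fun i _ => ?_
      split_ifs <;> ring
    rw [hs] at this
    refine ⟨this.1, this.2.trans ?_⟩
    refine Finset.prod_congr rfl fun i _ => ?_
    split_ifs
    · simp only [slots]
      rw [Polynomial.coeff_mul_add_eq_of_natDegree_le (hN _) (hN _)]
    · simp
  have hDd := fun ε => (hDc ε).1
  have han : Aniso (fun ε => (D ε).coeff (2 * d ε)) := by
    simp only [hDc]; exact htop.2
  have hdeg := dq_degree D d hDd han
  have hGv : ∀ {G : Matrix (Fin (k + 2) → Bool) (Fin (k + 2) → Bool) (Polynomial E)},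
      G.det ≠ 0 → ∀ {v}, v ≠ 0 → G *ᵥ v ≠ 0 := by
    intro G hG v hv h
    exact hG (Matrix.exists_mulVec_eq_zero_iff.1 ⟨v, hv, h⟩)
  have hinf : ∀ B ∈ FormClass D, ∀ v : (Fin (k + 2) → Bool) → Polynomial E, v ≠ 0 →
      v ⬝ᵥ B *ᵥ v ≠ 0 ∧ Even (v ⬝ᵥ B *ᵥ v).natDegree := by
    rintro B ⟨h, G, hh, hG, hE⟩ v hv
    obtain ⟨m, -, hne, hm⟩ := hdeg _ (hGv hG hv)
    rw [← db_self, ← form_eq hE] at hne hm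
    have h1 : v ⬝ᵥ B *ᵥ v ≠ 0 := fun h0 => hne (by rw [h0, mul_zero])
    refine ⟨h1, ?_⟩
    rw [Polynomial.natDegree_mul (pow_ne_zero 2 hh) h1, Polynomial.natDegree_pow] at hm
    rw [Nat.even_iff]; omega
  obtain ⟨B0, hB0⟩ := exists_constant_form (FormClass D) ⟨diagonal D, 1, 1, by simp⟩ hinf
    (by
      rintro B ⟨h, G, hh, hG, hE⟩ v w
      by_cases hv : v = 0
      · simp [hv]
      by_cases hw : w = 0
      · simp [hw]
      by_cases hvw : v ⬝ᵥ B *ᵥ w = 0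
      · simp [hvw]
      obtain ⟨m, hvm, hne1, hm⟩ := hdeg _ (hGv hG hv)
      obtain ⟨n, hwn, hne2, hn⟩ := hdeg _ (hGv hG hw)
      have h3 := db_degree D d hDd _ _ m n hvm hwn
      rw [← db_self, ← form_eq hE] at hne1 hm hne2 hn
      rw [← form_eq hE] at h3
      have hh2 := pow_ne_zero 2 hh
      rw [Polynomial.natDegree_mul hh2 hvw] at h3
      rw [Polynomial.natDegree_mul hh2 (fun h0 => hne1 (by rw [h0, mul_zero]))] at hm
      rw [Polynomial.natDegree_mul hh2 (fun h0 => hne2 (by rw [h0, mul_zero]))] at hn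
      omega)
    (by
      rintro B ⟨h, G, hh, hG, hE⟩ p T B' hp hT hB'
      refine ⟨h * p, G * T, mul_ne_zero hh hp, by rw [det_mul]; exact mul_ne_zero hG hT, ?_⟩
      rw [mul_pow, mul_smul, hB', ← smul_mul_assoc, ← mul_smul_comm, hE, transpose_mul]
      simp only [Matrix.mul_assoc])
    (by
      intro B hB p hp hpd
      have : Fact (Irreducible p) := ⟨hp⟩
      have : CharZero (AdjoinRoot p) :=
        charZero_of_injective_ringHom (AdjoinRoot.of p).injective
      let c := expAt (AdjoinRoot.of p) (AdjoinRoot.root p)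
      have hcB : B.map c ∈ FormClass (fun ε => c (D ε)) :=
        FormClass.map c (expAt_injective _ _) hB
      have hD' : (fun ε => c (D ε)) = pfc (fun j => c (ξ j)) := funext fun ε => pfc_map c ξ ε
      have hdet : PowerSeries.constantCoeff (B.map c).det = 0 := by
        have : (B.map c).det = c B.det := (RingHom.map_det c B).symm
        rw [this, constantCoeff_expAt, eval₂_root_eq_zero_iff]; exact hpd
      have hres : ∃ v : (Fin (k + 2) → Bool) → PowerSeries (AdjoinRoot p),
          (∃ i, PowerSeries.constantCoeff (v i) ≠ 0) ∧
          (∀ i, PowerSeries.constantCoeff (((B.map c) *ᵥ v) i) = 0) ∧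
          PowerSeries.X ^ 2 ∣ v ⬝ᵥ (B.map c) *ᵥ v := by
        by_cases hbad : ∃ j, PowerSeries.constantCoeff (c (ξ j)) = 0
        · rw [hD'] at hcB
          refine local_bad _ ?_ _ hcB hdet
          refine bad_point he _ (hexp0 _ _) hbad ?_ _ (hexpW _ _).1 (hexpW _ _).2
          obtain ⟨j, hj⟩ := hcop p hp
          refine ⟨j, ?_⟩
          rw [constantCoeff_expAt, Ne, eval₂_root_eq_zero_iff]; exact hj
        · push Not at hbad
          refine local_good _ (fun ε => ?_) _ hcB hdet
          rw [congrFun hD' ε, pfc_map]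
          exact pfc_ne_zero hbad ε
      obtain ⟨v, h1, h2, h3⟩ := hres
      exact local_descend B (FormClass.isSymm hB) p v h1 h2 h3)
    (fun B hB => FormClass.isSymm hB)
  -- the constant form is anisotropic over `E`, hence over the Laurent series
  have hB0an : ∀ v : (Fin (k + 2) → Bool) → E, v ≠ 0 → v ⬝ᵥ B0 *ᵥ v ≠ 0 := by
    intro v hv h0
    refine (hinf _ hB0 (fun ε => Polynomial.C (v ε)) ?_).1 ?_
    · intro h; apply hv; funext ε
      exact Polynomial.C_injective (by simpa using congrFun h ε)
    · have := congrArg Polynomial.C h0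
      simpa [dotProduct, mulVec, map_sum] using this
  by_contra hnot
  let c := expAt (RingHom.id E) 0
  have hcc : ∀ f, PowerSeries.constantCoeff (c f) = f.coeff 0 := by
    intro f
    rw [constantCoeff_expAt, Polynomial.coeff_zero_eq_eval_zero]; rfl
  have hiso : ∃ v, v ≠ 0 ∧ dq (pfc (fun j => c (ξ j))) v = 0 := by
    by_cases hbad : ∃ j, PowerSeries.constantCoeff (c (ξ j)) = 0
    · refine bad_point he _ (hexp0 _ _) hbad ?_ _ (hexpW _ _).1 (hexpW _ _).2
      obtain ⟨j, hj⟩ := hcop Polynomial.X Polynomial.irreducible_X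
      refine ⟨j, ?_⟩
      rw [hcc, Ne, ← Polynomial.X_dvd_iff]; exact hj
    · push Not at hbad
      have : ¬ Aniso (pfc fun j => (ξ j).coeff 0) := fun h => hnot
        ⟨fun j => by have := hbad j; rw [hcc] at this; exact this, h⟩
      simp only [Aniso] at this
      push Not at this
      obtain ⟨v, hv, hv0⟩ := this
      refine lift_isotropic _ (fun ε => ?_) v hv0 ?_
      · rw [pfc_map]; exact pfc_ne_zero hbad ε
      · simp only [pfc_map, hcc]; exact hv
  obtain ⟨v, hv0, hv⟩ := hiso
  obtain ⟨h, G, hh, hG, hE⟩ := FormClass.map c (expAt_injective _ _) hB0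
  have hw0 : G.adjugate *ᵥ v ≠ 0 := by
    intro h0
    have h1 : G *ᵥ (G.adjugate *ᵥ v) = G.det • v := by
      rw [mulVec_mulVec, mul_adjugate, smul_mulVec, one_mulVec]
    rw [h0, mulVec_zero] at h1
    obtain ⟨ε, hε⟩ := Function.ne_iff.1 hv0
    exact mul_ne_zero hG hε (by simpa using (congrFun h1 ε).symm)
  have hwz : (G.adjugate *ᵥ v) ⬝ᵥ ((B0.map Polynomial.C).map c) *ᵥ (G.adjugate *ᵥ v) = 0 := by
    have h1 := form_eq hE (G.adjugate *ᵥ v) (G.adjugate *ᵥ v)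
    have h2 : G *ᵥ (G.adjugate *ᵥ v) = G.det • v := by
      rw [mulVec_mulVec, mul_adjugate, smul_mulVec, one_mulVec]
    rw [h2, db_self, dq_smul] at h1
    rw [show (fun ε => c (D ε)) = pfc (fun j => c (ξ j)) from funext fun ε => pfc_map c ξ ε, hv,
      mul_zero] at h1
    exact (mul_eq_zero.1 h1).resolve_left (pow_ne_zero 2 hh)
  obtain ⟨m, w, hw, i, hi⟩ := exists_primitive_powerSeries _ hw0
  rw [hw, mulVec_smul, dotProduct_smul, smul_dotProduct, smul_eq_mul, smul_eq_mul] at hwz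
  have hX : (PowerSeries.X ^ m : PowerSeries E) ≠ 0 := pow_ne_zero _ PowerSeries.X_ne_zero
  have hwz' := (mul_eq_zero.1 ((mul_eq_zero.1 hwz).resolve_left hX)).resolve_left hX
  refine hB0an (fun ε => PowerSeries.constantCoeff (w ε)) (fun h0 => hi (congrFun h0 i)) ?_
  have := congrArg PowerSeries.constantCoeff hwz'
  simpa [dotProduct, mulVec, map_sum, hcc] using this

/-- If the degenerate quadric has a point over `E(s)` above the point `ξ` of projective space,
then goodness of the top coefficient of `ξ` implies goodness of the lowest one. -/
theorem key_lemma {e : Fin (r + 3) → (Fin (k + 2) → Bool)} (he : PfNumbering e)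
    (ξ : Fin (k + 2 + 1) → Polynomial E) (W : Fin (r + 3) → Polynomial E) (hW : W ≠ 0)
    (hz : dq (PP e ξ) W = 0) (N : ℕ) (hN : ∀ j, (ξ j).natDegree ≤ N)
    (htop : Good fun j => (ξ j).coeff N) (n : ℕ) (hn : ∀ m < n, ∀ j, (ξ j).coeff m = 0)
    (hn' : ∃ j, (ξ j).coeff n ≠ 0) :
    Good fun j => (ξ j).coeff n := by
  have hξ0 : ∀ j, ξ j ≠ 0 := fun j h => htop.1 j (by simp [h])
  let I : Ideal (Polynomial E) := Ideal.span (Set.range ξ)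
  obtain ⟨g, hg⟩ := (IsPrincipalIdealRing.principal I).principal
  have hdvd : ∀ j, g ∣ ξ j := fun j => by
    have : ξ j ∈ I := Ideal.subset_span ⟨j, rfl⟩
    rw [hg] at this
    exact Ideal.mem_span_singleton.1 this
  choose ξ' hξ' using hdvd
  have hg0 : g ≠ 0 := fun h => hξ0 0 (by rw [hξ', h, zero_mul])
  have hξ'0 : ∀ j, ξ' j ≠ 0 := fun j h => hξ0 j (by rw [hξ', h, mul_zero])
  have hcop : ∀ p : Polynomial E, Irreducible p → ∃ j, ¬ p ∣ ξ' j := by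
    intro p hp
    by_contra hno
    push Not at hno
    have hgI : g ∈ I := by rw [hg]; exact Ideal.mem_span_singleton_self g
    have hI : I ≤ Ideal.span {g * p} := by
      rw [Ideal.span_le]
      rintro _ ⟨j, rfl⟩
      rw [hξ' j]
      exact Ideal.mem_span_singleton.2 (mul_dvd_mul_left g (hno j))
    have h1 := Ideal.mem_span_singleton.1 (hI hgI)
    obtain ⟨q, hq⟩ := h1
    have : p * q = 1 := by
      apply mul_left_cancel₀ hg0
      rw [← mul_assoc, ← hq, mul_one]
    exact hp.not_isUnit (IsUnit.of_mul_eq_one _ this)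
  have hfun : ξ = fun j => g * ξ' j := funext hξ'
  have hz' : dq (PP e ξ') (fun i => g ^ ee e i * W i) = 0 := by
    have h1 : dq (PP e ξ) W = g * dq (PP e ξ') (fun i => g ^ ee e i * W i) := by
      simp only [dq, Finset.mul_sum]
      refine Finset.sum_congr rfl fun i _ => ?_
      rw [hfun, PP_smul]; ring
    rw [hz] at h1
    exact (mul_eq_zero.1 h1.symm).resolve_left hg0
  have hW' : (fun i => g ^ ee e i * W i) ≠ 0 := by
    obtain ⟨i, hi⟩ := Function.ne_iff.1 hW
    intro h
    exact mul_ne_zero (pow_ne_zero _ hg0) hi (congrFun h i)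
  have hd : ∀ j, g.natDegree + (ξ' j).natDegree ≤ N := fun j => by
    rw [← Polynomial.natDegree_mul hg0 (hξ'0 j), ← hξ' j]; exact hN j
  have htop' : Good fun j => (ξ' j).coeff (N - g.natDegree) := by
    rw [← good_smul_iff (Polynomial.leadingCoeff_ne_zero.2 hg0)]
    convert htop using 2 with j
    have := hd j
    rw [hξ' j]
    conv_rhs => rw [show N = g.natDegree + (N - g.natDegree) by omega]
    rw [Polynomial.coeff_mul_add_eq_of_natDegree_le le_rfl (by omega)]
    rfl
  have hgood := key_lemma_coprime he ξ' _ hW' hz' (N - g.natDegree)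
    (fun j => by have := hd j; omega) htop' hcop
  obtain ⟨h, hh⟩ : Polynomial.X ^ g.natTrailingDegree ∣ g :=
    Polynomial.X_pow_dvd_iff.2 fun d hd => Polynomial.coeff_eq_zero_of_lt_natTrailingDegree hd
  set t := g.natTrailingDegree with ht
  have hh0 : h.coeff 0 ≠ 0 := by
    have h1 : g.coeff t ≠ 0 := Polynomial.trailingCoeff_nonzero_iff_nonzero.2 hg0
    rw [hh] at h1
    simpa [Polynomial.coeff_X_pow_mul'] using h1
  have hco : ∀ j, (ξ j).coeff t = h.coeff 0 * (ξ' j).coeff 0 := by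
    intro j
    rw [hξ' j, hh, mul_assoc, Polynomial.coeff_X_pow_mul', if_pos le_rfl, Nat.sub_self,
      Polynomial.mul_coeff_zero]
  have hlow : ∀ j, ∀ m < t, (ξ j).coeff m = 0 := by
    intro j m hm
    rw [hξ' j, hh, mul_assoc, Polynomial.coeff_X_pow_mul', if_neg (by omega)]
  have hnt : n = t := by
    apply le_antisymm
    · by_contra hlt
      have := hn t (by omega) 0
      rw [hco] at this
      exact mul_ne_zero hh0 (hgood.1 0) this
    · by_contra hlt
      obtain ⟨j, hj⟩ := hn'
      exact hj (hlow j n (by omega))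
  rw [hnt]
  simp only [hco]
  exact hgood.smul hh0

end KeyLemma2

/-! ### The Newton polygon argument -/

section Newton

section Order
variable {Γ : Type*} [LinearOrderedCommGroupWithZero Γ]

theorem newton_mono_le {γ δ : Γ} (hδ : 1 ≤ δ) {a b : Γ} {m n : ℕ} (hmn : m ≤ n)
    (h : γ ^ m * a ≤ γ ^ n * b) : (γ * δ) ^ m * a ≤ (γ * δ) ^ n * b := by
  have h1 : δ ^ m * (γ ^ m * a) ≤ δ ^ n * (γ ^ n * b) :=
    mul_le_mul' (pow_le_pow_right' hδ hmn) h
  calc _ = δ ^ m * (γ ^ m * a) := by rw [mul_pow, mul_comm (γ ^ m), mul_assoc]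
    _ ≤ _ := h1
    _ = _ := by rw [mul_pow, mul_comm (γ ^ n) (δ ^ n), mul_assoc]

theorem newton_mono_lt {γ δ : Γ} (hδ : 1 ≤ δ) {a b : Γ} {m n : ℕ} (hmn : m ≤ n)
    (h : γ ^ m * a < γ ^ n * b) : (γ * δ) ^ m * a < (γ * δ) ^ n * b := by
  have hδ0 : 0 < δ ^ m := zero_lt_iff.2 (pow_ne_zero _ (zero_lt_one.trans_le hδ).ne')
  have h1 : δ ^ m * (γ ^ m * a) < δ ^ n * (γ ^ n * b) :=
    (mul_lt_mul_of_pos_left h hδ0).trans_le (mul_le_mul' (pow_le_pow_right' hδ hmn) le_rfl)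
  calc _ = δ ^ m * (γ ^ m * a) := by rw [mul_pow, mul_comm (γ ^ m), mul_assoc]
    _ < _ := h1
    _ = _ := by rw [mul_pow, mul_comm (γ ^ n) (δ ^ n), mul_assoc]

theorem newton_anti_lt {γ δ : Γ} (hδ0 : δ ≠ 0) (hδ : δ < 1) {a b : Γ} {m n : ℕ} (hmn : n < m)
    (hb : γ ^ n * b ≠ 0) (h : γ ^ m * a ≤ γ ^ n * b) : (γ * δ) ^ m * a < (γ * δ) ^ n * b := by
  have h1 : δ ^ m * (γ ^ m * a) < δ ^ n * (γ ^ n * b) :=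
    (mul_le_mul' le_rfl h).trans_lt
      (mul_lt_mul_of_pos_right (pow_lt_pow_right_of_lt_one₀ (zero_lt_iff.2 hδ0) hδ hmn)
        (zero_lt_iff.2 hb))
  calc _ = δ ^ m * (γ ^ m * a) := by rw [mul_pow, mul_comm (γ ^ m), mul_assoc]
    _ < _ := h1
    _ = _ := by rw [mul_pow, mul_comm (γ ^ n) (δ ^ n), mul_assoc]

/-- A property of the vertices of the Newton polygon of a sequence `a` which passes from
the right end of each edge to its left end holds at `0` if it holds at the last vertex. -/
theorem newton_descent (a : ℕ → Γ) (N : ℕ) (ha : ∀ m, N < m → a m = 0) (h0 : a 0 ≠ 0)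
    (hdiv : ∀ x : Γ, x ≠ 0 → ∀ n : ℕ, n ≠ 0 → ∃ y : Γ, y ^ n = x)
    (G : ℕ → Prop) (hN : G N) (hG : ∀ n, G n → a n ≠ 0)
    (step : ∀ n n' γ, γ ≠ 0 → n' < n → G n → (∀ m, γ ^ m * a m ≤ γ ^ n * a n) →
      (∀ m, n < m → γ ^ m * a m < γ ^ n * a n) → γ ^ n' * a n' = γ ^ n * a n →
      (∀ m < n', γ ^ m * a m < γ ^ n * a n) → G n') : G 0 := by
  classical
  suffices H : ∀ n, G n → (∀ γ, γ ≠ 0 → (∃ m < n, γ ^ n * a n ≤ γ ^ m * a m) →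
      ∀ m, n < m → γ ^ m * a m < γ ^ n * a n) → G 0 by
    refine H N hN fun γ hγ _ m hm => ?_
    rw [ha m hm, mul_zero]
    exact zero_lt_iff.2 (mul_ne_zero (pow_ne_zero _ hγ) (hG N hN))
  intro n
  induction n using Nat.strong_induction_on with
  | _ n ih =>
    intro hGn hQ
    rcases Nat.eq_zero_or_pos n with rfl | hn
    · exact hGn
    have han := hG n hGn
    have hsl : ∀ m, ∃ y : Γ, m < n → a m ≠ 0 → y ≠ 0 ∧ y ^ m * a m = y ^ n * a n := by
      intro m
      by_cases hm : m < n
      · by_cases ham : a m = 0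
        · exact ⟨1, fun _ h => absurd ham h⟩
        · obtain ⟨y, hy⟩ := hdiv (a m / a n) (div_ne_zero ham han) (n - m) (by omega)
          have hy0 : y ≠ 0 := by
            rintro rfl
            rw [zero_pow (by omega)] at hy
            exact div_ne_zero ham han hy.symm
          refine ⟨y, fun _ _ => ⟨hy0, ?_⟩⟩
          rw [show n = m + (n - m) by omega, pow_add, hy]
          rw [show m + (n - m) = n by omega, mul_assoc, div_mul_cancel₀ _ han]
      · exact ⟨1, fun h => absurd h hm⟩
    choose y hy using hsl
    obtain ⟨m0, hm0, hmax⟩ := Finset.exists_max_image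
      ((Finset.range n).filter fun m => a m ≠ 0) y ⟨0, by simp [hn, h0]⟩
    simp only [Finset.mem_filter, Finset.mem_range] at hm0 hmax
    set γ := y m0
    obtain ⟨hγ, hγm⟩ := hy m0 hm0.1 hm0.2
    have hgt := hQ γ hγ ⟨m0, hm0.1, hγm.ge⟩
    have hle : ∀ m, γ ^ m * a m ≤ γ ^ n * a n := by
      intro m
      rcases lt_trichotomy m n with hm | rfl | hm
      · by_cases ham : a m = 0
        · rw [ham, mul_zero]; exact zero_le
        obtain ⟨hym0, hym⟩ := hy m hm ham
        have h1 : 1 ≤ (y m)⁻¹ * γ := by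
          rw [← mul_inv_cancel₀ hym0, mul_comm (y m)⁻¹ γ]
          exact mul_le_mul' (hmax m ⟨hm, ham⟩) le_rfl
        have := newton_mono_le (γ := y m) h1 hm.le hym.le
        rwa [mul_inv_cancel_left₀ hym0] at this
      · exact le_rfl
      · exact (hgt m hm).le
    have hex : ∃ m, γ ^ m * a m = γ ^ n * a n := ⟨m0, hγm⟩
    set n' := Nat.find hex with hn'
    have hn'n : n' < n := (Nat.find_min' hex hγm).trans_lt hm0.1
    have heq : γ ^ n' * a n' = γ ^ n * a n := Nat.find_spec hex
    have hlt : ∀ m < n', γ ^ m * a m < γ ^ n * a n := fun m hm =>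
      lt_of_le_of_ne (hle m) (Nat.find_min hex hm)
    refine ih n' hn'n (step n n' γ hγ hn'n hGn hle hgt heq hlt) ?_
    rintro γ' hγ' ⟨m, hm, hmle⟩ m' hm'
    have hγγ : γ * (γ⁻¹ * γ') = γ' := mul_inv_cancel_left₀ hγ γ'
    have hδ : γ⁻¹ * γ' < 1 := by
      by_contra hge
      have := newton_mono_lt (γ := γ) (not_lt.1 hge) hm.le ((hlt m hm).trans_eq heq.symm)
      rw [hγγ] at this
      exact absurd hmle (not_le.2 this)
    have := newton_anti_lt (γ := γ) (mul_ne_zero (inv_ne_zero hγ) hγ') hδ hm'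
      (heq ▸ mul_ne_zero (pow_ne_zero _ hγ) han) ((hle m').trans_eq heq.symm)
    rwa [hγγ] at this

end Order

/-- The coefficients of the quadric: a perturbation of the degenerate quadric by Fermat forms. -/
def aa {R : Type*} [CommRing R] {k r : ℕ} (e : Fin (r + 3) → (Fin (k + 2) → Bool))
    (c : Fin (r + 3) → Fin (k + 2 + 1) → R) (x : Fin (k + 2 + 1) → R) (i : Fin (r + 3)) : R :=
  PP e x i + ∑ j, c i j * x j ^ (2 * ee e i + 1)

section aa
variable {R S : Type*} [CommRing R] [CommRing S] {k r : ℕ}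
  (e : Fin (r + 3) → (Fin (k + 2) → Bool))

theorem aa_map (f : R →+* S) (c : Fin (r + 3) → Fin (k + 2 + 1) → R) (x : Fin (k + 2 + 1) → R)
    (i : Fin (r + 3)) : f (aa e c x i) = aa e (fun i j => f (c i j)) (fun j => f (x j)) i := by
  simp [aa, PP_map]

theorem aa_smul (c : Fin (r + 3) → Fin (k + 2 + 1) → R) (t : R) (x : Fin (k + 2 + 1) → R)
    (i : Fin (r + 3)) : aa e c (fun j => t * x j) i = t * (t ^ ee e i) ^ 2 * aa e c x i := by
  simp only [aa, PP_smul, mul_add, Finset.mul_sum]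
  congr 1
  exact Finset.sum_congr rfl fun j _ => by ring

theorem aa_zero (x : Fin (k + 2 + 1) → R) : aa e (fun _ _ => 0) x = PP e x := by
  funext i; simp [aa]

end aa

section Reduction
open IsLocalRing
variable {L : Type*} [Field L] (V : ValuationSubring L) {k r : ℕ}

/-- The point `z` of projective space has good reduction with respect to `V`. -/
def GoodAt {k : ℕ} (z : Fin (k + 1) → L) : Prop :=
  ∃ t : L, t ≠ 0 ∧ ∃ w : Fin (k + 1) → V, (∀ j, (w j : L) = t * z j) ∧
    Good (fun j => residue V (w j))

theorem exists_lift_poly (p : Polynomial L) (hp : ∀ m, p.coeff m ∈ V) :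
    ∃ q : Polynomial V, q.map (algebraMap V L) = p := by
  have : p ∈ Polynomial.lifts (algebraMap V L) := by
    rw [Polynomial.lifts_iff_coeff_lifts]
    exact fun m => ⟨⟨_, hp m⟩, rfl⟩
  exact this

/-- A nonzero family of polynomials is a scalar multiple of an integral one with nonzero
reduction. -/
theorem exists_primitive_poly {ι : Type*} [Fintype ι] (W : ι → Polynomial L) (hW : W ≠ 0) :
    ∃ (t : L) (U : ι → Polynomial V), t ≠ 0 ∧
      (∀ i, (U i).map (algebraMap V L) = Polynomial.C t * W i) ∧
      (fun i => (U i).map (residue V)) ≠ 0 := by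
  classical
  obtain ⟨i0, hi0⟩ := Function.ne_iff.1 hW
  obtain ⟨p, hp, hmax⟩ := Finset.exists_max_image
    (Finset.univ.sigma fun i => (W i).support) (fun p => V.valuation ((W p.1).coeff p.2)) (by
      obtain ⟨m, hm⟩ := Polynomial.support_nonempty.2 hi0
      exact ⟨⟨i0, m⟩, by simpa using hm⟩)
  simp only [Finset.mem_sigma, Finset.mem_univ, true_and, Polynomial.mem_support_iff] at hp hmax
  set u := (W p.1).coeff p.2 with hu
  have hmem : ∀ i m, (Polynomial.C u⁻¹ * W i).coeff m ∈ V := by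
    intro i m
    rw [Polynomial.coeff_C_mul, ← V.valuation_le_one_iff, map_mul, map_inv₀]
    by_cases h0 : (W i).coeff m = 0
    · simp [h0]
    · have := hmax ⟨i, m⟩ h0
      exact inv_mul_le_one_of_le₀ this zero_le
  choose U hU using fun i => exists_lift_poly V _ (hmem i)
  refine ⟨u⁻¹, U, inv_ne_zero hp, hU, ?_⟩
  intro h
  have h1 := congrArg (fun q => Polynomial.coeff q p.2) (congrFun h p.1)
  have h2 : (U p.1).coeff p.2 = 1 := by
    apply Subtype.ext
    have := congrArg (fun q => Polynomial.coeff q p.2) (hU p.1)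
    simp only [Polynomial.coeff_map, Polynomial.coeff_C_mul, ← hu, inv_mul_cancel₀ hp] at this
    exact this
  simp [h2] at h1

theorem reduce_zero (e : Fin (r + 3) → (Fin (k + 2) → Bool))
    (c : Fin (r + 3) → Fin (k + 2 + 1) → V) (hc : ∀ i j, residue V (c i j) = 0)
    (Ψ : Fin (k + 2 + 1) → Polynomial V) (W : Fin (r + 3) → Polynomial L) (hW : W ≠ 0)
    (hz : dq (aa e (fun i j => Polynomial.C (c i j : L))
      (fun j => (Ψ j).map (algebraMap V L))) W = 0) :
    ∃ W' : Fin (r + 3) → Polynomial (ResidueField V), W' ≠ 0 ∧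
      dq (PP e fun j => (Ψ j).map (residue V)) W' = 0 := by
  obtain ⟨t, U, ht, hU, hU0⟩ := exists_primitive_poly V W hW
  refine ⟨_, hU0, ?_⟩
  have h1 : dq (aa e (fun i j => Polynomial.C (c i j)) Ψ) U = 0 := by
    apply Polynomial.map_injective (algebraMap V L) Subtype.val_injective
    rw [Polynomial.map_zero, ← Polynomial.coe_mapRingHom, ← dq_map]
    have h2 : dq (aa e (fun i j => Polynomial.C (c i j : L))
        (fun j => (Ψ j).map (algebraMap V L))) ((Polynomial.C t) • W) = 0 := by
      rw [dq_smul, hz, mul_zero]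
    rw [← h2]
    congr 1
    · funext i
      rw [aa_map]
      simp
    · funext i
      simp [hU]
  have h2 := congrArg (Polynomial.mapRingHom (residue V)) h1
  rw [← dq_map, map_zero] at h2
  rw [← h2]
  congr 1
  funext i
  rw [aa_map]
  simp [hc, aa_zero]

variable [CharZero (ResidueField V)]

/-- A rational curve of degree `N` in projective space, over which the quadric has a section,
has good reduction at `0` if it has good reduction at `∞`. -/
theorem goodAt_zero {e : Fin (r + 3) → (Fin (k + 2) → Bool)} (he : PfNumbering e)
    (hdiv : ∀ x : L, x ≠ 0 → ∀ n : ℕ, n ≠ 0 → ∃ y : L, V.valuation y ^ n = V.valuation x)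
    (c : Fin (r + 3) → Fin (k + 2 + 1) → V) (hc : ∀ i j, residue V (c i j) = 0)
    (ψ : Fin (k + 2 + 1) → Polynomial L) (W : Fin (r + 3) → Polynomial L) (hW : W ≠ 0)
    (hz : dq (aa e (fun i j => Polynomial.C (c i j : L)) ψ) W = 0)
    (N : ℕ) (hN : ∀ j, (ψ j).natDegree ≤ N) (h0 : ∃ j, (ψ j).coeff 0 ≠ 0)
    (htop : GoodAt V fun j => (ψ j).coeff N) : GoodAt V fun j => (ψ j).coeff 0 := by
  classical
  let v := V.valuation
  let a : ℕ → V.ValueGroup := fun m => Finset.univ.sup' ⟨0, Finset.mem_univ _⟩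
    fun j => v ((ψ j).coeff m)
  have hale : ∀ m j, v ((ψ j).coeff m) ≤ a m := fun m j =>
    Finset.le_sup' (fun j => v ((ψ j).coeff m)) (Finset.mem_univ j)
  have haex : ∀ m, ∃ j, a m = v ((ψ j).coeff m) := fun m => by
    obtain ⟨j, -, hj⟩ := Finset.exists_mem_eq_sup' (⟨0, Finset.mem_univ _⟩ :
      (Finset.univ : Finset (Fin (k + 2 + 1))).Nonempty) fun j => v ((ψ j).coeff m)
    exact ⟨j, hj⟩
  -- good points have coordinates of equal size
  have hgood : ∀ m (t : L) (w : Fin (k + 2 + 1) → V), (∀ j, (w j : L) = t * (ψ j).coeff m) →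
      Good (fun j => residue V (w j)) → v t * a m = 1 := by
    intro m t w hw hg
    obtain ⟨j, hj⟩ := haex m
    rw [hj, ← map_mul, ← hw j]
    have := hg.1 j
    rw [ne_eq, residue_eq_zero_iff, mem_maximalIdeal, mem_nonunits_iff, not_not] at this
    exact (V.valuation_eq_one_iff _).1 this
  refine newton_descent a N ?_ ?_ ?_ (fun m => GoodAt V fun j => (ψ j).coeff m) htop ?_ ?_
  · intro m hm
    obtain ⟨j, hj⟩ := haex m
    rw [hj, Polynomial.coeff_eq_zero_of_natDegree_lt ((hN j).trans_lt hm), map_zero]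
  · obtain ⟨j, hj⟩ := h0
    intro h
    have := hale 0 j
    rw [h] at this
    exact hj ((map_eq_zero v).1 (le_zero_iff.1 this))
  · intro x hx n hn
    obtain ⟨x, rfl⟩ := V.valuation_surjective x
    obtain ⟨y, hy⟩ := hdiv x (by rintro rfl; simp at hx) n hn
    exact ⟨_, hy⟩
  · rintro n ⟨t, ht, w, hw, hg⟩ h
    have := hgood n t w hw hg
    rw [h, mul_zero] at this
    exact zero_ne_one this
  · rintro n n' γ hγ hn' ⟨t, ht, w, hw, hg⟩ hle hgt heq hlt
    obtain ⟨b, rfl⟩ := V.valuation_surjective γ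
    have hb : b ≠ 0 := by rintro rfl; simp at hγ
    have hta := hgood n t w hw hg
    -- rescale so that the edge of the Newton polygon becomes horizontal, at height `1`
    obtain ⟨s, hs⟩ : ∃ s, s = t * (b ^ n)⁻¹ := ⟨_, rfl⟩
    have hs0 : s ≠ 0 := hs ▸ mul_ne_zero ht (inv_ne_zero (pow_ne_zero _ hb))
    have hsa : v s * (v b ^ n * a n) = 1 := by
      rw [hs, map_mul, map_inv₀, map_pow, ← hta, mul_assoc,
        inv_mul_cancel_left₀ (pow_ne_zero _ hγ)]
    have hval : ∀ m j, v (s * ((ψ j).coeff m * b ^ m)) ≤ v s * (v b ^ m * a m) := by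
      intro m j
      rw [map_mul v s, map_mul, map_pow, mul_comm (v ((ψ j).coeff m))]
      exact mul_le_mul' le_rfl (mul_le_mul' le_rfl (hale m j))
    have hmem : ∀ j m, (Polynomial.C s * (ψ j).comp (Polynomial.C b * Polynomial.X)).coeff m
        ∈ V := by
      intro j m
      rw [Polynomial.coeff_C_mul, Polynomial.comp_C_mul_X_coeff, ← V.valuation_le_one_iff]
      refine (hval m j).trans ?_
      rw [← hsa]
      exact mul_le_mul' le_rfl (hle m)
    choose Ψ hΨ using fun j => exists_lift_poly V _ (hmem j)
    have hcoeff : ∀ j m, ((Ψ j).coeff m : L) = s * ((ψ j).coeff m * b ^ m) := by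
      intro j m
      have := congrArg (fun q => Polynomial.coeff q m) (hΨ j)
      simpa [Polynomial.comp_C_mul_X_coeff] using this
    have hres0 : ∀ j m, v b ^ m * a m < v b ^ n * a n →
        ((Ψ j).map (residue V)).coeff m = 0 := by
      intro j m hm
      rw [Polynomial.coeff_map, residue_eq_zero_iff, V.valuation_lt_one_iff, hcoeff]
      refine (hval m j).trans_lt ?_
      rw [← hsa]
      exact mul_lt_mul_of_pos_left hm (zero_lt_iff.2 ((map_ne_zero v).2 hs0))
    obtain ⟨W', hW', hz'⟩ := reduce_zero V e c hc Ψ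
      (fun i => Polynomial.C ((s ^ ee e i)⁻¹) * (W i).comp (Polynomial.C b * Polynomial.X)) (by
        obtain ⟨i, hi⟩ := Function.ne_iff.1 hW
        intro h
        have h1 := congrFun h i
        simp only [Pi.zero_apply, mul_eq_zero, Polynomial.C_eq_zero, inv_eq_zero] at h1
        rcases h1 with h1 | h1
        · exact pow_ne_zero _ hs0 h1
        · apply hi
          ext m
          have := congrArg (fun q => Polynomial.coeff q m) h1
          simpa [Polynomial.comp_C_mul_X_coeff, hb] using this) (by
        have h1 := congrArg (Polynomial.compRingHom (Polynomial.C b * Polynomial.X)) hz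
        rw [← dq_map, map_zero] at h1
        have h2 : dq (aa e (fun i j => Polynomial.C (c i j : L))
            (fun j => (Ψ j).map (algebraMap V L)))
            (fun i => Polynomial.C ((s ^ ee e i)⁻¹) *
              (W i).comp (Polynomial.C b * Polynomial.X)) = Polynomial.C s *
            dq (fun i => Polynomial.compRingHom (Polynomial.C b * Polynomial.X)
              (aa e (fun i j => Polynomial.C (c i j : L)) ψ i))
              (fun i => Polynomial.compRingHom (Polynomial.C b * Polynomial.X) (W i)) := by
          simp only [dq, Finset.mul_sum]
          refine Finset.sum_congr rfl fun i _ => ?_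
          simp only [hΨ, aa_smul, aa_map, Polynomial.coe_compRingHom_apply, Polynomial.C_comp]
          have h3 : (Polynomial.C (s ^ ee e i)⁻¹ : Polynomial L) * Polynomial.C s ^ ee e i = 1 := by
            rw [← Polynomial.C_pow, ← Polynomial.C_mul, inv_mul_cancel₀ (pow_ne_zero _ hs0),
              Polynomial.C_1]
          linear_combination (Polynomial.C s * aa e (fun i j => Polynomial.C (c i j : L))
            (fun j => (ψ j).comp (Polynomial.C b * Polynomial.X)) i *
            (W i).comp (Polynomial.C b * Polynomial.X) ^ 2) *
            (Polynomial.C (s ^ ee e i)⁻¹ * Polynomial.C s ^ ee e i + 1) * h3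
        rw [h2, h1, mul_zero])
    have hkey := key_lemma he (fun j => (Ψ j).map (residue V)) W' hW' hz' n
      (fun j => Polynomial.natDegree_le_iff_coeff_eq_zero.2 fun m hm => hres0 j m (hgt m hm))
      (by
        convert hg using 2 with j
        rw [Polynomial.coeff_map]
        congr 1
        apply Subtype.ext
        rw [hcoeff, hw, hs]
        field_simp) n' (fun m hm j => hres0 j m (hlt m hm)) (by
        obtain ⟨j, hj⟩ := haex n'
        refine ⟨j, ?_⟩
        rw [Polynomial.coeff_map, ne_eq, residue_eq_zero_iff, V.valuation_lt_one_iff, hcoeff,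
          not_lt, ← hsa, ← heq, hj]
        refine le_of_eq ?_
        change _ = v _
        rw [map_mul v s, map_mul, map_pow, mul_comm (v ((ψ j).coeff n'))])
    refine ⟨s * b ^ n', mul_ne_zero hs0 (pow_ne_zero _ hb), fun j => (Ψ j).coeff n',
      fun j => ?_, by simpa only [Polynomial.coeff_map] using hkey⟩
    rw [hcoeff]; ring

end Reduction

end Newton

/-! ### Connecting a good point with a constant point by a rational curve -/

section Path
open IsLocalRing
variable {L : Type*} [Field L]

/-- The polynomial `(1 + s)^N p (s / (1 + s))`. -/
def mob (N : ℕ) (p : Polynomial L) : Polynomial L :=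
  ∑ n ∈ Finset.range (N + 1),
    Polynomial.C (p.coeff n) * (Polynomial.X ^ n * (1 + Polynomial.X) ^ (N - n))

theorem mob_natDegree_le (N : ℕ) (p : Polynomial L) : (mob N p).natDegree ≤ N := by
  refine Polynomial.natDegree_sum_le_of_forall_le _ _ fun n hn => ?_
  have hn' := Finset.mem_range.1 hn
  refine (Polynomial.natDegree_C_mul_le _ _).trans ?_
  refine Polynomial.natDegree_mul_le.trans ?_
  rw [Polynomial.natDegree_X_pow]
  have h1 : ((1 + Polynomial.X : Polynomial L) ^ (N - n)).natDegree ≤ (N - n) * 1 :=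
    Polynomial.natDegree_pow_le_of_le _ (by
      rw [add_comm]; exact (Polynomial.natDegree_X_add_C (1 : L)).le)
  omega

theorem mob_coeff_zero (N : ℕ) (p : Polynomial L) : (mob N p).coeff 0 = p.coeff 0 := by
  rw [mob, Polynomial.finsetSum_coeff, Finset.sum_eq_single 0]
  · simp [Polynomial.coeff_zero_eq_eval_zero]
  · intro n _ hn
    simp [Polynomial.mul_coeff_zero, hn.symm]
  · simp

theorem mob_coeff_top (N : ℕ) (p : Polynomial L) (hp : p.natDegree ≤ N) :
    (mob N p).coeff N = p.eval 1 := by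
  rw [mob, Polynomial.finsetSum_coeff, Polynomial.eval_eq_sum_range' (Nat.lt_succ_of_le hp)]
  refine Finset.sum_congr rfl fun n hn => ?_
  have hn' := Finset.mem_range.1 hn
  rw [Polynomial.coeff_C_mul]
  congr 1
  rw [Polynomial.coeff_X_pow_mul', if_pos (by omega), one_pow, add_comm]
  have := (Polynomial.monic_X_add_C (1 : L)).pow (N - n)
  rw [← Polynomial.C_1]
  have h2 : ((Polynomial.X + Polynomial.C 1 : Polynomial L) ^ (N - n)).natDegree = N - n := by
    rw [Polynomial.natDegree_pow, Polynomial.natDegree_X_add_C, mul_one]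
  have h3 := this.coeff_natDegree
  rwa [h2] at h3

theorem map_mob {K : Type*} [Field K] (i : Polynomial L →+* K) (x : K)
    (hx : i Polynomial.X = x) (hx1 : 1 + x ≠ 0) (N : ℕ) (p : Polynomial L)
    (hp : p.natDegree ≤ N) :
    i (mob N p) = (1 + x) ^ N * Polynomial.eval₂ (i.comp Polynomial.C) (x / (1 + x)) p := by
  rw [mob, Polynomial.eval₂_eq_sum_range' _ (Nat.lt_succ_of_le hp), map_sum, Finset.mul_sum]
  refine Finset.sum_congr rfl fun n hn => ?_
  have hn' := Finset.mem_range.1 hn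
  simp only [map_mul, map_pow, map_add, map_one, hx, RingHom.comp_apply]
  have : (1 + x) ^ N = (1 + x) ^ (N - n) * (1 + x) ^ n := by
    rw [← pow_add]; congr 1; omega
  rw [this, div_pow]
  field_simp

variable [Algebra ℂ L]

/-- A point with constant coordinates never has good reduction, as `ℂ` contains square roots. -/
theorem not_goodAt_const (V : ValuationSubring L) {k : ℕ} (z : Fin (k + 2) → ℂ) :
    ¬ GoodAt V fun j => algebraMap ℂ L (z j) := by
  rintro ⟨t, ht, w, hw, hg⟩
  dsimp only at hw
  have hu : ∀ j, V.valuation (w j) = 1 := by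
    intro j
    have := hg.1 j
    rw [ne_eq, residue_eq_zero_iff, mem_maximalIdeal, mem_nonunits_iff, not_not] at this
    exact (V.valuation_eq_one_iff _).1 this
  have hz : ∀ j, algebraMap ℂ L (z j) ≠ 0 := by
    intro j h
    have := hu j
    rw [hw, h, mul_zero, map_zero] at this
    exact zero_ne_one this
  obtain ⟨δ, hδ⟩ := IsAlgClosed.exists_pow_nat_eq (-(z 1 / z 0)) (n := 2) (by norm_num)
  have hδw : (algebraMap ℂ L δ) ^ 2 * (w 0 : L) = - (w 1 : L) := by
    rw [← map_pow, hδ, hw, hw, map_neg, map_div₀]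
    have := hz 0
    field_simp
  have hδV : algebraMap ℂ L δ ∈ V := by
    rw [← V.valuation_le_one_iff]
    have := congrArg V.valuation hδw
    rw [map_mul, Valuation.map_neg, hu, hu, mul_one, map_pow] at this
    exact ((pow_eq_one_iff.1 this).resolve_right (by norm_num)).le
  let d : V := ⟨_, hδV⟩
  have hd : d ^ 2 * w 0 = - w 1 := Subtype.ext hδw
  have hd' := congrArg (residue V) hd
  simp only [map_mul, map_pow, map_neg] at hd'
  -- the isotropic vector is supported on the indices `∅` and `{0}`
  let f : Bool → (Fin (k + 1) → Bool) := fun b => if b then sgl 0 else fun _ => false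
  have hf : Function.Injective f := by
    intro a b hab
    have := congrFun hab 0
    cases a <;> cases b <;> simp [f, sgl] at this ⊢
  let u : Bool → ResidueField V := fun b => if b then 1 else residue V d * residue V (w 0)
  have hv : dq (pfc fun j => residue V (w j)) (Function.extend f u 0) = 0 := by
    rw [dq_extend f hf]
    simp only [dq, Fintype.sum_bool, Function.comp_apply, f, u, if_true, Bool.false_eq_true,
      if_false, pfc, pc_empty, pc_sgl, slots, Fin.succ_zero_eq_one]
    linear_combination (residue V (w 0)) * hd'
  refine extend_ne_zero f hf u ?_ (hg.2 _ hv)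
  intro h
  simpa [u] using congrFun h true

/-- If the quadric has a zero over a polynomial ring `ℂ[t_1, …, t_d]`, above the point `X`, then
no specialisation of `X` has good reduction. -/
theorem no_path (V : ValuationSubring L) [CharZero (ResidueField V)] {k r : ℕ}
    {e : Fin (r + 3) → (Fin (k + 2) → Bool)} (he : PfNumbering e)
    (hdiv : ∀ x : L, x ≠ 0 → ∀ n : ℕ, n ≠ 0 → ∃ y : L, V.valuation y ^ n = V.valuation x)
    (c : Fin (r + 3) → Fin (k + 2 + 1) → ℂ) (hc : ∀ i j, V.valuation (algebraMap ℂ L (c i j)) < 1)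
    {d : ℕ} (Y : Fin (k + 2 + 1) → MvPolynomial (Fin d) ℂ) (W : Fin (r + 3) → MvPolynomial (Fin d) ℂ)
    (hW : W ≠ 0) (hz : dq (aa e (fun i j => C (c i j)) Y) W = 0) (T : Fin d → L)
    (hT : GoodAt V fun j => aeval T (Y j)) : False := by
  obtain ⟨i0, hi0⟩ := Function.ne_iff.1 hW
  have hY0 : Y 0 ≠ 0 := by
    intro h
    obtain ⟨t, ht, w, hw, hg⟩ := hT
    refine hg.1 0 ?_
    have : w 0 = 0 := Subtype.ext (by rw [hw]; simp [h])
    simp [this]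
  -- a constant point where `Y 0` and `W i0` do not vanish
  obtain ⟨T0, hT0⟩ : ∃ T0 : Fin d → ℂ, eval T0 (Y 0 * W i0) ≠ 0 := by
    by_contra hno
    push Not at hno
    exact mul_ne_zero hY0 hi0 (MvPolynomial.funext fun x => by rw [hno x, map_zero])
  rw [map_mul] at hT0
  let line : MvPolynomial (Fin d) ℂ →ₐ[ℂ] Polynomial L := aeval fun l =>
    Polynomial.C (algebraMap ℂ L (T0 l)) +
      Polynomial.X * Polynomial.C (T l - algebraMap ℂ L (T0 l))
  have hl0 : ∀ p, (line p).coeff 0 = algebraMap ℂ L (eval T0 p) := by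
    intro p
    rw [Polynomial.coeff_zero_eq_eval_zero]
    have : (Polynomial.evalRingHom (0 : L)).comp line.toRingHom =
        (algebraMap ℂ L).comp (eval T0) := by
      apply MvPolynomial.ringHom_ext
      · intro a; simp [line, Polynomial.algebraMap_apply]
      · intro l; simp [line]
    exact congrArg (fun g => g p) this
  have hl1 : ∀ p, (line p).eval 1 = aeval T p := by
    intro p
    have : (Polynomial.evalRingHom (1 : L)).comp line.toRingHom =
        (aeval T : MvPolynomial (Fin d) ℂ →ₐ[ℂ] L).toRingHom := by
      apply MvPolynomial.ringHom_ext
      · intro a; simp [line, Polynomial.algebraMap_apply]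
      · intro l; simp [line]
    exact congrArg (fun g => g p) this
  let Φ := fun j => line (Y j)
  let Ω := fun i => line (W i)
  have hzL : dq (aa e (fun i j => Polynomial.C (algebraMap ℂ L (c i j))) Φ) Ω = 0 := by
    have := congrArg line.toRingHom hz
    rw [← dq_map, map_zero] at this
    rw [← this]
    congr 1
    funext i
    rw [aa_map]
    simp [Φ, line, Polynomial.algebraMap_apply]
  let N := ∑ j, (Φ j).natDegree
  have hN : ∀ j, (Φ j).natDegree ≤ N := fun j =>
    Finset.single_le_sum (f := fun j => (Φ j).natDegree) (fun _ _ => Nat.zero_le _)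
      (Finset.mem_univ j)
  let M := ∑ i, (N * ee e i + (Ω i).natDegree)
  have hM : ∀ i, N * ee e i + (Ω i).natDegree ≤ M := fun i =>
    Finset.single_le_sum (f := fun i => N * ee e i + (Ω i).natDegree) (fun _ _ => Nat.zero_le _)
      (Finset.mem_univ i)
  let ψ := fun j => mob N (Φ j)
  let U := fun i => mob (M - N * ee e i) (Ω i)
  have hU : U ≠ 0 := by
    intro h
    have := congrArg (fun q => Polynomial.coeff q 0) (congrFun h i0)
    simp only [U, Ω, mob_coeff_zero, hl0, Pi.zero_apply, Polynomial.coeff_zero, map_eq_zero] at this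
    exact hT0 (by rw [this, mul_zero])
  have hzψ : dq (aa e (fun i j => Polynomial.C (algebraMap ℂ L (c i j))) ψ) U = 0 := by
    let K := FractionRing (Polynomial L)
    let i : Polynomial L →+* K := algebraMap _ _
    have hi : Function.Injective i := IsFractionRing.injective _ _
    let x := i Polynomial.X
    have hx1 : 1 + x ≠ 0 := by
      intro h
      have h1 : i (1 + Polynomial.X) = i 0 := by rw [map_add, map_one, map_zero]; exact h
      have h2 := congrArg (fun q => Polynomial.coeff q 1) (hi h1)
      simp [Polynomial.coeff_one] at h2
    let θ : Polynomial L →+* K := Polynomial.eval₂RingHom (i.comp Polynomial.C) (x / (1 + x))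
    apply hi
    rw [map_zero, ← dq_map]
    have h1 := congrArg θ hzL
    rw [← dq_map, map_zero] at h1
    have h2 : dq (fun a => i (aa e (fun i j => Polynomial.C (algebraMap ℂ L (c i j))) ψ a))
        (fun a => i (U a)) = ((1 : K) + x) ^ N * ((1 + x) ^ M) ^ 2 *
        dq (R := K) (fun a => θ (aa e (fun i j => Polynomial.C (algebraMap ℂ L (c i j))) Φ a))
        (fun a => θ (Ω a)) := by
      unfold dq
      rw [Finset.mul_sum]
      refine Finset.sum_congr rfl fun a _ => ?_
      have hψ : (fun j => i (ψ j)) = fun j => (1 + x) ^ N * θ (Φ j) :=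
        funext fun j => map_mob i x rfl hx1 N _ (hN j)
      have hUa : i (U a) = (1 + x) ^ (M - N * ee e a) * θ (Ω a) :=
        map_mob i x rfl hx1 _ _ (by have := hM a; omega)
      have hθC : ∀ y, θ (Polynomial.C y) = i (Polynomial.C y) := fun y => by simp [θ]
      have hpow : (1 + x) ^ M = ((1 + x) ^ N) ^ ee e a * (1 + x) ^ (M - N * ee e a) := by
        rw [← pow_mul, ← pow_add]; congr 1; have := hM a; omega
      beta_reduce
      rw [aa_map, hψ, aa_smul, hUa, aa_map, hpow]
      simp only [hθC]
      ring
    rw [h2, h1, mul_zero]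
  have hcV : ∀ i j, algebraMap ℂ L (c i j) ∈ V := fun i j =>
    (V.valuation_le_one_iff _).1 (hc i j).le
  have hgood := goodAt_zero V he hdiv (fun i j => ⟨_, hcV i j⟩) (fun i j => by
      rw [residue_eq_zero_iff, V.valuation_lt_one_iff]; exact hc i j) ψ U hU hzψ N
    (fun j => mob_natDegree_le _ _) ⟨0, by
      simp only [ψ, Φ, mob_coeff_zero, hl0]
      intro h
      rw [map_eq_zero] at h
      exact hT0 (by rw [h, zero_mul])⟩ (by
      simp only [ψ, mob_coeff_top _ _ (hN _)]
      simpa only [Φ, hl1] using hT)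
  simp only [ψ, Φ, mob_coeff_zero, hl0] at hgood
  exact not_goodAt_const V (k := k + 1) (fun j => eval T0 (Y j)) hgood

end Path

/-! ### Valuations with prescribed centre -/

/-- Every prime of a subring of a field is the centre of a valuation ring of that field. -/
theorem exists_valuation {A L E : Type*} [CommRing A] [Field L] [CommRing E] [IsDomain E]
    (α : A →+* L) (hα : Function.Injective α) (β : A →+* E) :
    ∃ V : ValuationSubring L, (∀ f, α f ∈ V) ∧ ∀ f, V.valuation (α f) < 1 ↔ β f = 0 := by
  let g : A ≃+* α.range := RingEquiv.ofBijective α.rangeRestrict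
    ⟨fun a b h => hα (congrArg Subtype.val h), α.rangeRestrict_surjective⟩
  let β' : α.range →+* E := β.comp (g.symm : α.range →+* A)
  let P : Ideal α.range := RingHom.ker β'
  have hP : P.IsPrime := RingHom.ker_isPrime β'
  obtain ⟨V, hV⟩ := (LocalSubring.ofPrime α.range P).exists_le_valuationSubring
  have hmem : ∀ f, α f ∈ V := fun f =>
    hV.1 (LocalSubring.le_ofPrime α.range P ⟨f, rfl⟩)
  refine ⟨V, hmem, fun f => ?_⟩
  let B := (LocalSubring.ofPrime α.range P).toSubring
  have hfP : g f ∈ P ↔ β f = 0 := by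
    simp [P, RingHom.mem_ker, β']
  have hunit : IsUnit (algebraMap α.range B (g f)) ↔ g f ∈ P.primeCompl :=
    IsLocalization.AtPrime.isUnit_to_map_iff B P (g f)
  have hloc := hV.2
  have h2 : IsUnit (algebraMap α.range B (g f)) ↔ IsUnit (⟨α f, hmem f⟩ : V) := by
    constructor
    · intro h
      exact h.map (Subring.inclusion hV.1)
    · intro h
      exact hloc.map_nonunit _ h
  rw [show α f = ((⟨α f, hmem f⟩ : V) : L) from rfl, ← V.valuation_lt_one_iff,
    IsLocalRing.mem_maximalIdeal, mem_nonunits_iff, ← h2, hunit, ← hfP]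
  simp [Ideal.primeCompl]

section Primitive
open IsLocalRing
variable {L : Type*} [Field L] (V : ValuationSubring L)

theorem exists_lift_mvPoly {σ : Type*} (p : MvPolynomial σ L) (hp : ∀ m, p.coeff m ∈ V) :
    ∃ q : MvPolynomial σ V, map (algebraMap V L) q = p := by
  have : p ∈ Set.range (map (algebraMap V L) : MvPolynomial σ V →+* MvPolynomial σ L) := by
    rw [mem_range_map_iff_coeffs_subset]
    intro x hx
    rw [Finset.mem_coe, mem_coeffs_iff] at hx
    obtain ⟨m, _, rfl⟩ := hx
    exact ⟨⟨_, hp m⟩, rfl⟩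
  exact this

/-- A nonzero family of polynomials is a scalar multiple of an integral one with nonzero
reduction. -/
theorem exists_primitive_mvPoly {σ ι : Type*} [Fintype ι] (W : ι → MvPolynomial σ L)
    (hW : W ≠ 0) :
    ∃ (t : L) (U : ι → MvPolynomial σ V), t ≠ 0 ∧
      (∀ i, map (algebraMap V L) (U i) = C t * W i) ∧
      (fun i => map (residue V) (U i)) ≠ 0 := by
  classical
  obtain ⟨i0, hi0⟩ := Function.ne_iff.1 hW
  obtain ⟨p, hp, hmax⟩ := Finset.exists_max_image
    (Finset.univ.sigma fun i => (W i).support) (fun p => V.valuation ((W p.1).coeff p.2)) (by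
      obtain ⟨m, hm⟩ := support_nonempty.2 hi0
      exact ⟨⟨i0, m⟩, by simpa using hm⟩)
  simp only [Finset.mem_sigma, Finset.mem_univ, true_and, mem_support_iff] at hp hmax
  set u := (W p.1).coeff p.2 with hu
  have hmem : ∀ i m, (C u⁻¹ * W i).coeff m ∈ V := by
    intro i m
    rw [coeff_C_mul, ← V.valuation_le_one_iff, map_mul, map_inv₀]
    by_cases h : (W i).coeff m = 0
    · simp [h]
    · have hpos : 0 < V.valuation u := zero_lt_iff.2 ((Valuation.ne_zero_iff _).2 hp)
      rw [inv_mul_le_iff₀ hpos, mul_one]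
      exact hmax ⟨i, m⟩ h
  choose U hU using fun i => exists_lift_mvPoly V _ (hmem i)
  refine ⟨u⁻¹, U, inv_ne_zero hp, hU, fun h => ?_⟩
  have h1 := congrArg (coeff p.2) (congrFun h p.1)
  simp only [coeff_map, Pi.zero_apply, coeff_zero] at h1
  have h2 : (U p.1).coeff p.2 = 1 := by
    apply Subtype.val_injective
    have := congrArg (coeff p.2) (hU p.1)
    rw [coeff_map, coeff_C_mul, ← hu, inv_mul_cancel₀ hp] at this
    exact this
  rw [h2, map_one] at h1
  exact one_ne_zero h1

end Primitive

/-! ### Anisotropy of the generic Pfister form -/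

/-- A diagonal form over a polynomial ring is anisotropic if its coefficients are monomials
with exponents that are pairwise distinct modulo `2`: leading terms cannot cancel. -/
theorem aniso_monomial {σ ι E : Type*} [Fintype ι] [Finite σ] [CommRing E] [IsDomain E]
    (s : ι → σ →₀ ℕ) (hs : ∀ i j, i ≠ j → ∃ v, s i v % 2 ≠ s j v % 2) :
    Aniso (fun i => monomial (s i) (1 : E)) := by
  classical
  intro v hv
  by_contra hne
  obtain ⟨N, ⟨eqv⟩⟩ := Finite.exists_equiv_fin σ
  letI : LinearOrder σ := LinearOrder.lift' eqv eqv.injective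
  let m : MonomialOrder σ := MonomialOrder.lex
  obtain ⟨i0, hi0⟩ := Function.ne_iff.1 hne
  obtain ⟨i, hi, hmax⟩ := Finset.exists_max_image (Finset.univ.filter fun i => v i ≠ 0)
    (fun i => m.toSyn (s i + 2 • m.degree (v i))) ⟨i0, by simpa using hi0⟩
  simp only [Finset.mem_filter, Finset.mem_univ, true_and] at hi hmax
  have hdeg : ∀ j, m.degree (v j ^ 2) = 2 • m.degree (v j) := fun j => m.degree_pow (v j) 2
  have h0 := congrArg (coeff (s i + 2 • m.degree (v i))) hv
  rw [dq, coeff_sum, Finset.sum_eq_single i, coeff_zero, coeff_monomial_mul, one_mul, ← hdeg] at h0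
  · exact (m.leadingCoeff_ne_zero_iff.2 (pow_ne_zero 2 hi)) h0
  · intro j _ hj
    by_cases hvj : v j = 0
    · simp [hvj]
    rw [coeff_monomial_mul']
    split_ifs with hle
    · rw [one_mul]
      apply m.coeff_eq_zero_of_lt
      rw [hdeg]
      have h1 := hmax j hvj
      have h2 : s j + 2 • m.degree (v j) ≠ s i + 2 • m.degree (v i) := by
        intro h
        obtain ⟨w, hw⟩ := hs j i hj
        have := DFunLike.congr_fun h w
        simp only [Finsupp.add_apply, Finsupp.smul_apply, smul_eq_mul] at this
        omega
      have h3 := lt_of_le_of_ne h1 (fun h => h2 (m.toSyn.injective h))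
      have h4 : s i + 2 • m.degree (v i) = s j + (s i + 2 • m.degree (v i) - s j) :=
        (add_tsub_cancel_of_le hle).symm
      rw [h4, map_add, map_add] at h3
      exact lt_of_add_lt_add_left h3
    · rfl
  · simp

theorem aniso_pfc_X {σ E : Type*} [Finite σ] [CommRing E] [IsDomain E] {k : ℕ}
    (ξ : Fin (k + 1) → σ) (hξ : Function.Injective ξ) :
    Aniso (pfc (fun j => (X (ξ j) : MvPolynomial σ E))) := by
  classical
  let s : (Fin k → Bool) → σ →₀ ℕ := fun ε =>
    ∑ i, if ε i then Finsupp.single (ξ i.succ) 1 + Finsupp.single (ξ 0) 1 else 0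
  have h1 : pfc (fun j => (X (ξ j) : MvPolynomial σ E)) = fun ε => monomial (s ε) 1 := by
    funext ε
    simp only [s, pfc, pc, slots, monomial_sum_one]
    refine Finset.prod_congr rfl fun i _ => ?_
    split_ifs
    · simp [X, monomial_mul]
    · simp
  have h2 : ∀ ε i, s ε (ξ i.succ) = if ε i then 1 else 0 := by
    intro ε i
    simp only [s, Finsupp.finsetSum_apply]
    rw [Finset.sum_eq_single i]
    · split_ifs
      · simp [Finsupp.single_apply, hξ.eq_iff]
      · simp
    · intro j _ hj
      split_ifs
      · simp [Finsupp.single_apply, hξ.eq_iff, hj]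
      · simp
    · simp
  rw [h1]
  refine aniso_monomial s fun ε δ h => ?_
  obtain ⟨i, hi⟩ := Function.ne_iff.1 h
  refine ⟨ξ i.succ, ?_⟩
  rw [h2, h2]
  cases h3 : ε i <;> cases h4 : δ i <;> simp_all

/-! ### Quadratic extensions of polynomial rings -/

/-- The ring `R[√a]`. -/
abbrev QA (R : Type*) [CommRing R] (a : R) : Type _ := QuadraticAlgebra R a 0

section QA
variable {R S : Type*} [CommRing R] [CommRing S]

/-- The map `R[√a] → S[√b]` induced by a ring homomorphism sending `a` to `b`. -/
def qmap (f : R →+* S) {a : R} {b : S} (h : f a = b) : QA R a →+* QA S b where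
  toFun z := ⟨f z.re, f z.im⟩
  map_one' := by ext <;> simp [QuadraticAlgebra.re_one, QuadraticAlgebra.im_one]
  map_zero' := by ext <;> simp
  map_add' x y := by ext <;> simp
  map_mul' x y := by ext <;> simp [h]

@[simp] theorem qmap_re (f : R →+* S) {a : R} {b : S} (h : f a = b) (z : QA R a) :
    (qmap f h z).re = f z.re := rfl

@[simp] theorem qmap_im (f : R →+* S) {a : R} {b : S} (h : f a = b) (z : QA R a) :
    (qmap f h z).im = f z.im := rfl

theorem qmap_injective (f : R →+* S) (hf : Function.Injective f) {a : R} {b : S} (h : f a = b) :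
    Function.Injective (qmap f h) := fun x y hxy =>
  QuadraticAlgebra.ext (hf (congrArg QuadraticAlgebra.re hxy))
    (hf (congrArg QuadraticAlgebra.im hxy))

/-- The map `R[√a] → S` sending `√a` to a given square root of the image of `a`. -/
def qev (f : R →+* S) {a : R} (s : S) (h : s * s = f a) : QA R a →+* S where
  toFun z := f z.re + s * f z.im
  map_one' := by simp [QuadraticAlgebra.re_one, QuadraticAlgebra.im_one]
  map_zero' := by simp
  map_add' x y := by simp; ring
  map_mul' x y := by
    simp only [QuadraticAlgebra.re_mul, QuadraticAlgebra.im_mul, map_add, map_mul, ← h]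
    simp; ring

theorem qev_apply (f : R →+* S) {a : R} (s : S) (h : s * s = f a) (z : QA R a) :
    qev f s h z = f z.re + s * f z.im := rfl

/-- `a` is not a square in the fraction field of `R`. -/
def NSq (a : R) : Prop := ∀ u v : R, u * u = a * (v * v) → v = 0

theorem NSq.isDomain [IsDomain R] {a : R} (ha : NSq a) : IsDomain (QA R a) := by
  have key : ∀ z : QA R a, z.re * z.re = a * (z.im * z.im) → z = 0 := by
    intro z hz
    have h1 := ha _ _ hz
    rw [h1, mul_zero, mul_zero, mul_self_eq_zero] at hz
    exact QuadraticAlgebra.ext hz h1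
  haveI : NoZeroDivisors (QA R a) := ⟨by
    intro z w h
    have h1 := congrArg QuadraticAlgebra.norm h
    rw [map_mul, QuadraticAlgebra.norm_zero, mul_eq_zero] at h1
    refine h1.imp (fun h => key _ ?_) (fun h => key _ ?_) <;>
    · rw [QuadraticAlgebra.norm_def] at h
      linear_combination h⟩
  exact NoZeroDivisors.to_isDomain _

theorem nsq_of_prime [IsDomain R] [WfDvdMonoid R] {p d : R} (hp : Prime p) (hd : ¬ p ∣ d) :
    NSq (p * d) := by
  intro u v h
  by_contra hv
  have hd0 : d ≠ 0 := fun h => hd (h ▸ dvd_zero p)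
  have hu : u ≠ 0 := by
    rintro rfl
    rw [mul_zero] at h
    exact mul_ne_zero (mul_ne_zero hp.ne_zero hd0) (mul_ne_zero hv hv) h.symm
  have hfu := FiniteMultiplicity.of_not_isUnit hp.not_isUnit hu
  have hfv := FiniteMultiplicity.of_not_isUnit hp.not_isUnit hv
  have h1 := congrArg (emultiplicity p) h
  rw [emultiplicity_mul hp, emultiplicity_mul hp, emultiplicity_mul hp, emultiplicity_mul hp,
    emultiplicity_eq_zero.2 hd, hfu.emultiplicity_eq_multiplicity,
    hfv.emultiplicity_eq_multiplicity, (FiniteMultiplicity.of_not_isUnit hp.not_isUnit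
      hp.ne_zero).emultiplicity_self] at h1
  norm_cast at h1
  omega

end QA

section Residue
open IsLocalRing
variable {κ : Type*} [Field κ] [CharZero κ] {k : ℕ}

/-- `-x_0 x_1 F(x)`, the negative of the product of the first two coefficients of the
degenerate quadric. -/
def DD {R : Type*} [CommRing R] (x : Fin (k + 2 + 1) → R) : R := -(x 0 * FF x * x 1)

theorem DD_map {R S : Type*} [CommRing R] [CommRing S] (f : R →+* S) (x : Fin (k + 2 + 1) → R) :
    f (DD x) = DD (fun j => f (x j)) := by
  simp [DD, FF_map]

theorem nsq_DD {σ : Type*} [Finite σ] (ξ : Fin (k + 2 + 1) → σ) (hξ : Function.Injective ξ) :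
    NSq (DD fun j => (X (ξ j) : MvPolynomial σ κ)) := by
  classical
  have h : DD (fun j => (X (ξ j) : MvPolynomial σ κ)) =
      X (ξ 1) * -(X (ξ 0) * FF (fun j => (X (ξ j) : MvPolynomial σ κ))) := by
    rw [DD]; ring
  rw [h]
  refine nsq_of_prime X_prime ?_
  rintro ⟨g, hg⟩
  have h1 := congrArg (eval (fun v => if v = ξ 1 then (0 : κ) else 1)) hg
  have h2 : ∑ j, (if ξ j = ξ 1 then (0 : κ) else 1) = k + 2 := by
    simp only [hξ.eq_iff]
    rw [Finset.sum_ite]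
    simp [Finset.filter_ne']
  simp only [map_neg, map_mul, FF_map, eval_X, FF, h2] at h1
  simp [hξ.eq_iff] at h1
  have h3 : (k : κ) + 2 ≠ 0 := by exact_mod_cast Nat.succ_ne_zero (k + 1)
  refine h3 ?_
  rw [← h2]
  simpa [hξ.eq_iff] using h1

/-- A valuation ring of a field of characteristic `0` with residue characteristic `3`. -/
theorem exists_three_adic : ∃ V : ValuationSubring κ,
    (3 : ResidueField V) = 0 ∧ (2 : ResidueField V) ≠ 0 := by
  haveI : Fact (Nat.Prime 3) := ⟨Nat.prime_three⟩
  obtain ⟨V, hV, hV'⟩ := exists_valuation (Int.castRingHom κ) Int.cast_injective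
    (Int.castRingHom (ZMod 3))
  refine ⟨V, ?_, ?_⟩
  · have h := (hV' 3).2 (by decide)
    have h1 : ((3 : V) : κ) = Int.castRingHom κ 3 := by simp; rfl
    rw [← h1, ← V.valuation_lt_one_iff, ← residue_eq_zero_iff, map_ofNat] at h
    exact h
  · intro h
    have h1 : ((2 : V) : κ) = Int.castRingHom κ 2 := by simp; rfl
    rw [← map_ofNat (residue V) 2, residue_eq_zero_iff, V.valuation_lt_one_iff, h1, hV'] at h
    revert h; decide

theorem algebraMap_dq_qev {R S : Type*} [CommRing R] [CommRing S] {ι : Type*} [Fintype ι]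
    (φ : R →+* S) (a : ι → R) (v : ι → R) (h : dq a v = 0) :
    dq (fun i => φ (a i)) (fun i => φ (v i)) = 0 := by
  rw [dq_map, h, map_zero]

/-- The generic Pfister form stays anisotropic over `κ(x)(√(-x_0 x_1 F))`: modulo `3`, the
element `-x_0 x_1 F` becomes a square. -/
theorem aniso_pfc_QA {σ : Type*} [Finite σ] (ξ : Fin (k + 2 + 1) → σ)
    (hξ : Function.Injective ξ) :
    Aniso (pfc fun j => algebraMap (MvPolynomial σ κ)
      (QA _ (DD fun j => (X (ξ j) : MvPolynomial σ κ))) (X (ξ j))) := by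
  intro v hv
  by_contra hne
  obtain ⟨V, h3, h2⟩ := exists_three_adic (κ := κ)
  let W : (Fin (k + 2) → Bool) ⊕ (Fin (k + 2) → Bool) → MvPolynomial σ κ :=
    Sum.elim (fun ε => (v ε).re) (fun ε => (v ε).im)
  have hW : W ≠ 0 := by
    intro h
    apply hne
    funext ε
    exact QuadraticAlgebra.ext (congrFun h (Sum.inl ε)) (congrFun h (Sum.inr ε))
  obtain ⟨t, U, -, hU, hUne⟩ := exists_primitive_mvPoly V W hW
  let xV : Fin (k + 2 + 1) → MvPolynomial σ V := fun j => X (ξ j)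
  have hmap : map (algebraMap V κ) (DD xV) = DD (fun j => (X (ξ j) : MvPolynomial σ κ)) := by
    rw [DD_map]; simp [xV]
  let u : (Fin (k + 2) → Bool) → QA _ (DD xV) := fun ε => ⟨U (Sum.inl ε), U (Sum.inr ε)⟩
  have hu : dq (pfc fun j => algebraMap _ (QA _ (DD xV)) (xV j)) u = 0 := by
    apply qmap_injective (map (algebraMap V κ)) (map_injective _ Subtype.val_injective) hmap
    rw [map_zero, ← dq_map]
    have h1 : (fun ε => qmap (map (algebraMap V κ)) hmap (u ε)) =
        fun ε => algebraMap (MvPolynomial σ κ)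
      (QA _ (DD fun j => (X (ξ j) : MvPolynomial σ κ))) (C t) * v ε := by
      funext ε
      ext
      · simp [u, hU, W]
      · simp [u, hU, W]
    have h4 : (fun ε => qmap (map (algebraMap V κ)) hmap
        (pfc (fun j => algebraMap _ (QA _ (DD xV)) (xV j)) ε)) =
        pfc fun j => algebraMap (MvPolynomial σ κ)
      (QA _ (DD fun j => (X (ξ j) : MvPolynomial σ κ))) (X (ξ j)) := by
      funext ε
      rw [pfc_map]
      congr 1
      funext j
      ext <;> simp [xV]
    rw [h1, h4]
    exact (dq_smul _ v _).trans (by rw [hv, mul_zero])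
  let x' : Fin (k + 2 + 1) → MvPolynomial σ (ResidueField V) := fun j => X (ξ j)
  let P : MvPolynomial σ (ResidueField V) := x' 0 * x' 1 * ∏ j, x' j
  have hP0 : P ≠ 0 := by
    refine mul_ne_zero (mul_ne_zero (X_ne_zero _) (X_ne_zero _)) ?_
    exact Finset.prod_ne_zero_iff.2 fun j _ => X_ne_zero _
  have hP : P * P = map (residue V) (DD xV) := by
    have h9 : (9 : MvPolynomial σ (ResidueField V)) = 0 := by
      have : (C 3 : MvPolynomial σ (ResidueField V)) = 3 := map_ofNat C 3
      rw [h3, map_zero] at this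
      linear_combination (-3) * this
    rw [DD_map]
    have : (fun j => map (residue V) (xV j)) = x' := by funext j; simp [xV, x']
    rw [this, DD, FF, h9]
    ring
  have hP' : (-P) * (-P) = map (residue V) (DD xV) := by rw [← hP]; ring
  have key : ∀ (s : MvPolynomial σ (ResidueField V)) (hs : s * s = map (residue V) (DD xV)) ε,
      map (residue V) (U (Sum.inl ε)) + s * map (residue V) (U (Sum.inr ε)) = 0 := by
    intro s hs ε
    have h1 := algebraMap_dq_qev (qev _ s hs) _ _ hu
    have h4 : (fun ε => qev _ s hs (pfc (fun j => algebraMap _ (QA _ (DD xV)) (xV j)) ε)) =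
        pfc x' := by
      funext ε
      rw [pfc_map]
      congr 1
      funext j
      simp [qev_apply, xV, x']
    rw [h4] at h1
    exact congrFun (aniso_pfc_X ξ hξ _ h1) ε
  have h2' : (2 : MvPolynomial σ (ResidueField V)) ≠ 0 := by
    rw [← map_ofNat C 2]
    exact fun h => h2 (C_injective _ _ (h.trans (map_zero C).symm))
  apply hUne
  funext i
  rcases i with ε | ε
  · have h1 := key P hP ε
    have h4 := key (-P) hP' ε
    apply mul_left_cancel₀ h2'
    simp only [Pi.zero_apply, mul_zero]
    linear_combination h1 + h4
  · have h1 := key P hP ε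
    have h4 := key (-P) hP' ε
    apply mul_left_cancel₀ (mul_ne_zero h2' hP0)
    simp only [Pi.zero_apply, mul_zero]
    linear_combination h1 - h4

end Residue

/-! ### A valuation for which the generic point is good -/

theorem qmap_algebraMap {R S : Type*} [CommRing R] [CommRing S] (f : R →+* S) {a : R} {b : S}
    (h : f a = b) (z : R) :
    qmap f h (algebraMap R (QA R a) z) = algebraMap S (QA S b) (f z) :=
  QuadraticAlgebra.ext rfl (map_zero f)

theorem QA_algebraMap_mul {R : Type*} [CommRing R] {a : R} (s : R) (z : QA R a) :
    algebraMap R (QA R a) s * z = ⟨s * z.re, s * z.im⟩ := by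
  ext <;> simp

theorem div_mul_aux {K : Type*} [Field K] (l f m g : K) (hm : m ≠ 0) (hg : g ≠ 0) :
    l * f / (m * g) * g = l * m⁻¹ * f := by
  field_simp

section MainVal
open IsLocalRing
variable {k r : ℕ} {σ : Type*} [Finite σ]

/-- The element `-a_0 a_1` over the base, for the generic coordinates `x_j = X (ξ j)`. -/
def Dgen {R : Type*} [CommRing R] (e : Fin (r + 3) → (Fin (k + 2) → Bool))
    (c : Fin (r + 3) → Fin (k + 2 + 1) → R) (ξ : Fin (k + 2 + 1) → σ) : MvPolynomial σ R :=
  -(aa e (fun i j => C (c i j)) (fun j => X (ξ j)) 0 *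
    aa e (fun i j => C (c i j)) (fun j => X (ξ j)) 1)

theorem Dgen_map {R S : Type*} [CommRing R] [CommRing S] (f : R →+* S)
    (e : Fin (r + 3) → (Fin (k + 2) → Bool))
    (c : Fin (r + 3) → Fin (k + 2 + 1) → R) (ξ : Fin (k + 2 + 1) → σ) :
    map f (Dgen e c ξ) = Dgen e (fun i j => f (c i j)) ξ := by
  simp only [Dgen, map_neg, map_mul, aa_map, map_C, map_X]

theorem Dgen_zero {R : Type*} [CommRing R]
    (e : Fin (r + 3) → (Fin (k + 2) → Bool)) (ξ : Fin (k + 2 + 1) → σ) :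
    Dgen e (fun _ _ => 0) ξ = DD (fun j => (X (ξ j) : MvPolynomial σ R)) := by
  simp only [Dgen, map_zero, aa_zero, DD, PP]
  simp

theorem Dgen_residue (e : Fin (r + 3) → (Fin (k + 2) → Bool)) (ξ : Fin (k + 2 + 1) → σ)
    (O : ValuationSubring ℂ) (c : Fin (r + 3) → Fin (k + 2 + 1) → O) (hc : ∀ i j, residue O (c i j) = 0) :
    map (residue O) (Dgen e c ξ) = DD (fun j => (X (ξ j) : MvPolynomial σ (ResidueField O))) := by
  rw [Dgen_map, ← Dgen_zero e]
  simp only [hc]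

theorem Dgen_complex (e : Fin (r + 3) → (Fin (k + 2) → Bool)) (ξ : Fin (k + 2 + 1) → σ)
    (O : ValuationSubring ℂ) (c : Fin (r + 3) → Fin (k + 2 + 1) → O) :
    map (algebraMap O ℂ) (Dgen e c ξ) = Dgen e (fun i j => (c i j : ℂ)) ξ := by
  rw [Dgen_map]; rfl

theorem nsq_Dgen (e : Fin (r + 3) → (Fin (k + 2) → Bool)) (ξ : Fin (k + 2 + 1) → σ)
    (hξ : Function.Injective ξ) (O : ValuationSubring ℂ) [CharZero (ResidueField O)]
    (c : Fin (r + 3) → Fin (k + 2 + 1) → O) (hc : ∀ i j, residue O (c i j) = 0) :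
    NSq (Dgen e (fun i j => (c i j : ℂ)) ξ) := by
  intro u v h
  by_contra hv
  obtain ⟨t, U, ht, hU, hUne⟩ := exists_primitive_mvPoly O ![u, v] (fun h => hv (congrFun h 1))
  have hU0 := hU 0
  have hU1 := hU 1
  simp only [Matrix.cons_val_zero, Matrix.cons_val_one] at hU0 hU1
  have h1 : U 0 * U 0 = Dgen e c ξ * (U 1 * U 1) := by
    apply map_injective (algebraMap O ℂ) Subtype.val_injective
    rw [map_mul, map_mul, map_mul, hU0, hU1, Dgen_complex]
    linear_combination (C t * C t) * h
  have h2 := congrArg (map (residue O)) h1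
  rw [map_mul, map_mul, map_mul, Dgen_residue e ξ O c hc] at h2
  have h3 := nsq_DD ξ hξ _ _ h2
  rw [h3, mul_zero, mul_zero, mul_self_eq_zero] at h2
  apply hUne
  funext i
  fin_cases i
  · exact h2
  · exact h3

/-- The Gauss-type valuation on `ℂ(x, …)(√(-a_0 a_1))` extending a valuation of `ℂ` for which
the coefficients `c` are small. -/
theorem exists_main_valuation (e : Fin (r + 3) → (Fin (k + 2) → Bool)) (ξ : Fin (k + 2 + 1) → σ)
    (hξ : Function.Injective ξ) (O : ValuationSubring ℂ) [CharZero (ResidueField O)]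
    (c : Fin (r + 3) → Fin (k + 2 + 1) → O) (hc : ∀ i j, residue O (c i j) = 0)
    [IsDomain (QA _ (Dgen e (fun i j => (c i j : ℂ)) ξ))] :
    ∃ V : ValuationSubring (FractionRing (QA _ (Dgen e (fun i j => (c i j : ℂ)) ξ))),
      CharZero (ResidueField V) ∧
      (∀ x, x ≠ 0 → ∀ n : ℕ, n ≠ 0 → ∃ y, V.valuation y ^ n = V.valuation x) ∧
      (∀ i j, V.valuation (algebraMap ℂ _ (c i j : ℂ)) < 1) ∧
      GoodAt V (fun j => algebraMap (QA _ (Dgen e (fun i j => (c i j : ℂ)) ξ)) _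
        (algebraMap (MvPolynomial σ ℂ) _ (X (ξ j)))) := by
  set M := QA _ (Dgen e (fun i j => (c i j : ℂ)) ξ) with hM
  let L := FractionRing M
  let E := QA _ (DD (fun j => (X (ξ j) : MvPolynomial σ (ResidueField O))))
  let A := QA _ (Dgen e c ξ)
  haveI : IsDomain E := (nsq_DD ξ hξ).isDomain
  let ι : A →+* M := qmap (map (algebraMap O ℂ)) (Dgen_complex e ξ O c)
  let β : A →+* E := qmap (map (residue O)) (Dgen_residue e ξ O c hc)
  let α : A →+* L := (algebraMap M L).comp ι
  have hι : Function.Injective ι :=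
    qmap_injective _ (map_injective _ Subtype.val_injective) _
  have hα : Function.Injective α := (IsFractionRing.injective M L).comp hι
  obtain ⟨V, hV, hV'⟩ := exists_valuation α hα β
  have hle : ∀ f, V.valuation (α f) ≤ 1 := fun f => (V.valuation_le_one_iff _).2 (hV f)
  have hone : ∀ f, β f ≠ 0 → V.valuation (α f) = 1 := fun f hf =>
    le_antisymm (hle f) (not_lt.1 fun h => hf ((hV' f).1 h))
  have hαC : ∀ a : O, α (algebraMap (MvPolynomial σ O) A (C a)) = algebraMap ℂ L (a : ℂ) := by
    intro a
    have h1 : ι (algebraMap (MvPolynomial σ O) A (C a)) = algebraMap ℂ M (a : ℂ) := by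
      refine (qmap_algebraMap _ _ _).trans ?_
      rw [map_C]; rfl
    show algebraMap M L (ι _) = _
    rw [h1, IsScalarTower.algebraMap_apply ℂ M L]
  have hβC : ∀ a : O, β (algebraMap (MvPolynomial σ O) A (C a)) = 0 ↔ residue O a = 0 := by
    intro a
    have h1 : β (algebraMap (MvPolynomial σ O) A (C a)) = algebraMap (MvPolynomial σ (ResidueField O)) E (C (residue O a)) := by
      refine (qmap_algebraMap _ _ _).trans ?_
      rw [map_C]
    rw [h1]
    constructor
    · intro h
      have := congrArg QuadraticAlgebra.re h
      rw [QuadraticAlgebra.algebraMap_re, QuadraticAlgebra.re_zero] at this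
      exact C_injective _ _ (this.trans (map_zero C).symm)
    · intro h
      rw [h, map_zero, map_zero]
  have hX : ∀ j, α (algebraMap (MvPolynomial σ O) A (X (ξ j))) =
      algebraMap M L (algebraMap (MvPolynomial σ ℂ) M (X (ξ j))) := by
    intro j
    show algebraMap M L (ι _) = _
    refine congrArg _ ((qmap_algebraMap _ _ _).trans ?_)
    rw [map_X]
  have hβX : ∀ j, β (algebraMap (MvPolynomial σ O) A (X (ξ j))) =
      algebraMap (MvPolynomial σ (ResidueField O)) E (X (ξ j)) := by
    intro j
    refine (qmap_algebraMap _ _ _).trans ?_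
    rw [map_X]
  -- every nonzero element of `M` is a constant times an element with nonzero reduction
  have hprim : ∀ z : M, z ≠ 0 → ∃ (l : ℂ) (f : A), l ≠ 0 ∧ β f ≠ 0 ∧
      algebraMap M L z = algebraMap ℂ L l * α f := by
    intro z hz
    obtain ⟨t, U, ht, hU, hUne⟩ := exists_primitive_mvPoly O ![z.re, z.im] (fun h => hz
      (QuadraticAlgebra.ext (congrFun h 0) (congrFun h 1)))
    have hU0 := hU 0
    have hU1 := hU 1
    simp only [Matrix.cons_val_zero, Matrix.cons_val_one] at hU0 hU1
    refine ⟨t⁻¹, ⟨U 0, U 1⟩, inv_ne_zero ht, fun h => hUne ?_, ?_⟩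
    · funext i
      fin_cases i
      · exact congrArg QuadraticAlgebra.re h
      · exact congrArg QuadraticAlgebra.im h
    · have h1 : ι ⟨U 0, U 1⟩ = algebraMap (MvPolynomial σ ℂ) M (C t) * z := by
        exact (QuadraticAlgebra.ext hU0 hU1).trans (QA_algebraMap_mul _ _).symm
      have h2 : algebraMap (MvPolynomial σ ℂ) M (C t) = algebraMap ℂ M t := rfl
      show _ = _ * algebraMap M L (ι _)
      rw [h1, h2, map_mul, ← IsScalarTower.algebraMap_apply ℂ M L, ← mul_assoc, ← map_mul,
        inv_mul_cancel₀ ht, map_one, one_mul]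
  have hfrac : ∀ y : L, y ≠ 0 → ∃ (l : ℂ) (f g : A), l ≠ 0 ∧ β f ≠ 0 ∧ β g ≠ 0 ∧
      y * α g = algebraMap ℂ L l * α f := by
    intro y hy
    obtain ⟨p, q, hq, rfl⟩ := IsFractionRing.div_surjective (A := M) y
    have hq0 : q ≠ 0 := nonZeroDivisors.ne_zero hq
    have hp0 : p ≠ 0 := by rintro rfl; simp at hy
    obtain ⟨l, f, hl, hf, h1⟩ := hprim p hp0
    obtain ⟨m, g, hm, hg, h2⟩ := hprim q hq0
    refine ⟨l * m⁻¹, f, g, mul_ne_zero hl (inv_ne_zero hm), hf, hg, ?_⟩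
    have hαg : α g ≠ 0 := fun h => hg (by rw [hα (h.trans (map_zero α).symm), map_zero])
    have hm' : algebraMap ℂ L m ≠ 0 := (map_ne_zero _).2 hm
    rw [h1, h2, map_mul, map_inv₀]
    exact div_mul_aux _ _ _ _ hm' hαg
  have hval : ∀ (y : L) (l : ℂ) (f g : A), β f ≠ 0 → β g ≠ 0 →
      y * α g = algebraMap ℂ L l * α f → V.valuation y = V.valuation (algebraMap ℂ L l) := by
    intro y l f g hf hg h
    have := congrArg V.valuation h
    rwa [map_mul, map_mul, hone f hf, hone g hg, mul_one, mul_one] at this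
  have hO : ∀ l : ℂ, V.valuation (algebraMap ℂ L l) ≤ 1 → l ∈ O := by
    intro l hl
    by_contra hlO
    have h1 : (1 : _) < O.valuation l := not_le.1 fun h => hlO ((O.valuation_le_one_iff _).1 h)
    have hl0 : l ≠ 0 := fun h => hlO (h ▸ O.zero_mem)
    have h2 : O.valuation l⁻¹ < 1 := by
      rw [map_inv₀]; exact inv_lt_one_of_one_lt₀ h1
    have h3 : l⁻¹ ∈ O := (O.valuation_le_one_iff _).1 h2.le
    have h4 : residue O ⟨l⁻¹, h3⟩ = 0 := by
      rw [residue_eq_zero_iff, O.valuation_lt_one_iff]; exact h2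
    have h5 := (hV' _).2 ((hβC ⟨l⁻¹, h3⟩).2 h4)
    rw [hαC] at h5
    have h6 : V.valuation (algebraMap ℂ L l⁻¹) * V.valuation (algebraMap ℂ L l) = 1 := by
      rw [← map_mul, ← map_mul, inv_mul_cancel₀ hl0, map_one, map_one]
    have h7 := mul_le_mul_right hl (V.valuation (algebraMap ℂ L l⁻¹))
    have h8 : (1 : _) ≤ V.valuation (algebraMap ℂ L l⁻¹) := by
      rw [← h6]; simpa using h7
    exact absurd h5 (not_lt.2 h8)
  have hrepr : ∀ y ∈ V, ∃ p g : A, β g ≠ 0 ∧ y * α g = α p := by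
    intro y hy
    by_cases hy0 : y = 0
    · exact ⟨0, 1, by simp, by simp [hy0]⟩
    obtain ⟨l, f, g, hl, hf, hg, h⟩ := hfrac y hy0
    have h1 := hval y l f g hf hg h
    have hlO : l ∈ O := hO l (h1 ▸ (V.valuation_le_one_iff _).2 hy)
    refine ⟨algebraMap (MvPolynomial σ O) A (C ⟨l, hlO⟩) * f, g, hg, ?_⟩
    rw [map_mul, hαC, h]
  refine ⟨V, ?_, ?_, ?_, ?_⟩
  · refine charZero_of_inj_zero fun n hn => ?_
    have h1 : V.valuation (α (n : A)) < 1 := by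
      have : ((n : V) : L) = α (n : A) := by rw [map_natCast]; rfl
      rw [← this, ← V.valuation_lt_one_iff, ← residue_eq_zero_iff, map_natCast, hn]
    have h2 := (hV' _).1 h1
    rw [map_natCast] at h2
    have h3 := congrArg QuadraticAlgebra.re h2
    rw [QuadraticAlgebra.re_natCast, QuadraticAlgebra.re_zero] at h3
    exact_mod_cast h3
  · intro x hx n hn
    obtain ⟨l, f, g, hl, hf, hg, h⟩ := hfrac x hx
    obtain ⟨m, hm⟩ := IsAlgClosed.exists_pow_nat_eq l (Nat.pos_of_ne_zero hn)
    refine ⟨algebraMap ℂ L m, ?_⟩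
    rw [hval x l f g hf hg h, ← map_pow, ← map_pow, hm]
  · intro i j
    rw [← hαC, hV', hβC, hc]
  · refine ⟨1, one_ne_zero, fun j => ⟨_, hV (algebraMap (MvPolynomial σ O) A (X (ξ j)))⟩,
      fun j => ?_, ?_, ?_⟩
    · rw [one_mul]; exact hX j
    · intro j h
      rw [residue_eq_zero_iff, V.valuation_lt_one_iff, hV', hβX] at h
      have := congrArg QuadraticAlgebra.re h
      exact X_ne_zero _ this
    · intro v hv
      classical
      choose y hy using fun ε => residue_surjective (v ε)
      choose p g hg hpg using fun ε => hrepr (y ε : L) (y ε).2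
      let G : A := ∏ ε, g ε
      let p' : (Fin (k + 2) → Bool) → A := fun ε => p ε * ∏ δ ∈ Finset.univ.erase ε, g δ
      have hG : β G ≠ 0 := by
        rw [map_prod]; exact Finset.prod_ne_zero_iff.2 fun ε _ => hg ε
      have hp' : ∀ ε, α (p' ε) = (y ε : L) * α G := by
        intro ε
        rw [map_mul, ← hpg, mul_assoc, ← map_mul, Finset.mul_prod_erase _ _ (Finset.mem_univ ε)]
      let xV : Fin (k + 2 + 1) → V := fun j =>
        ⟨_, hV (algebraMap (MvPolynomial σ O) A (X (ξ j)))⟩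
      have h1 : residue V (dq (pfc xV) y) = 0 := by
        rw [← dq_map, ← hv]
        congr 1
        · funext ε
          rw [pfc_map]
        · funext ε
          exact hy ε
      rw [residue_eq_zero_iff, V.valuation_lt_one_iff] at h1
      have h2 : α (dq (pfc fun j => algebraMap (MvPolynomial σ O) A (X (ξ j))) p') =
          α G ^ 2 * ((dq (pfc xV) y : V) : L) := by
        have h3 : ((dq (pfc xV) y : V) : L) = dq (pfc fun j => (xV j : L)) fun ε => (y ε : L) := by
          show V.subtype _ = _
          rw [← dq_map]
          congr 1
          funext ε
          rw [pfc_map]; rfl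
        rw [h3, ← dq_smul, ← dq_map]
        congr 1
        · funext ε
          rw [pfc_map]
        · funext ε
          rw [hp']; simp [mul_comm]
      have h3 : V.valuation (α (dq (pfc fun j => algebraMap (MvPolynomial σ O) A (X (ξ j))) p'))
          < 1 := by
        rw [h2, map_mul, map_pow, hone G hG, one_pow, one_mul]; exact h1
      rw [hV', ← dq_map] at h3
      have h4 : (fun ε => β (pfc (fun j => algebraMap (MvPolynomial σ O) A (X (ξ j))) ε)) =
          pfc fun j => algebraMap (MvPolynomial σ (ResidueField O)) E (X (ξ j)) := by
        funext ε
        rw [pfc_map]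
        simp only [hβX]
      rw [h4] at h3
      have h5 := aniso_pfc_QA ξ hξ _ h3
      funext ε
      have h6 := (hV' _).2 (congrFun h5 ε)
      rw [hp', map_mul, hone G hG, mul_one, ← V.valuation_lt_one_iff, ← residue_eq_zero_iff,
        hy] at h6
      exact h6

end MainVal

/-! ### Very general coefficients and failure of rationality -/

section Indep
open IsLocalRing

/-- The coefficients `c` are algebraically independent over `ℚ`. -/
def VeryGen {k r : ℕ} (c : Fin (r + 3) → Fin (k + 2 + 1) → ℂ) : Prop :=
  AlgebraicIndependent ℚ (fun p : Fin (r + 3) × Fin (k + 2 + 1) => c p.1 p.2)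

theorem exists_veryGen (k r : ℕ) : ∃ c : Fin (r + 3) → Fin (k + 2 + 1) → ℂ, VeryGen c := by
  obtain ⟨s, hs⟩ := exists_isTranscendenceBasis ℚ ℂ
  have h1 := IsAlgClosed.cardinal_eq_cardinal_transcendence_basis_of_aleph0_lt
    (Subtype.val : s → ℂ) hs (by simp) (by rw [Cardinal.mk_complex]; exact Cardinal.aleph0_lt_continuum)
  have h2 : Infinite s := by
    rw [Cardinal.lift_id, Cardinal.lift_id] at h1
    rw [Cardinal.infinite_iff, ← h1, Cardinal.mk_complex]
    exact Cardinal.aleph0_lt_continuum.le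
  let f : Fin (r + 3) × Fin (k + 2 + 1) ↪ s :=
    ((Fintype.equivFin _).toEmbedding.trans Fin.valEmbedding).trans (Infinite.natEmbedding s)
  exact ⟨fun i j => f (i, j), hs.1.comp f f.injective⟩

/-- A valuation ring of `ℂ` for which all coefficients reduce to zero. -/
theorem VeryGen.exists_valuation {k r : ℕ} {c : Fin (r + 3) → Fin (k + 2 + 1) → ℂ}
    (hc : VeryGen c) :
    ∃ (O : ValuationSubring ℂ) (c' : Fin (r + 3) → Fin (k + 2 + 1) → O),
      CharZero (ResidueField O) ∧ (∀ i j, (c' i j : ℂ) = c i j) ∧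
        ∀ i j, residue O (c' i j) = 0 := by
  obtain ⟨O, h1, h2⟩ := _root_.exists_valuation
    (aeval (R := ℚ) (fun p : Fin (r + 3) × Fin (k + 2 + 1) => c p.1 p.2)).toRingHom hc
    (constantCoeff (R := ℚ))
  have hX : ∀ i j, (aeval (R := ℚ) (fun p : Fin (r + 3) × Fin (k + 2 + 1) => c p.1 p.2)).toRingHom
      (X (i, j)) = c i j := by intro i j; simp
  refine ⟨O, fun i j => ⟨c i j, by rw [← hX]; exact h1 _⟩, ?_, fun i j => rfl, fun i j => ?_⟩
  · refine charZero_of_inj_zero fun n hn => ?_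
    rw [← map_natCast (residue O), residue_eq_zero_iff, O.valuation_lt_one_iff] at hn
    have h3 := h2 (n : MvPolynomial _ ℚ)
    have h4 := h3.1 (by rwa [map_natCast])
    rw [map_natCast] at h4
    exact_mod_cast h4
  · rw [residue_eq_zero_iff, O.valuation_lt_one_iff]
    show O.valuation (c i j) < 1
    rw [← hX, h2]; simp

end Indep

section NotRat
variable {k r : ℕ} {e : Fin (r + 3) → (Fin (k + 2) → Bool)} {σ : Type*} [Finite σ]

theorem VeryGen.nsq {c : Fin (r + 3) → Fin (k + 2 + 1) → ℂ} (hc : VeryGen c)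
    (e : Fin (r + 3) → (Fin (k + 2) → Bool))
    (ξ : Fin (k + 2 + 1) → σ) (hξ : Function.Injective ξ) : NSq (Dgen e c ξ) := by
  obtain ⟨O, c', _, h1, h2⟩ := hc.exists_valuation
  have : c = fun i j => (c' i j : ℂ) := by funext i j; rw [h1]
  rw [this]
  exact nsq_Dgen e ξ hξ O c' h2

/-- A field with a point of the quadric bundle that embeds into `ℂ(x, …)(√(-a_0 a_1))`, with the
base coordinates mapping to the generic ones, is not purely transcendental over `ℂ`. -/
theorem not_rational_of_embedding (he : PfNumbering e) {c : Fin (r + 3) → Fin (k + 2 + 1) → ℂ}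
    (hc : VeryGen c) (ξ : Fin (k + 2 + 1) → σ) (hξ : Function.Injective ξ)
    [IsDomain (QA _ (Dgen e c ξ))] {K : Type*} [Field K] [Algebra ℂ K]
    (x : Fin (k + 2 + 1) → K) (z : Fin (r + 3) → K) (hz : z ≠ 0)
    (hq : dq (aa e (fun i j => algebraMap ℂ K (c i j)) x) z = 0)
    (ι : K →ₐ[ℂ] FractionRing (QA _ (Dgen e c ξ)))
    (hι : ∀ j, ι (x j) = algebraMap (QA _ (Dgen e c ξ)) _
        (algebraMap (MvPolynomial σ ℂ) _ (X (ξ j))))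
    (d : ℕ) {F : Type*} [Field F] [Algebra ℂ F] [Algebra (MvPolynomial (Fin d) ℂ) F]
    [IsScalarTower ℂ (MvPolynomial (Fin d) ℂ) F] [IsFractionRing (MvPolynomial (Fin d) ℂ) F]
    (φ : K ≃ₐ[ℂ] F) : False := by
  obtain ⟨O, c', _, h1, h2⟩ := hc.exists_valuation
  obtain rfl : c = fun i j => (c' i j : ℂ) := by funext i j; rw [h1]
  obtain ⟨V, hV0, hdiv, hcV, hgood⟩ := exists_main_valuation e ξ hξ O c' h2
  obtain ⟨H, hH⟩ := IsLocalization.exist_integer_multiples_of_finite (nonZeroDivisors (MvPolynomial (Fin d) ℂ))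
    (fun j => φ (x j))
  choose Y hY using hH
  have hH0 : algebraMap (MvPolynomial (Fin d) ℂ) F H ≠ 0 := fun h => nonZeroDivisors.ne_zero H.2
    ((IsFractionRing.injective (MvPolynomial (Fin d) ℂ) F) (h.trans (map_zero _).symm))
  obtain ⟨H', hH'⟩ := IsLocalization.exist_integer_multiples_of_finite (nonZeroDivisors (MvPolynomial (Fin d) ℂ))
    (fun i => φ (z i) * ((algebraMap (MvPolynomial (Fin d) ℂ) F H) ^ ee e i)⁻¹)
  choose W hW using hH'
  have hH'0 : algebraMap (MvPolynomial (Fin d) ℂ) F H' ≠ 0 := fun h => nonZeroDivisors.ne_zero H'.2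
    ((IsFractionRing.injective (MvPolynomial (Fin d) ℂ) F) (h.trans (map_zero _).symm))
  simp only [Algebra.smul_def] at hY hW
  have hCc : ∀ a : ℂ, algebraMap (MvPolynomial (Fin d) ℂ) F (C a) = algebraMap ℂ F a := fun a =>
    (IsScalarTower.algebraMap_apply ℂ (MvPolynomial (Fin d) ℂ) F a).symm
  refine no_path V he hdiv _ hcV Y W ?_ ?_
    (fun l => ι (φ.symm (algebraMap (MvPolynomial (Fin d) ℂ) F (X l)))) ?_
  · obtain ⟨i, hi⟩ := Function.ne_iff.1 hz
    intro h
    have h3 := hW i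
    rw [h, Pi.zero_apply, map_zero, eq_comm] at h3
    refine mul_ne_zero hH'0 (mul_ne_zero ?_ (inv_ne_zero (pow_ne_zero _ hH0))) h3
    exact (map_ne_zero φ).2 hi
  · apply IsFractionRing.injective (MvPolynomial (Fin d) ℂ) F
    rw [map_zero, ← dq_map]
    have h3 : (fun i => algebraMap (MvPolynomial (Fin d) ℂ) F (aa e (fun i j => C (c' i j : ℂ)) Y i)) = fun i =>
        algebraMap (MvPolynomial (Fin d) ℂ) F H * (algebraMap (MvPolynomial (Fin d) ℂ) F H ^ ee e i) ^ 2 *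
          φ (aa e (fun i j => algebraMap ℂ K (c' i j)) x i) := by
      funext i
      rw [aa_map]
      simp only [hCc, hY]
      rw [aa_smul]
      congr 1
      refine Eq.trans ?_ (aa_map e (φ : K →+* F) _ _ i).symm
      simp
    rw [h3]
    simp only [hW]
    have h4 := congrArg φ hq
    rw [map_zero] at h4
    simp only [dq, map_sum, map_mul, map_pow] at h4 ⊢
    rw [← mul_zero (algebraMap (MvPolynomial (Fin d) ℂ) F H * (algebraMap (MvPolynomial (Fin d) ℂ) F H') ^ 2), ← h4, Finset.mul_sum]
    refine Finset.sum_congr rfl fun i _ => ?_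
    have h5 := pow_ne_zero (ee e i) hH0
    have h6 := mul_inv_cancel₀ h5
    set G := algebraMap (MvPolynomial (Fin d) ℂ) F H ^ ee e i
    set G' := G⁻¹
    linear_combination (algebraMap (MvPolynomial (Fin d) ℂ) F H * algebraMap (MvPolynomial (Fin d) ℂ) F H' ^ 2 *
      φ (aa e (fun i j => algebraMap ℂ K (c' i j)) x i) * φ (z i) ^ 2) * (G * G' + 1) * h6
  · obtain ⟨t, ht, w, hw, hg⟩ := hgood
    have h0 : ι (φ.symm (algebraMap (MvPolynomial (Fin d) ℂ) F H)) ≠ 0 :=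
      (map_ne_zero ι).2 ((map_ne_zero φ.symm).2 hH0)
    refine ⟨t * (ι (φ.symm (algebraMap (MvPolynomial (Fin d) ℂ) F H)))⁻¹, mul_ne_zero ht (inv_ne_zero h0), w,
      fun j => ?_, hg⟩
    have h3 : ∀ p : MvPolynomial (Fin d) ℂ, aeval (fun l => ι (φ.symm (algebraMap (MvPolynomial (Fin d) ℂ) F (X l)))) p =
        ι (φ.symm (algebraMap (MvPolynomial (Fin d) ℂ) F p)) := by
      intro p
      have : aeval (fun l => ι (φ.symm (algebraMap (MvPolynomial (Fin d) ℂ) F (X l)))) =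
          (ι.comp φ.symm.toAlgHom).comp (IsScalarTower.toAlgHom ℂ (MvPolynomial (Fin d) ℂ) F) := by
        apply MvPolynomial.algHom_ext
        intro l
        simp
      rw [this]; simp
    beta_reduce
    rw [hw, h3, hY, map_mul, map_mul, φ.symm_apply_apply, hι, mul_assoc, inv_mul_cancel_left₀ h0]

end NotRat

/-! ### Smoothness and flatness by differentiating the coefficients -/

section Deriv

/-- Infinitesimal lifting: in characteristic zero every field extension of the fraction field
of a domain `P` is formally smooth over `P`. -/
theorem exists_infinitesimal_lift {P L B : Type*} [CommRing P] [IsDomain P] [CharZero P] [Field L]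
    [CommRing B] (α : P →+* L) (hα : Function.Injective α) (β : P →+* B) (π : B →+* L)
    (hπ : Function.Surjective π) (hker : IsNilpotent (RingHom.ker π)) (h : ∀ p, π (β p) = α p) :
    ∃ D : L →+* B, (∀ z, π (D z) = z) ∧ ∀ p, D (α p) = β p := by
  letI : Algebra P L := α.toAlgebra
  letI : Algebra P B := β.toAlgebra
  haveI : FaithfulSMul P L := (faithfulSMul_iff_algebraMap_injective P L).2 hα
  letI : Algebra (FractionRing P) L := FractionRing.liftAlgebra P L
  haveI : IsScalarTower P (FractionRing P) L := FractionRing.isScalarTower_liftAlgebra P L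
  haveI : CharZero (FractionRing P) :=
    charZero_of_injective_algebraMap (IsFractionRing.injective P (FractionRing P))
  obtain ⟨s, hs⟩ := exists_isTranscendenceBasis (FractionRing P) L
  haveI : Algebra.IsAlgebraic (IntermediateField.adjoin (FractionRing P)
      (Set.range (Subtype.val : s → L))) L := hs.isAlgebraic_field
  haveI : Algebra.FormallySmooth (FractionRing P) L :=
    Algebra.FormallySmooth.of_algebraicIndependent_of_isSeparable hs.1
  haveI : Algebra.FormallySmooth P (FractionRing P) :=
    Algebra.FormallySmooth.of_isLocalization (nonZeroDivisors P)
  haveI : Algebra.FormallySmooth P L := Algebra.FormallySmooth.comp P (FractionRing P) L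
  let g : B →ₐ[P] L := { π with commutes' := h }
  let D := Algebra.FormallySmooth.liftOfSurjective (AlgHom.id P L) g hπ hker
  refine ⟨D, fun z => ?_, fun p => D.commutes p⟩
  exact Algebra.FormallySmooth.liftOfSurjective_apply (AlgHom.id P L) g hπ hker z

variable {k r : ℕ} {c : Fin (r + 3) → Fin (k + 2 + 1) → ℂ}

/-- The derivation `∂/∂c_{i₀ j₀}` of `ℂ`, written as a ring homomorphism to the dual numbers. -/
theorem VeryGen.exists_dual (hc : VeryGen c) (i₀ : Fin (r + 3)) (j₀ : Fin (k + 2 + 1)) :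
    ∃ D : ℂ →+* TrivSqZeroExt ℂ ℂ, (∀ z, (D z).fst = z) ∧
      ∀ i j, (D (c i j)).snd = if i = i₀ ∧ j = j₀ then 1 else 0 := by
  let β : MvPolynomial (Fin (r + 3) × Fin (k + 2 + 1)) ℚ →+* TrivSqZeroExt ℂ ℂ :=
    eval₂Hom (algebraMap ℚ _) (fun p => TrivSqZeroExt.inl (c p.1 p.2) +
      TrivSqZeroExt.inr (if p.1 = i₀ ∧ p.2 = j₀ then 1 else 0))
  obtain ⟨D, h1, h2⟩ := exists_infinitesimal_lift
    (aeval (R := ℚ) (fun p : Fin (r + 3) × Fin (k + 2 + 1) => c p.1 p.2)).toRingHom hc β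
    (TrivSqZeroExt.fstHom ℂ ℂ ℂ).toRingHom (fun z => ⟨TrivSqZeroExt.inl z, by simp⟩)
    ⟨2, by
      rw [Ideal.zero_eq_bot, eq_bot_iff, pow_two, Ideal.mul_le]
      intro a ha b hb
      have ha' : a.fst = 0 := ha
      have hb' : b.fst = 0 := hb
      rw [Ideal.mem_bot]
      ext <;> simp [ha', hb']⟩ (fun p => by
      have : ((TrivSqZeroExt.fstHom ℂ ℂ ℂ).toRingHom.comp β) =
          (aeval (R := ℚ) (fun p : Fin (r + 3) × Fin (k + 2 + 1) => c p.1 p.2)).toRingHom := by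
        apply MvPolynomial.ringHom_ext
        · intro q; simp [β]
        · intro q; simp only [β, RingHom.comp_apply, eval₂Hom_X']; split_ifs <;> simp
      exact RingHom.congr_fun this p)
  refine ⟨D, h1, fun i j => ?_⟩
  have := h2 (X (i, j))
  simp only [AlgHom.toRingHom_eq_coe, RingHom.coe_coe, aeval_X] at this
  rw [this]
  simp only [β, eval₂Hom_X']
  split_ifs <;> simp

/-- First order Taylor formula. -/
theorem snd_dual_eval {τ : Type*} [Fintype τ] (D : ℂ →+* TrivSqZeroExt ℂ ℂ)
    (hD : ∀ z, (D z).fst = z) (p : τ → ℂ) (f : MvPolynomial τ ℂ) :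
    (D (eval p f)).snd = (eval₂ D (fun v => TrivSqZeroExt.inl (p v)) f).snd +
      ∑ v, (D (p v)).snd * eval p (pderiv v f) := by
  classical
  have hf : ∀ f : MvPolynomial τ ℂ,
      (eval₂ D (fun v => TrivSqZeroExt.inl (p v)) f).fst = eval p f := by
    intro f
    induction f using MvPolynomial.induction_on with
    | C a => simp [hD]
    | add f g hf hg => simp [hf, hg]
    | mul_X f v hf => simp [hf]
  induction f using MvPolynomial.induction_on with
  | C a => simp
  | add f g hf hg => simp [hf, hg, mul_add, Finset.sum_add_distrib]; ring
  | mul_X f v ih =>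
    have h1 : ∀ u, (D (p u)).snd * eval p (pderiv u (f * X v)) =
        p v * ((D (p u)).snd * eval p (pderiv u f)) +
          (if u = v then (D (p v)).snd * eval p f else 0) := by
      intro u
      rw [Derivation.leibniz]
      by_cases h : u = v
      · subst h; simp; ring
      · rw [pderiv_X_of_ne (Ne.symm h)]; simp [h]; ring
    rw [Finset.sum_congr rfl fun u _ => h1 u, Finset.sum_add_distrib, ← Finset.mul_sum,
      Finset.sum_ite_eq' Finset.univ v]
    simp [ih, hf, hD]
    ring

theorem snd_dual_aa (e : Fin (r + 3) → (Fin (k + 2) → Bool)) {i₀ : Fin (r + 3)}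
    {j₀ : Fin (k + 2 + 1)} (D : ℂ →+* TrivSqZeroExt ℂ ℂ)
    (hD : ∀ i j, (D (c i j)).snd = if i = i₀ ∧ j = j₀ then 1 else 0) (y : Fin (k + 2 + 1) → ℂ)
    (i : Fin (r + 3)) :
    (aa e (fun i j => D (c i j)) (fun j => TrivSqZeroExt.inl (y j)) i).snd =
      if i = i₀ then y j₀ ^ (2 * ee e i + 1) else 0 := by
  classical
  have h : PP e (fun j => (TrivSqZeroExt.inl (y j) : TrivSqZeroExt ℂ ℂ)) i =
      TrivSqZeroExt.inl (PP e y i) := (PP_map (TrivSqZeroExt.inlHom ℂ ℂ) e y i).symm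
  have h2 : ∀ j, (D (c i j) * TrivSqZeroExt.inl (y j) ^ (2 * ee e i + 1)).snd =
      if j = j₀ then (if i = i₀ then y j₀ ^ (2 * ee e i + 1) else 0) else 0 := by
    intro j
    rw [TrivSqZeroExt.inl_pow]
    simp only [TrivSqZeroExt.snd_mul, hD, TrivSqZeroExt.snd_inl, TrivSqZeroExt.fst_inl, smul_zero,
      zero_add, MulOpposite.smul_eq_mul_unop, MulOpposite.unop_op]
    by_cases h1 : j = j₀ <;> by_cases h3 : i = i₀ <;> simp [h1, h3]
  rw [aa, TrivSqZeroExt.snd_add, h, TrivSqZeroExt.snd_inl, zero_add, TrivSqZeroExt.snd_sum,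
    Finset.sum_congr rfl fun j _ => h2 j]
  simp

/-- Jacobian criterion on a chart where `Y j₀ = 1` and `Z i₀ = 1`: at a singular point,
differentiating the equation with respect to the coefficient `c i₀ j₀` gives `1 = 0`. -/
theorem VeryGen.smooth (hc : VeryGen c) (e : Fin (r + 3) → (Fin (k + 2) → Bool)) {τ : Type*}
    [Fintype τ] (Y : Fin (k + 2 + 1) → MvPolynomial τ ℂ) (Z : Fin (r + 3) → MvPolynomial τ ℂ)
    (hY : ∀ j, Y j = 1 ∨ ∃ v, Y j = X v) (hZ : ∀ i, Z i = 1 ∨ ∃ v, Z i = X v)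
    {i₀ : Fin (r + 3)} {j₀ : Fin (k + 2 + 1)} (hj : Y j₀ = 1) (hi : Z i₀ = 1) (p : τ → ℂ)
    (hp : eval p (dq (aa e (fun i j => C (c i j)) Y) Z) = 0) :
    ∃ v, eval p (pderiv v (dq (aa e (fun i j => C (c i j)) Y) Z)) ≠ 0 := by
  classical
  by_contra! hcon
  obtain ⟨D, h1, h2⟩ := hc.exists_dual i₀ j₀
  have h3 := snd_dual_eval D h1 p (dq (aa e (fun i j => C (c i j)) Y) Z)
  rw [hp] at h3
  simp only [hcon, mul_zero, Finset.sum_const_zero, add_zero, map_zero, TrivSqZeroExt.snd_zero] at h3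
  have hlin : ∀ W : MvPolynomial τ ℂ, (W = 1 ∨ ∃ v, W = X v) →
      eval₂Hom D (fun v => TrivSqZeroExt.inl (p v)) W = TrivSqZeroExt.inl (eval p W) := by
    rintro W (rfl | ⟨v, rfl⟩) <;> simp
  have h4 : eval₂ D (fun v => TrivSqZeroExt.inl (p v)) (dq (aa e (fun i j => C (c i j)) Y) Z) =
      dq (aa e (fun i j => D (c i j)) (fun j => TrivSqZeroExt.inl (eval p (Y j))))
        (fun i => TrivSqZeroExt.inl (eval p (Z i))) := by
    rw [← coe_eval₂Hom, ← dq_map]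
    have : ∀ i, eval₂Hom D (fun v => TrivSqZeroExt.inl (p v)) (aa e (fun i j => C (c i j)) Y i) =
        aa e (fun i j => D (c i j)) (fun j => TrivSqZeroExt.inl (eval p (Y j))) i := by
      intro i
      rw [aa_map]
      simp only [hlin _ (hY _), eval₂Hom_C]
    simp only [this, hlin _ (hZ _)]
  rw [h4, dq, TrivSqZeroExt.snd_sum] at h3
  have h5 : ∀ i, (aa e (fun i j => D (c i j)) (fun j => TrivSqZeroExt.inl (eval p (Y j))) i *
      (TrivSqZeroExt.inl (eval p (Z i))) ^ 2).snd = if i = i₀ then 1 else 0 := by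
    intro i
    rw [TrivSqZeroExt.inl_pow, TrivSqZeroExt.snd_mul, snd_dual_aa e D h2]
    by_cases h : i = i₀
    · subst h; simp [hj, hi]
    · simp [h]
  rw [Finset.sum_congr rfl fun i _ => h5 i] at h3
  simp at h3

/-- The coefficients have no common zero: there are more coefficients than coordinates on
the base, so the Jacobian matrix at a common zero has a nontrivial left kernel, which
contradicts the independence of the derivations. -/
theorem VeryGen.flat (hc : VeryGen c) (e : Fin (r + 3) → (Fin (k + 2) → Bool))
    (hkr : k < r + 1) (y : Fin (k + 2 + 1) → ℂ) (hy : y ≠ 0) : ∃ i, aa e c y i ≠ 0 := by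
  classical
  by_contra! hcon
  obtain ⟨j₀, hj₀⟩ := Function.ne_iff.1 hy
  set y' : Fin (k + 2 + 1) → ℂ := fun j => (y j₀)⁻¹ * y j with hy'
  have h0 : ∀ i, aa e c y' i = 0 := fun i => by rw [hy', aa_smul, hcon, mul_zero]
  have h1 : y' j₀ = 1 := inv_mul_cancel₀ hj₀
  let G : Fin (r + 3) → MvPolynomial (Fin (k + 2 + 1)) ℂ := aa e (fun i j => C (c i j)) X
  have hG : ∀ i, eval y' (G i) = 0 := fun i => by
    rw [← h0 i]
    refine (aa_map e (eval y') _ _ i).trans ?_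
    simp
  let N : (Fin (r + 3) → ℂ) →ₗ[ℂ] ({j // j ≠ j₀} → ℂ) :=
    (Matrix.of fun (j : {j // j ≠ j₀}) i => eval y' (pderiv j.1 (G i))).mulVecLin
  have hN : LinearMap.ker N ≠ ⊥ := by
    apply LinearMap.ker_ne_bot_of_finrank_lt
    simp
    omega
  obtain ⟨w, hw, hw0⟩ := (Submodule.ne_bot_iff _).1 hN
  refine hw0 (funext fun i₀ => ?_)
  obtain ⟨D, hD1, hD2⟩ := hc.exists_dual i₀ j₀
  have h3 : ∀ i, 0 = (if i = i₀ then 1 else 0) + ∑ j, (D (y' j)).snd * eval y' (pderiv j (G i)) := by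
    intro i
    have := snd_dual_eval D hD1 y' (G i)
    rw [hG, map_zero, TrivSqZeroExt.snd_zero] at this
    refine this.trans ?_
    congr 1
    rw [← coe_eval₂Hom]
    have h4 : eval₂Hom D (fun v => TrivSqZeroExt.inl (y' v)) (G i) =
        aa e (fun i j => D (c i j)) (fun j => TrivSqZeroExt.inl (y' j)) i := by
      refine (aa_map e _ _ _ i).trans ?_
      simp
    rw [h4, snd_dual_aa e D hD2, h1, one_pow]
  have h4 : ∑ i, w i * (if i = i₀ then 1 else 0) = 0 := by
    have h5 : ∀ j, ∑ i, w i * ((D (y' j)).snd * eval y' (pderiv j (G i))) = 0 := by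
      intro j
      by_cases hj : j = j₀
      · subst hj; simp [h1]
      · have h6 := congrFun hw ⟨j, hj⟩
        simp only [N, Matrix.mulVecLin_apply, Matrix.mulVec, dotProduct, Matrix.of_apply,
          Pi.zero_apply] at h6
        rw [← mul_zero (D (y' j)).snd, ← h6, Finset.mul_sum]
        exact Finset.sum_congr rfl fun i _ => by ring
    have h7 : ∑ i, w i * ((if i = i₀ then 1 else 0) +
        ∑ j, (D (y' j)).snd * eval y' (pderiv j (G i))) = 0 :=
      Finset.sum_eq_zero fun i _ => by rw [← h3 i, mul_zero]
    simp only [mul_add, Finset.sum_add_distrib, Finset.mul_sum] at h7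
    rw [Finset.sum_comm (f := fun i j => w i * ((D (y' j)).snd * eval y' (pderiv j (G i)))),
      Finset.sum_eq_zero fun j _ => h5 j, add_zero] at h7
    exact h7
  simpa using h4

/-- No coefficient vanishes at a coordinate point. -/
theorem VeryGen.aa_single_ne (hc : VeryGen c) (e : Fin (r + 3) → (Fin (k + 2) → Bool))
    (i : Fin (r + 3)) (j₀ : Fin (k + 2 + 1)) : aa e c (Pi.single j₀ 1) i ≠ 0 := by
  classical
  intro h
  obtain ⟨D, hD1, hD2⟩ := hc.exists_dual i j₀
  have h1 := aa_map e D c (Pi.single j₀ 1) i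
  have h2 : ∀ j, D ((Pi.single j₀ 1 : Fin (k + 2 + 1) → ℂ) j) =
      TrivSqZeroExt.inl ((Pi.single j₀ 1 : Fin (k + 2 + 1) → ℂ) j) := by
    intro j
    by_cases hj : j = j₀
    · subst hj; simp
    · simp [hj]
  simp only [h2] at h1
  have h3 := congrArg TrivSqZeroExt.snd h1
  rw [snd_dual_aa e D hD2, h] at h3
  simp at h3

end Deriv

/-! ### Generic points of the quadric -/

section Kernel

/-- Pseudo-division by `a X² + b`. -/
theorem exists_pseudo_division {R : Type*} [CommRing R] (a b : R) (f : Polynomial R) :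
    ∃ (N : ℕ) (h : Polynomial R) (A B : R), Polynomial.C a ^ N * f =
      (Polynomial.C a * Polynomial.X ^ 2 + Polynomial.C b) * h + Polynomial.C A +
        Polynomial.C B * Polynomial.X := by
  induction f using Polynomial.induction_on with
  | C p => exact ⟨0, 0, p, 0, by simp⟩
  | add f g hf hg =>
    obtain ⟨N, h, A, B, h1⟩ := hf
    obtain ⟨N', h', A', B', h2⟩ := hg
    refine ⟨N + N', Polynomial.C a ^ N' * h + Polynomial.C a ^ N * h', a ^ N' * A + a ^ N * A',
      a ^ N' * B + a ^ N * B', ?_⟩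
    simp only [map_add, map_mul, map_pow]
    linear_combination Polynomial.C a ^ N' * h1 + Polynomial.C a ^ N * h2
  | monomial n p hf =>
    obtain ⟨N, h, A, B, h1⟩ := hf
    refine ⟨N + 1, Polynomial.C a * Polynomial.X * h + Polynomial.C B, - (B * b), a * A, ?_⟩
    simp only [map_mul, map_neg]
    linear_combination Polynomial.C a * Polynomial.X * h1

/-- A ring homomorphism from `R[X]` that is injective on `R` and kills `a X² + b`, where `a` is
a prime not dividing `b`, has kernel generated by `a X² + b`. -/
theorem dvd_of_map_eq_zero {R M : Type*} [CommRing R] [IsDomain R] [WfDvdMonoid R] [Field M]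
    {a b : R} (ha : Prime a) (hb : ¬ a ∣ b) (Θ : Polynomial R →+* M)
    (hΘ : ∀ p, Θ (Polynomial.C p) = 0 → p = 0)
    (hq : Θ (Polynomial.C a * Polynomial.X ^ 2 + Polynomial.C b) = 0) (f : Polynomial R)
    (hf : Θ f = 0) : Polynomial.C a * Polynomial.X ^ 2 + Polynomial.C b ∣ f := by
  obtain ⟨N, h, A, B, h1⟩ := exists_pseudo_division a b f
  have h2 : Θ (Polynomial.C A) + Θ (Polynomial.C B) * Θ Polynomial.X = 0 := by
    have := congrArg Θ h1
    rw [map_mul, hf, map_add, map_add, map_mul, hq, map_mul] at this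
    linear_combination -this
  have h3 : Θ (Polynomial.C a) * Θ Polynomial.X ^ 2 + Θ (Polynomial.C b) = 0 := by
    rw [← hq]; simp
  have h4 : (a * A) * (a * A) = (a * -b) * (B * B) := by
    rw [← sub_eq_zero]
    apply hΘ
    simp only [map_sub, map_mul, map_neg]
    linear_combination Θ (Polynomial.C a) ^ 2 * (Θ (Polynomial.C A) -
      Θ (Polynomial.C B) * Θ Polynomial.X) * h2 + Θ (Polynomial.C a) * Θ (Polynomial.C B) ^ 2 * h3
  have hB : B = 0 := nsq_of_prime ha (by rwa [dvd_neg]) _ _ h4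
  have hA : A = 0 := by
    rw [hB, mul_zero, mul_zero, mul_self_eq_zero] at h4
    exact (mul_eq_zero.1 h4).resolve_left ha.ne_zero
  rw [hA, hB] at h1
  simp only [map_zero, zero_mul, add_zero] at h1
  have hpr : Prime (Polynomial.C a) := Polynomial.prime_C_iff.2 ha
  have h5 : ¬ Polynomial.C a ∣ Polynomial.C a * Polynomial.X ^ 2 + Polynomial.C b := by
    rw [Polynomial.C_dvd_iff_dvd_coeff]
    intro h
    have := h 0
    simp at this
    exact hb this
  have h6 : Polynomial.C a ^ N ∣ h := hpr.pow_dvd_of_dvd_mul_left N h5 ⟨f, h1.symm⟩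
  obtain ⟨g, rfl⟩ := h6
  refine ⟨g, mul_left_cancel₀ (pow_ne_zero N hpr.ne_zero) ?_⟩
  rw [h1]; ring

variable {k r : ℕ} {c : Fin (r + 3) → Fin (k + 2 + 1) → ℂ}

/-- The minor `(1 + c₁₁)(1 + c₂₂) - c₁₂ c₂₁` of the linear forms `a_1`, `a_2`. -/
theorem VeryGen.minor_ne (hc : VeryGen c) :
    (1 + c 1 1) * (1 + c 2 2) - c 1 2 * c 2 1 ≠ 0 := by
  intro h
  have h1 : aeval (fun p : Fin (r + 3) × Fin (k + 2 + 1) => c p.1 p.2)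
      ((1 + X (1, 1)) * (1 + X (2, 2)) - X (1, 2) * X (2, 1) :
        MvPolynomial (Fin (r + 3) × Fin (k + 2 + 1)) ℚ) = 0 := by
    simpa using h
  have h2 := hc ((h1.trans (map_zero _).symm))
  have h3 := congrArg constantCoeff h2
  simp at h3

theorem aa_one {R : Type*} [CommRing R] (e : Fin (r + 3) → (Fin (k + 2) → Bool))
    (c : Fin (r + 3) → Fin (k + 2 + 1) → R) (x : Fin (k + 2 + 1) → R) :
    aa e c x 1 = x 1 + ∑ j, c 1 j * x j := by
  simp [aa, PP, ee]

theorem fin_two_ne_zero : (2 : Fin (r + 3)) ≠ 0 := by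
  rw [Ne, Fin.ext_iff]; simp [Nat.mod_eq_of_lt (show 2 < r + 3 by omega)]

theorem fin_two_ne_one : (2 : Fin (r + 3)) ≠ 1 := by
  rw [Ne, Fin.ext_iff]; simp [Nat.mod_eq_of_lt (show 2 < r + 3 by omega)]

theorem aa_two {R : Type*} [CommRing R] (e : Fin (r + 3) → (Fin (k + 2) → Bool))
    (c : Fin (r + 3) → Fin (k + 2 + 1) → R) (x : Fin (k + 2 + 1) → R) :
    aa e c x 2 = x 2 + ∑ j, c 2 j * x j := by
  simp [aa, PP, ee, fin_two_ne_zero, fin_two_ne_one]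

theorem VeryGen.prime_aa_one {σ : Type*} (hc : VeryGen c) (e : Fin (r + 3) → (Fin (k + 2) → Bool))
    (ξ : Fin (k + 2 + 1) → σ) (hξ : Function.Injective ξ) :
    Prime (aa e (fun i j => C (c i j)) (fun j => X (ξ j)) 1 : MvPolynomial σ ℂ) := by
  classical
  have h0 : aa e (fun i j => C (c i j)) (fun j => X (ξ j)) 1 ≠ (0 : MvPolynomial σ ℂ) := by
    intro h
    apply hc.aa_single_ne e 1 0
    have := congrArg (aeval (Function.extend ξ (Pi.single 0 1 : Fin (k + 2 + 1) → ℂ) 0)) h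
    rw [map_zero] at this
    rw [← this]
    refine Eq.trans ?_ (aa_map e (aeval (R := ℂ) (Function.extend ξ (Pi.single 0 1) 0)).toRingHom _ _ 1).symm
    simp [hξ.extend_apply]
  have hhom : (aa e (fun i j => C (c i j)) (fun j => X (ξ j)) 1 : MvPolynomial σ ℂ).IsHomogeneous 1 := by
    rw [aa_one]
    refine (isHomogeneous_X _ _).add (IsHomogeneous.sum _ _ _ fun j _ => ?_)
    simpa using (isHomogeneous_C σ (c 1 j)).mul (isHomogeneous_X ℂ (ξ j))
  refine (irreducible_of_totalDegree_eq_one (hhom.totalDegree h0) fun x hx => ?_).prime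
  rw [isUnit_iff_ne_zero]
  rintro rfl
  apply h0
  ext i
  simpa using hx i

/-- The index set of the variables of the quadric other than `z_1`. -/
abbrev TV (B : Type*) (r : ℕ) := B ⊕ {l : Fin (r + 3) // l ≠ 1}

theorem not_dvd_rest {B : Type*} (hc : VeryGen c) (e : Fin (r + 3) → (Fin (k + 2) → Bool))
    (ξ : Fin (k + 2 + 1) → B) (hξ : Function.Injective ξ) :
    ¬ (aa e (fun i j => C (c i j)) (fun j => X (Sum.inl (ξ j))) 1 : MvPolynomial (TV B r) ℂ) ∣
      ∑ l : {l : Fin (r + 3) // l ≠ 1}, aa e (fun i j => C (c i j)) (fun j => X (Sum.inl (ξ j))) l.1 *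
        X (Sum.inr l) ^ 2 := by
  classical
  intro h
  have h10 : (1 : Fin (k + 2 + 1)) ≠ 2 := (fin_two_ne_one (r := k)).symm
  let y : Fin (k + 2 + 1) → ℂ := Pi.single 1 (-c 1 2) + Pi.single 2 (1 + c 1 1)
  have hy1 : y 1 = - c 1 2 := by simp [y, h10]
  have hy2 : y 2 = 1 + c 1 1 := by simp [y, h10.symm]
  have hsum : ∀ i, ∑ j, c i j * y j = c i 1 * (-c 1 2) + c i 2 * (1 + c 1 1) := by
    intro i
    simp [y, mul_add, Finset.sum_add_distrib, Pi.single_apply]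
  let pt : TV B r → ℂ := Sum.elim (Function.extend ξ y 0) (fun l => if l.1 = 2 then 1 else 0)
  have hE : ∀ i, eval pt (aa e (fun i j => C (c i j)) (fun j => X (Sum.inl (ξ j))) i) = aa e c y i := by
    intro i
    refine (aa_map e (eval pt) _ _ i).trans ?_
    simp [pt, hξ.extend_apply]
  have h1 := map_dvd (eval pt) h
  rw [hE, aa_one, hsum, hy1, map_sum] at h1
  have h2 : -c 1 2 + (c 1 1 * -c 1 2 + c 1 2 * (1 + c 1 1)) = 0 := by ring
  rw [h2, zero_dvd_iff, Finset.sum_eq_single ⟨2, fin_two_ne_one⟩] at h1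
  · rw [map_mul, hE, aa_two, hsum, hy2] at h1
    simp only [map_pow, eval_X, pt, Sum.elim_inr, if_true, one_pow, mul_one] at h1
    exact hc.minor_ne (by linear_combination h1)
  · intro l _ hl
    have : l.1 ≠ 2 := fun h => hl (Subtype.ext h)
    simp [pt, this]
  · simp

/-- The polynomial map attached to a point of the quadric whose coordinates other than `z_1`
are algebraically independent has kernel generated by the equation of the quadric. -/
theorem VeryGen.dvd_of_generic {B : Type*} [Finite B] (hc : VeryGen c)
    (e : Fin (r + 3) → (Fin (k + 2) → Bool)) (ξ : Fin (k + 2 + 1) → B)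
    (hξ : Function.Injective ξ) {M : Type*} [Field M] [Algebra ℂ M] (x : B → M)
    (z : Fin (r + 3) → M)
    (hq : dq (aa e (fun i j => algebraMap ℂ M (c i j)) (fun j => x (ξ j))) z = 0)
    (hind : AlgebraicIndependent ℂ (Sum.elim x (fun l : {l : Fin (r + 3) // l ≠ 1} => z l)))
    (f : MvPolynomial (B ⊕ Fin (r + 3)) ℂ) (hf : aeval (Sum.elim x z) f = 0) :
    dq (aa e (fun i j => C (c i j)) (fun j => X (Sum.inl (ξ j)))) (fun i => X (Sum.inr i)) ∣ f := by
  classical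
  let E : MvPolynomial (B ⊕ Fin (r + 3)) ℂ →ₐ[ℂ] Polynomial (MvPolynomial (TV B r) ℂ) :=
    aeval (Sum.elim (fun b => Polynomial.C (X (Sum.inl b)))
      (fun l => if h : l = 1 then Polynomial.X else Polynomial.C (X (Sum.inr ⟨l, h⟩))))
  let G : Polynomial (MvPolynomial (TV B r) ℂ) →+* MvPolynomial (B ⊕ Fin (r + 3)) ℂ :=
    Polynomial.eval₂RingHom (rename (Sum.map id Subtype.val)).toRingHom (X (Sum.inr 1))
  let Θ : Polynomial (MvPolynomial (TV B r) ℂ) →+* M :=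
    Polynomial.eval₂RingHom (aeval (Sum.elim x (fun l : {l : Fin (r + 3) // l ≠ 1} => z l))).toRingHom (z 1)
  have hGE : ∀ g, G (E g) = g := by
    intro g
    have : G.comp E.toRingHom = RingHom.id _ := by
      apply MvPolynomial.ringHom_ext
      · intro q
        have : E (C q) = Polynomial.C (C q) := E.commutes q
        simp [this, G]
      · rintro (b | l)
        · simp [E, G]
        · by_cases h : l = 1
          · subst h; simp [E, G]
          · simp [E, G, h]
    exact RingHom.congr_fun this g
  have hΘE : ∀ g, Θ (E g) = aeval (Sum.elim x z) g := by
    intro g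
    have : Θ.comp E.toRingHom = (aeval (Sum.elim x z)).toRingHom := by
      apply MvPolynomial.ringHom_ext
      · intro q
        have : E (C q) = Polynomial.C (C q) := E.commutes q
        simp [this, Θ]
      · rintro (b | l)
        · simp [E, Θ]
        · by_cases h : l = 1
          · subst h; simp [E, Θ]
          · simp [E, Θ, h]
    exact RingHom.congr_fun this g
  let a1 : MvPolynomial (TV B r) ℂ := aa e (fun i j => C (c i j)) (fun j => X (Sum.inl (ξ j))) 1
  let b1 : MvPolynomial (TV B r) ℂ :=
    ∑ l : {l : Fin (r + 3) // l ≠ 1}, aa e (fun i j => C (c i j)) (fun j => X (Sum.inl (ξ j))) l.1 *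
        X (Sum.inr l) ^ 2
  have hEaa : ∀ i, E (aa e (fun i j => C (c i j)) (fun j => X (Sum.inl (ξ j))) i) =
      Polynomial.C (aa e (fun i j => C (c i j)) (fun j => X (Sum.inl (ξ j))) i) := by
    intro i
    refine (aa_map e E.toRingHom _ _ i).trans ?_
    refine Eq.trans ?_ (aa_map e Polynomial.C _ _ i).symm
    have : ∀ q, E (C q) = Polynomial.C (C q) := E.commutes
    simp [this]
    simp [E]
  have hEq : E (dq (aa e (fun i j => C (c i j)) (fun j => X (Sum.inl (ξ j)))) (fun i => X (Sum.inr i))) =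
      Polynomial.C a1 * Polynomial.X ^ 2 + Polynomial.C b1 := by
    rw [dq, map_sum, Fintype.sum_eq_add_sum_subtype_ne _ (1 : Fin (r + 3))]
    congr 1
    · rw [map_mul, hEaa]
      simp [E, a1]
    · simp only [b1, map_sum]
      refine Finset.sum_congr rfl fun l _ => ?_
      rw [map_mul, hEaa]
      simp [E, l.2]
  have hdiv := dvd_of_map_eq_zero (hc.prime_aa_one e (fun j => Sum.inl (ξ j))
    (Sum.inl_injective.comp hξ)) (not_dvd_rest hc e ξ hξ) Θ (fun p hp => ?_) ?_ (E f)
    ((hΘE f).trans hf)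
  · have h2 := map_dvd G hdiv
    rw [hGE] at h2
    have h3 : G (E (dq (aa e (fun i j => C (c i j)) (fun j => X (Sum.inl (ξ j)))) (fun i => X (Sum.inr i)))) ∣ f := by
      rw [hEq]; exact h2
    rwa [hGE] at h3
  · apply hind
    rw [map_zero]
    simpa [Θ] using hp
  · have h3 := hΘE (dq (aa e (fun i j => C (c i j)) (fun j => X (Sum.inl (ξ j)))) (fun i => X (Sum.inr i)))
    rw [hEq] at h3
    refine h3.trans (Eq.trans ?_ hq)
    refine (dq_map (aeval (R := ℂ) (Sum.elim x z)).toRingHom _ _).symm.trans ?_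
    have : ∀ i, (aeval (R := ℂ) (Sum.elim x z)).toRingHom (aa e (fun i j => C (c i j)) (fun j => X (Sum.inl (ξ j))) i) =
        aa e (fun i j => algebraMap ℂ M (c i j)) (fun j => x (ξ j)) i := by
      intro i
      rw [aa_map]
      simp
    simp only [this]
    simp

end Kernel

section Param

/-- An intermediate field closed under solving monic quadratic equations. -/
def QuadClosed {M : Type*} [Field M] [Algebra ℂ M] (N : IntermediateField ℂ M) : Prop :=
  ∀ u p q : M, p ∈ N → q ∈ N → u * u = p * u + q → u ∈ N

open scoped IntermediateField.algebraAdjoinAdjoin in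
/-- If `M` contains `|T|` algebraically independent elements, then `|T|` elements of `M` over
which `M` is algebraic are algebraically independent. -/
theorem algebraicIndependent_of_quadClosed {T M : Type*} [Finite T] [Field M] [Algebra ℂ M]
    (g h : T → M) (hg : AlgebraicIndependent ℂ g)
    (H : ∀ N : IntermediateField ℂ M, (∀ t, h t ∈ N) → QuadClosed N → ∀ u, u ∈ N) :
    AlgebraicIndependent ℂ h := by
  have hN := H ((algebraicClosure (IntermediateField.adjoin ℂ (Set.range h)) M).restrictScalars ℂ)
    (fun t => ?_) ?_
  · have h1 : Algebra.IsAlgebraic (IntermediateField.adjoin ℂ (Set.range h)) M :=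
      ⟨fun u => (mem_algebraicClosure_iff).1 (hN u)⟩
    have h2 : Algebra.IsAlgebraic (Algebra.adjoin ℂ (Set.range h)) M :=
      (IsFractionRing.comap_isAlgebraic_iff (K := IntermediateField.adjoin ℂ (Set.range h))).2 h1
    exact (Algebra.IsAlgebraic.isTranscendenceBasis_of_lift_le_trdeg_of_finite ℂ h hg.lift_cardinalMk_le_trdeg).1
  · change h t ∈ algebraicClosure _ M
    rw [mem_algebraicClosure_iff]
    exact isAlgebraic_algebraMap
      (⟨h t, IntermediateField.subset_adjoin ℂ _ ⟨t, rfl⟩⟩ : IntermediateField.adjoin ℂ (Set.range h))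
  · intro u p q hp hq hu
    change u ∈ algebraicClosure (IntermediateField.adjoin ℂ (Set.range h)) M
    have h1 : IsAlgebraic (algebraicClosure (IntermediateField.adjoin ℂ (Set.range h)) M) u := by
      refine ⟨Polynomial.X ^ 2 - Polynomial.C ⟨p, hp⟩ * Polynomial.X - Polynomial.C ⟨q, hq⟩, ?_, ?_⟩
      · intro h0
        have := congrArg (fun f => Polynomial.coeff f 2) h0
        simp [Polynomial.coeff_X, Polynomial.coeff_C] at this
      · simp only [map_sub, map_mul, map_pow, Polynomial.aeval_X, Polynomial.aeval_C]
        change u ^ 2 - p * u - q = 0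
        linear_combination hu
    rw [mem_algebraicClosure_iff]
    exact h1.restrictScalars (IntermediateField.adjoin ℂ (Set.range h))

theorem mem_of_generators {σ M : Type*} [Field M] [Algebra ℂ M] (N : IntermediateField ℂ M)
    (g : σ → M) (hg : ∀ t, g t ∈ N) (p : MvPolynomial σ ℂ) : aeval g p ∈ N := by
  induction p using MvPolynomial.induction_on with
  | C a => rw [aeval_C]; exact N.algebraMap_mem a
  | add p q hp hq => rw [map_add]; exact N.add_mem hp hq
  | mul_X p t hp => rw [map_mul, aeval_X]; exact N.mul_mem hp (hg t)

variable {k r : ℕ} {c : Fin (r + 3) → Fin (k + 2 + 1) → ℂ}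

theorem aa_mem {M : Type*} [Field M] [Algebra ℂ M] (N : IntermediateField ℂ M)
    (e : Fin (r + 3) → (Fin (k + 2) → Bool)) (x : Fin (k + 2 + 1) → M) (hx : ∀ j, x j ∈ N)
    (i : Fin (r + 3)) : aa e (fun i j => algebraMap ℂ M (c i j)) x i ∈ N := by
  have h := aa_map e (N.val : N →+* M) (fun i j => algebraMap ℂ N (c i j)) (fun j => ⟨x j, hx j⟩) i
  have h2 : aa e (fun i j => algebraMap ℂ M (c i j)) x i =
      N.val (aa e (fun i j => algebraMap ℂ N (c i j)) (fun j => ⟨x j, hx j⟩) i) := h.symm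
  rw [h2]
  exact Subtype.prop _

/-- Rational parametrisation of a diagonal quadric containing the hyperbolic plane
`⟨a_j, a_1⟩`, with the free parameter `v_j`. -/
theorem exists_param {M : Type*} [Field M] [CharZero M] (a v : Fin (r + 3) → M) {j : Fin (r + 3)}
    (hj : j ≠ 1) (haj : a j ≠ 0) (hv : v j ≠ 0) {ρ : M} (hρ : ρ ≠ 0) (hρa : ρ * ρ * a j = -a 1) :
    ∃ z : Fin (r + 3) → M, (∀ l, l ≠ 1 → l ≠ j → z l = v l) ∧ dq a z = 0 ∧
      v j * v j = (2 * z j) * v j +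
        (∑ l ∈ (Finset.univ.erase 1).erase j, a l * v l ^ 2) / a j := by
  classical
  set S := ∑ l ∈ (Finset.univ.erase 1).erase j, a l * v l ^ 2 with hS
  have h2 : (2 : M) ≠ 0 := two_ne_zero
  let s := -S / (a j * v j)
  let zj := (v j + s) / 2
  let z1 := (s - v j) / (2 * ρ)
  refine ⟨fun l => if l = 1 then z1 else if l = j then zj else v l, fun l h1 h2 => by simp [h1, h2], ?_, ?_⟩
  · rw [dq, ← Finset.add_sum_erase _ _ (Finset.mem_univ (1 : Fin (r + 3))),
      ← Finset.add_sum_erase _ _ (Finset.mem_erase.2 ⟨hj, Finset.mem_univ j⟩)]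
    have h3 : ∑ l ∈ (Finset.univ.erase 1).erase j,
        a l * (if l = 1 then z1 else if l = j then zj else v l) ^ 2 = S := by
      refine Finset.sum_congr rfl fun l hl => ?_
      simp only [Finset.mem_erase, Finset.mem_univ, and_true] at hl
      simp [hl.1, hl.2]
    rw [h3]
    simp only [if_true, hj, if_false]
    have h4 : a 1 = -(ρ * ρ * a j) := by rw [hρa, neg_neg]
    have h5 : ρ * z1 = (s - v j) / 2 := by simp only [z1]; field_simp
    have h6 : a j * s * v j = -S := by simp only [s]; field_simp
    have h7 : 2 * zj = v j + s := by simp only [zj]; field_simp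
    have h8 : 2 * (ρ * z1) = s - v j := by rw [h5]; field_simp
    rw [h4]
    have h9 : (4 : M) * (-(ρ * ρ * a j) * z1 ^ 2 + (a j * zj ^ 2 + S)) = 0 := by
      linear_combination (-a j * (2 * (ρ * z1) + (s - v j))) * h8 +
        (a j * (2 * zj + v j + s)) * h7 + 4 * h6
    exact (mul_eq_zero.1 h9).resolve_left (by norm_num)
  · simp only [hj, if_false, if_true, zj, s]
    field_simp
    ring

/-- A generic point of the quadric over a field in which `-a_1 / a_j` is a square. -/
theorem VeryGen.exists_generic_point {B : Type*} [Finite B] (hc : VeryGen c)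
    (e : Fin (r + 3) → (Fin (k + 2) → Bool)) (ξ : Fin (k + 2 + 1) → B)
    (hξ : Function.Injective ξ) {M : Type*} [Field M] [Algebra ℂ M] (g : TV B r → M)
    (hg : AlgebraicIndependent ℂ g) (x : B → M) {j : Fin (r + 3)} (hj : j ≠ 1)
    (haj : aa e (fun i j => algebraMap ℂ M (c i j)) (fun j => x (ξ j)) j ≠ 0) {ρ : M} (hρ : ρ ≠ 0)
    (hρa : ρ * ρ * aa e (fun i j => algebraMap ℂ M (c i j)) (fun j => x (ξ j)) j =
      -aa e (fun i j => algebraMap ℂ M (c i j)) (fun j => x (ξ j)) 1)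
    (H : ∀ N : IntermediateField ℂ M, (∀ b, x b ∈ N) → QuadClosed N →
      (∀ l, g (Sum.inr l) ∈ N) → ∀ u, u ∈ N) :
    ∃ z : Fin (r + 3) → M,
      dq (aa e (fun i j => algebraMap ℂ M (c i j)) (fun j => x (ξ j))) z = 0 ∧
      ∀ f : MvPolynomial (B ⊕ Fin (r + 3)) ℂ, aeval (Sum.elim x z) f = 0 →
        dq (aa e (fun i j => C (c i j)) (fun j => X (Sum.inl (ξ j)))) (fun i => X (Sum.inr i)) ∣ f := by
  classical
  haveI : CharZero M := charZero_of_injective_algebraMap (algebraMap ℂ M).injective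
  let v : Fin (r + 3) → M := fun l => if h : l = 1 then 0 else g (Sum.inr ⟨l, h⟩)
  have hv : ∀ l (h : l ≠ 1), v l = g (Sum.inr ⟨l, h⟩) := fun l h => by simp [v, h]
  obtain ⟨z, h1, h2, h3⟩ := exists_param
    (aa e (fun i j => algebraMap ℂ M (c i j)) (fun j => x (ξ j))) v hj haj
    (by rw [hv j hj]; exact hg.ne_zero _) hρ hρa
  refine ⟨z, h2, hc.dvd_of_generic e ξ hξ x z h2 ?_⟩
  refine algebraicIndependent_of_quadClosed g _ hg fun N hN hQ => ?_
  have hx : ∀ b, x b ∈ N := fun b => hN (Sum.inl b)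
  have hz : ∀ l, l ≠ 1 → z l ∈ N := fun l hl => hN (Sum.inr ⟨l, hl⟩)
  have ha := aa_mem (c := c) N e (fun j => x (ξ j)) fun j => hx _
  refine H N hx hQ fun ⟨l, hl⟩ => ?_
  rw [← hv l hl]
  by_cases hlj : l = j
  · subst hlj
    refine hQ _ _ _ (N.mul_mem (by exact_mod_cast N.natCast_mem 2) (hz l hl))
      (N.div_mem (N.sum_mem fun i hi => ?_) (ha _)) h3
    simp only [Finset.mem_erase, Finset.mem_univ, and_true] at hi
    rw [← h1 i hi.2 hi.1]
    exact N.mul_mem (ha i) (pow_mem (hz i hi.2) 2)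
  · rw [← h1 l hl hlj]
    exact hz l hl

end Param

section Points
variable {k r : ℕ} {c : Fin (r + 3) → Fin (k + 2 + 1) → ℂ}

theorem algebraicIndependent_X_of_injective {σ M : Type*} [Field M] [Algebra ℂ M]
    (f : MvPolynomial σ ℂ →ₐ[ℂ] M) (hf : Function.Injective f) :
    AlgebraicIndependent ℂ (fun t => f (X t)) := by
  have h : (aeval fun t => f (X t)) = f := MvPolynomial.algHom_ext fun t => by simp
  rw [AlgebraicIndependent, h]
  exact hf

theorem VeryGen.aa_zero_ne {σ : Type*} (hc : VeryGen c) (e : Fin (r + 3) → (Fin (k + 2) → Bool))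
    (ξ : Fin (k + 2 + 1) → σ) (hξ : Function.Injective ξ) (i : Fin (r + 3)) :
    (aa e (fun i j => C (c i j)) (fun j => X (ξ j)) i : MvPolynomial σ ℂ) ≠ 0 := by
  intro h
  apply hc.aa_single_ne e i 0
  have := congrArg (aeval (Function.extend ξ (Pi.single 0 1 : Fin (k + 2 + 1) → ℂ) 0)) h
  rw [map_zero] at this
  rw [← this]
  refine Eq.trans ?_ (aa_map e (aeval (R := ℂ) (Function.extend ξ (Pi.single 0 1) 0)).toRingHom _ _ i).symm
  simp [hξ.extend_apply]

/-- A generic point over the double cover `w² = -a_0 a_1` of an affine space. -/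
theorem VeryGen.exists_point_double_cover {B : Type*} [Finite B] (hc : VeryGen c)
    (e : Fin (r + 3) → (Fin (k + 2) → Bool)) (ξ : Fin (k + 2 + 1) → B)
    (hξ : Function.Injective ξ) [IsDomain (QA _ (Dgen e c (fun j => (Sum.inl (ξ j) : TV B r))))] :
    ∃ z : Fin (r + 3) → FractionRing (QA _ (Dgen e c (fun j => (Sum.inl (ξ j) : TV B r)))),
      ∀ f : MvPolynomial (B ⊕ Fin (r + 3)) ℂ, aeval (Sum.elim (fun b =>
          algebraMap (QA _ (Dgen e c (fun j => (Sum.inl (ξ j) : TV B r)))) _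
            (algebraMap (MvPolynomial (TV B r) ℂ) _ (X (Sum.inl b)))) z) f = 0 ↔
        dq (aa e (fun i j => C (c i j)) (fun j => X (Sum.inl (ξ j)))) (fun i => X (Sum.inr i)) ∣ f := by
  set D := Dgen e c (fun j => (Sum.inl (ξ j) : TV B r)) with hD
  let α : MvPolynomial (TV B r) ℂ →ₐ[ℂ] FractionRing (QA _ D) :=
    (IsScalarTower.toAlgHom ℂ (QA _ D) _).comp (IsScalarTower.toAlgHom ℂ (MvPolynomial (TV B r) ℂ) (QA _ D))
  have hα : Function.Injective α := by
    refine (IsFractionRing.injective (QA _ D) (FractionRing (QA _ D))).comp ?_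
    intro p q h
    exact congrArg QuadraticAlgebra.re h
  let x : B → FractionRing (QA _ D) := fun b => α (X (Sum.inl b))
  have haa : ∀ i, aa e (fun i j => algebraMap ℂ (FractionRing (QA _ D)) (c i j)) (fun j => x (ξ j)) i =
      α (aa e (fun i j => C (c i j)) (fun j => X (Sum.inl (ξ j))) i) := by
    intro i
    refine Eq.trans ?_ (aa_map e α.toRingHom _ _ i).symm
    have : ∀ q : ℂ, α (C q) = algebraMap ℂ _ q := α.commutes
    simp [x, this]
  have h0 : ∀ i, aa e (fun i j => algebraMap ℂ (FractionRing (QA _ D)) (c i j)) (fun j => x (ξ j)) i ≠ 0 := by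
    intro i
    rw [haa, Ne, map_eq_zero_iff α hα]
    exact hc.aa_zero_ne e _ (Sum.inl_injective.comp hξ) i
  let ω : FractionRing (QA _ D) := algebraMap (QA _ D) _ ⟨0, 1⟩
  have hω : ω * ω = α D := by
    simp only [ω, α, ← map_mul]
    change algebraMap (QA _ D) _ _ = algebraMap (QA _ D) _ (algebraMap _ (QA _ D) D)
    congr 1
    ext <;> simp
  have hDa : α D = -(aa e (fun i j => algebraMap ℂ (FractionRing (QA _ D)) (c i j)) (fun j => x (ξ j)) 0 *
      aa e (fun i j => algebraMap ℂ (FractionRing (QA _ D)) (c i j)) (fun j => x (ξ j)) 1) := by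
    rw [haa, haa, ← map_mul, ← map_neg]
    exact congrArg α hD
  have hω0 : ω ≠ 0 := by
    intro h
    rw [h, mul_zero, hDa] at hω
    exact mul_ne_zero (h0 0) (h0 1) (neg_eq_zero.1 hω.symm)
  obtain ⟨z, h1, h2⟩ := hc.exists_generic_point e ξ hξ (fun t => α (X t))
    (algebraicIndependent_X_of_injective α hα) x (j := 0) (by simp) (h0 0)
    (ρ := ω / aa e (fun i j => algebraMap ℂ (FractionRing (QA _ D)) (c i j)) (fun j => x (ξ j)) 0)
    (div_ne_zero hω0 (h0 0)) (by
      rw [div_mul_div_comm, hω, hDa]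
      have := h0 0
      field_simp) (fun N hx hQ hN => by
      have hg : ∀ t, α (X t) ∈ N := by
        rintro (b | l)
        · exact hx b
        · exact hN l
      have hαN : ∀ p, α p ∈ N := by
        intro p
        have h : (aeval fun t => α (X t)) = α := MvPolynomial.algHom_ext fun t => by simp
        rw [← h]
        exact mem_of_generators N _ hg p
      have hωN : ω ∈ N := hQ ω 0 (α D) N.zero_mem (hαN D) (by rw [hω]; ring)
      have hQA : ∀ u : QA _ D, algebraMap (QA _ D) (FractionRing (QA _ D)) u ∈ N := by
        intro u
        have : algebraMap (QA _ D) (FractionRing (QA _ D)) u = α u.re + α u.im * ω := by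
          simp only [ω, α]
          change _ = algebraMap (QA _ D) _ (algebraMap _ (QA _ D) u.re) +
            algebraMap (QA _ D) _ (algebraMap _ (QA _ D) u.im) * algebraMap (QA _ D) _ ⟨0, 1⟩
          rw [← map_mul, ← map_add]
          congr 1
          ext <;> simp
        rw [this]
        exact N.add_mem (hαN _) (N.mul_mem (hαN _) hωN)
      intro u
      obtain ⟨p, s, _, rfl⟩ := IsFractionRing.div_surjective (A := QA _ D) u
      exact N.div_mem (hQA p) (hQA s))
  refine ⟨z, fun f => ⟨h2 f, ?_⟩⟩
  rintro ⟨g, rfl⟩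
  rw [map_mul]
  refine mul_eq_zero_of_left ?_ _
  refine Eq.trans ?_ h1
  refine (dq_map (aeval (R := ℂ) (Sum.elim x z)).toRingHom _ _).symm.trans ?_
  simp only [aa_map]
  simp

/-- A generic point over a rational function field: the coordinate `x_1` is chosen such that
`-a_1 / a_2` becomes the square of a free parameter, which is possible because
`a_1` and `a_2` are linear forms. -/
theorem VeryGen.exists_rational_point {B : Type*} [Finite B] (hc : VeryGen c)
    (e : Fin (r + 3) → (Fin (k + 2) → Bool)) (ξ : Fin (k + 2 + 1) → B)
    (hξ : Function.Injective ξ) :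
    ∃ (x : B → FractionRing (MvPolynomial (TV B r) ℂ))
      (z : Fin (r + 3) → FractionRing (MvPolynomial (TV B r) ℂ)),
      ∀ f : MvPolynomial (B ⊕ Fin (r + 3)) ℂ, aeval (Sum.elim x z) f = 0 ↔
        dq (aa e (fun i j => C (c i j)) (fun j => X (Sum.inl (ξ j)))) (fun i => X (Sum.inr i)) ∣ f := by
  classical
  let α : MvPolynomial (TV B r) ℂ →ₐ[ℂ] FractionRing (MvPolynomial (TV B r) ℂ) :=
    IsScalarTower.toAlgHom ℂ (MvPolynomial (TV B r) ℂ) _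
  have hα : Function.Injective α := IsFractionRing.injective _ _
  let κ := algebraMap ℂ (FractionRing (MvPolynomial (TV B r) ℂ))
  have hαC : ∀ q : ℂ, α (C q) = κ q := α.commutes
  let d : Fin (r + 3) → Fin (k + 2 + 1) → ℂ := fun i j => c i j + if (j : ℕ) = (i : ℕ) then 1 else 0
  let w := α (X (Sum.inl (ξ 1)))
  let den := κ (1 + c 1 1) + w ^ 2 * κ (c 2 1)
  let num := ∑ j ∈ Finset.univ.erase (1 : Fin (k + 2 + 1)),
    (κ (d 1 j) + w ^ 2 * κ (d 2 j)) * α (X (Sum.inl (ξ j)))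
  let x : B → FractionRing (MvPolynomial (TV B r) ℂ) := fun b =>
    if b = ξ 1 then -num / den else α (X (Sum.inl b))
  have hx1 : x (ξ 1) = -num / den := by simp [x]
  have hxj : ∀ j, j ≠ 1 → x (ξ j) = α (X (Sum.inl (ξ j))) := fun j hj => by
    simp [x, hξ.eq_iff, hj]
  have hd11 : d 1 1 = 1 + c 1 1 := by
    simp only [d]; rw [if_pos (by simp), add_comm]
  have hd21 : d 2 1 = c 2 1 := by
    have h : ¬ ((1 : Fin (k + 2 + 1)) : ℕ) = ((2 : Fin (r + 3)) : ℕ) := by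
      rw [Fin.val_two]; simp
    simp only [d]; rw [if_neg h, add_zero]
  have hd22 : d 2 2 = 1 + c 2 2 := by
    have h : ((2 : Fin (k + 2 + 1)) : ℕ) = ((2 : Fin (r + 3)) : ℕ) := rfl
    simp only [d]; rw [if_pos h, add_comm]
  have hd12 : d 1 2 = c 1 2 := by
    have h : ¬ ((2 : Fin (k + 2 + 1)) : ℕ) = ((1 : Fin (r + 3)) : ℕ) := by
      rw [Fin.val_two]; simp
    simp only [d]; rw [if_neg h, add_zero]
  have ha1 : aa e (fun i j => κ (c i j)) (fun j => x (ξ j)) 1 = ∑ j, κ (d 1 j) * x (ξ j) := by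
    rw [aa_one]
    have : ∀ j, κ (d 1 j) * x (ξ j) = (if j = 1 then x (ξ j) else 0) + κ (c 1 j) * x (ξ j) := by
      intro j
      have h : ((j : ℕ) = ((1 : Fin (r + 3)) : ℕ)) ↔ j = 1 := by
        rw [Fin.ext_iff]; simp
      simp only [d, h, map_add]
      split_ifs <;> simp; ring
    rw [Finset.sum_congr rfl fun j _ => this j, Finset.sum_add_distrib]
    simp
  have ha2 : aa e (fun i j => κ (c i j)) (fun j => x (ξ j)) 2 = ∑ j, κ (d 2 j) * x (ξ j) := by
    rw [aa_two]
    have : ∀ j, κ (d 2 j) * x (ξ j) = (if j = 2 then x (ξ j) else 0) + κ (c 2 j) * x (ξ j) := by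
      intro j
      have h : ((j : ℕ) = ((2 : Fin (r + 3)) : ℕ)) ↔ j = 2 := by
        rw [Fin.ext_iff]; rfl
      simp only [d, h, map_add]
      split_ifs <;> simp; ring
    rw [Finset.sum_congr rfl fun j _ => this j, Finset.sum_add_distrib]
    simp
  have h11 : 1 + c 1 1 ≠ 0 := by
    have := hc.aa_single_ne e 1 1
    rw [aa_one] at this
    simpa [Pi.single_apply] using this
  have hden : den ≠ 0 := by
    have : den = α (C (1 + c 1 1) + X (Sum.inl (ξ 1)) ^ 2 * C (c 2 1)) := by
      simp only [map_add, map_mul, map_pow, hαC, den, w]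
    rw [this, Ne, map_eq_zero_iff α hα]
    intro h
    have := congrArg constantCoeff h
    simp at this
    exact h11 this
  have hw0 : w ≠ 0 := by
    rw [Ne, map_eq_zero_iff α hα]
    exact X_ne_zero _
  have hrel : w * w * aa e (fun i j => κ (c i j)) (fun j => x (ξ j)) 2 =
      -aa e (fun i j => κ (c i j)) (fun j => x (ξ j)) 1 := by
    have h1 : ∑ j, (κ (d 1 j) + w ^ 2 * κ (d 2 j)) * x (ξ j) = 0 := by
      rw [← Finset.add_sum_erase _ _ (Finset.mem_univ (1 : Fin (k + 2 + 1)))]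
      have : ∑ j ∈ Finset.univ.erase (1 : Fin (k + 2 + 1)),
          (κ (d 1 j) + w ^ 2 * κ (d 2 j)) * x (ξ j) = num :=
        Finset.sum_congr rfl fun j hj => by rw [hxj j (Finset.ne_of_mem_erase hj)]
      rw [this, hx1, hd11, hd21]
      change den * (-num / den) + num = 0
      field_simp
      ring
    simp only [add_mul, Finset.sum_add_distrib, mul_assoc, ← Finset.mul_sum] at h1
    rw [ha1, ha2]
    linear_combination h1
  have ha20 : aa e (fun i j => κ (c i j)) (fun j => x (ξ j)) 2 ≠ 0 := by
    intro h
    rw [h, mul_zero] at hrel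
    have h' := neg_eq_zero.1 hrel.symm
    rw [ha1] at h'
    rw [ha2] at h
    have h21 := (fin_two_ne_one (r := k))
    let m : Fin (k + 2 + 1) → ℂ := fun j => (1 + c 1 1) * d 2 j - c 2 1 * d 1 j
    have hm1 : m 1 = 0 := by simp only [m, hd11, hd21]; ring
    have hm : α (∑ j, C (m j) * X (Sum.inl (ξ j))) = 0 := by
      have : ∀ j, α (C (m j) * X (Sum.inl (ξ j))) =
          κ (1 + c 1 1) * (κ (d 2 j) * x (ξ j)) - κ (c 2 1) * (κ (d 1 j) * x (ξ j)) := by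
        intro j
        by_cases hj : j = 1
        · subst hj
          rw [hm1, hd11, hd21]
          simp only [map_zero, zero_mul]
          ring
        · rw [hxj j hj, map_mul, hαC]
          simp only [m, map_sub, map_mul]
          ring
      rw [map_sum, Finset.sum_congr rfl fun j _ => this j, Finset.sum_sub_distrib, ← Finset.mul_sum,
        ← Finset.mul_sum, h, h']
      ring
    rw [map_eq_zero_iff α hα] at hm
    have := congrArg (eval (Sum.elim (fun b => if b = ξ 2 then (1 : ℂ) else 0) 0)) hm
    simp [hξ.eq_iff, m, hd22, hd12] at this
    exact hc.minor_ne (by linear_combination this)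
  obtain ⟨z, h1, h2⟩ := hc.exists_generic_point e ξ hξ (fun t => α (X t))
    (algebraicIndependent_X_of_injective α hα) x (j := 2) fin_two_ne_one ha20 hw0 hrel
    (fun N hx hQ hN => by
      have ha := aa_mem (c := c) N e (fun j => x (ξ j)) fun j => hx _
      have hwN : w ∈ N := by
        refine hQ w 0 (-aa e (fun i j => κ (c i j)) (fun j => x (ξ j)) 1 /
          aa e (fun i j => κ (c i j)) (fun j => x (ξ j)) 2) N.zero_mem
          (N.div_mem (N.neg_mem (ha 1)) (ha 2)) ?_
        rw [← hrel, mul_div_cancel_right₀ _ ha20]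
        ring
      have hg : ∀ t, α (X t) ∈ N := by
        rintro (b | l)
        · by_cases hb : b = ξ 1
          · rw [hb]; exact hwN
          · have := hx b
            simpa [x, hb] using this
        · exact hN l
      have hαN : ∀ p, α p ∈ N := by
        intro p
        have h : (aeval fun t => α (X t)) = α := MvPolynomial.algHom_ext fun t => by simp
        rw [← h]
        exact mem_of_generators N _ hg p
      intro u
      obtain ⟨p, s, _, rfl⟩ := IsFractionRing.div_surjective (A := MvPolynomial (TV B r) ℂ) u
      exact N.div_mem (hαN p) (hαN s))
  refine ⟨x, z, fun f => ⟨h2 f, ?_⟩⟩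
  rintro ⟨g, rfl⟩
  rw [map_mul]
  refine mul_eq_zero_of_left ?_ _
  refine Eq.trans ?_ h1
  refine (dq_map (aeval (R := ℂ) (Sum.elim x z)).toRingHom _ _).symm.trans ?_
  simp only [aa_map]
  simp

end Points

/-! ### Numbering the coefficients and their degrees -/

theorem exists_pfNumbering {k r : ℕ} (h : r + 3 ≤ 2 ^ (k + 2)) :
    ∃ e : Fin (r + 3) → (Fin (k + 2) → Bool), PfNumbering e := by
  obtain ⟨f⟩ : Nonempty (Fin (r + 3) ↪ (Fin (k + 2) → Bool)) :=
    Function.Embedding.nonempty_of_card_le (by simpa using h)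
  have hlt : ∀ i : Fin 3, (i : ℕ) < r + 3 := fun i => by omega
  let x : Fin 3 ↪ (Fin (k + 2) → Bool) :=
    ⟨fun i => f ⟨i, hlt i⟩, fun i j hij => by
      have := f.injective hij
      simpa [Fin.ext_iff] using this⟩
  have hy : Function.Injective
      (![fun _ => false, sgl 0, sgl 1] : Fin 3 → (Fin (k + 2) → Bool)) := by
    have h01 : (fun _ => false) ≠ (sgl 0 : Fin (k + 2) → Bool) := fun h => by
      simpa [sgl] using congrFun h 0
    have h02 : (fun _ => false) ≠ (sgl 1 : Fin (k + 2) → Bool) := fun h => by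
      simpa [sgl] using congrFun h 1
    have h12 : (sgl 0 : Fin (k + 2) → Bool) ≠ sgl 1 := fun h => by
      simpa [sgl] using congrFun h 0
    intro i j hij
    fin_cases i <;> fin_cases j <;> simp_all [eq_comm]
  obtain ⟨g, hg⟩ := (MulAction.isMultiplyPretransitive_iff.1
    (Equiv.Perm.isMultiplyPretransitive (Fin (k + 2) → Bool) 3)) x ⟨_, hy⟩
  have hg' : ∀ i : Fin 3, g (f ⟨i, hlt i⟩) =
      (![fun _ => false, sgl 0, sgl 1] : Fin 3 → (Fin (k + 2) → Bool)) i :=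
    fun i => DFunLike.congr_fun hg i
  refine ⟨fun i => g (f i), g.injective.comp f.injective, ?_, ?_, ?_⟩
  · exact hg' 0
  · refine Eq.trans ?_ (hg' 1)
    congr 2
  · refine Eq.trans ?_ (hg' 2)
    congr 2

section Degrees
variable {k r : ℕ} {σ : Type*}

theorem isHomogeneous_FF (ξ : Fin (k + 2 + 1) → σ) :
    (FF fun j => (X (ξ j) : MvPolynomial σ ℂ)).IsHomogeneous (2 * (k + 2 + 2)) := by
  have hX : ∀ j, (X (ξ j) : MvPolynomial σ ℂ).IsHomogeneous 1 := fun j => isHomogeneous_X _ _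
  unfold FF
  refine IsHomogeneous.sub ?_ ?_
  · have h9 : (9 : MvPolynomial σ ℂ) = C 9 := (map_ofNat C 9).symm
    rw [h9]
    have := (isHomogeneous_C σ (9 : ℂ)).mul
      ((IsHomogeneous.sum Finset.univ _ 1 fun j _ => hX j).pow (2 * (k + 2) + 4))
    exact (show 0 + 1 * (2 * (k + 2) + 4) = 2 * (k + 2 + 2) by ring) ▸ this
  · have := ((hX 0).mul (hX 1)).mul
      ((IsHomogeneous.prod Finset.univ _ (fun _ => 1) fun j _ => hX j).pow 2)
    have h2 : 1 + 1 + (∑ _j : Fin (k + 2 + 1), 1) * 2 = 2 * (k + 2 + 2) := by simp; ring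
    exact h2 ▸ this

theorem isHomogeneous_pfc (ξ : Fin (k + 1) → σ) (ε : Fin k → Bool) :
    (pfc (fun j => (X (ξ j) : MvPolynomial σ ℂ)) ε).IsHomogeneous (2 * wt ε) := by
  have := IsHomogeneous.prod Finset.univ
    (fun i => if ε i then slots (fun j => (X (ξ j) : MvPolynomial σ ℂ)) i else 1)
    (fun i => 2 * if ε i then 1 else 0) (fun i _ => by
      split_ifs
      · exact (isHomogeneous_X _ _).mul (isHomogeneous_X _ _)
      · exact isHomogeneous_one _ _)
  rw [← Finset.mul_sum] at this
  exact this

theorem isHomogeneous_aa (e : Fin (r + 3) → (Fin (k + 2) → Bool))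
    (c : Fin (r + 3) → Fin (k + 2 + 1) → ℂ) (ξ : Fin (k + 2 + 1) → σ) (i : Fin (r + 3)) :
    (aa e (fun i j => C (c i j)) (fun j => (X (ξ j) : MvPolynomial σ ℂ)) i).IsHomogeneous
      (2 * ee e i + 1) := by
  have hX : ∀ j, (X (ξ j) : MvPolynomial σ ℂ).IsHomogeneous 1 := fun j => isHomogeneous_X _ _
  refine IsHomogeneous.add ?_ (IsHomogeneous.sum _ _ _ fun j _ => ?_)
  · unfold PP ee
    split_ifs
    · rw [add_comm (2 * (k + 2 + 2)) 1]
      exact (hX 0).mul (isHomogeneous_FF ξ)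
    · exact hX 1
    · exact hX 2
    · rw [add_comm (2 * wt (e i)) 1]
      exact (hX 0).mul (isHomogeneous_pfc ξ _)
  · have := (isHomogeneous_C σ (c i j)).mul ((hX j).pow (2 * ee e i + 1))
    convert this using 1
    ring

theorem aa_rename {τ : Type*} (f : σ → τ) (e : Fin (r + 3) → (Fin (k + 2) → Bool))
    (c : Fin (r + 3) → Fin (k + 2 + 1) → ℂ) (ξ : Fin (k + 2 + 1) → σ) (i : Fin (r + 3)) :
    rename f (aa e (fun i j => C (c i j)) (fun j => (X (ξ j) : MvPolynomial σ ℂ)) i) =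
      aa e (fun i j => C (c i j)) (fun j => (X (f (ξ j)) : MvPolynomial τ ℂ)) i := by
  refine (aa_map e (rename (R := ℂ) f).toRingHom _ _ i).trans ?_
  simp

end Degrees

/-! ### The multicone over the quadric bundle -/

section Cone
variable {k r : ℕ} {c : Fin (r + 3) → Fin (k + 2 + 1) → ℂ}

/-- The equation of the quadric bundle in the variables `B` and `z_i`, the homogeneous
coordinates of `ℙ^k` being the variables `ξ j`. -/
def coneEq {B : Type*} (e : Fin (r + 3) → (Fin (k + 2) → Bool))
    (c : Fin (r + 3) → Fin (k + 2 + 1) → ℂ) (ξ : Fin (k + 2 + 1) → B) :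
    MvPolynomial (B ⊕ Fin (r + 3)) ℂ :=
  dq (aa e (fun i j => C (c i j)) (fun j => X (Sum.inl (ξ j)))) (fun i => X (Sum.inr i))

/-- The multicone is unirational: its coordinate ring embeds into a rational function field. -/
theorem VeryGen.exists_cone_embedding {B : Type*} [Fintype B] (hc : VeryGen c)
    (e : Fin (r + 3) → (Fin (k + 2) → Bool)) (ξ : Fin (k + 2 + 1) → B)
    (hξ : Function.Injective ξ) (I : Ideal (MvPolynomial (B ⊕ Fin (r + 3)) ℂ))
    (hI : I = Ideal.span {coneEq e c ξ}) :
    ∃ (d : ℕ) (f : (MvPolynomial (B ⊕ Fin (r + 3)) ℂ ⧸ I) →ₐ[ℂ]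
      FractionRing (MvPolynomial (Fin d) ℂ)), Function.Injective f := by
  obtain ⟨x, z, h⟩ := hc.exists_rational_point e ξ hξ
  let g : (MvPolynomial (B ⊕ Fin (r + 3)) ℂ ⧸ I) →ₐ[ℂ] FractionRing (MvPolynomial (TV B r) ℂ) :=
    Ideal.Quotient.liftₐ I (aeval (Sum.elim x z)) fun p hp => by
      rw [hI, Ideal.mem_span_singleton] at hp
      exact (h p).2 hp
  have hg : Function.Injective g := by
    rw [injective_iff_map_eq_zero]
    intro p hp
    obtain ⟨p, rfl⟩ := Ideal.Quotient.mk_surjective p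
    rw [Ideal.Quotient.eq_zero_iff_mem, hI, Ideal.mem_span_singleton]
    exact (h p).1 hp
  let E : MvPolynomial (TV B r) ℂ ≃ₐ[ℂ] MvPolynomial (Fin (Fintype.card (TV B r))) ℂ :=
    renameEquiv ℂ (Fintype.equivFin (TV B r))
  let E' : FractionRing (MvPolynomial (TV B r) ℂ) ≃ₐ[ℂ]
      FractionRing (MvPolynomial (Fin (Fintype.card (TV B r))) ℂ) :=
    IsFractionRing.fieldEquivOfAlgEquiv ℂ _ _ E
  exact ⟨_, E'.toAlgHom.comp g, E'.injective.comp hg⟩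

theorem VeryGen.not_coneEq_dvd {B : Type*} (hc : VeryGen c)
    (e : Fin (r + 3) → (Fin (k + 2) → Bool)) (ξ : Fin (k + 2 + 1) → B)
    (hξ : Function.Injective ξ) : ¬ coneEq e c ξ ∣ X (Sum.inr 0) := by
  rintro ⟨g, hg⟩
  let y : Fin (k + 2 + 1) → ℂ := Pi.single 0 1
  obtain ⟨w, hw⟩ := IsAlgClosed.exists_pow_nat_eq (-aa e c y 0 / aa e c y 1) (n := 2) (by simp)
  -- the zero `(1, w, 0, …, 0)` of the quadratic form over the point `y`
  let v : Fin (r + 3) → ℂ := fun i => if i = 0 then 1 else if i = 1 then w else 0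
  let ρ := eval (Sum.elim (Function.extend ξ y 0) v)
  have h0 : ρ (coneEq e c ξ) = dq (aa e c y) v := by
    refine (dq_map ρ _ _).symm.trans ?_
    congr 1
    · funext i
      refine (aa_map e ρ _ _ i).trans ?_
      simp [ρ, hξ.extend_apply]
    · funext i
      simp [ρ]
  have h1 : dq (aa e c y) v = 0 := by
    have ha : aa e c y 1 ≠ 0 := hc.aa_single_ne e 1 0
    have : dq (aa e c y) v = aa e c y 0 + aa e c y 1 * w ^ 2 := by
      unfold dq
      rw [Fintype.sum_eq_add (0 : Fin (r + 3)) 1 (by simp)]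
      · simp [v]
      · rintro i ⟨hi0, hi1⟩
        simp [v, hi0, hi1]
    rw [this, hw, mul_div_cancel₀ _ ha, add_neg_cancel]
  have h2 := congrArg ρ hg
  rw [map_mul, h0, h1, zero_mul] at h2
  simp [ρ, v] at h2

/-- The multicone is not stably rational: the function field of its product with an affine
space embeds into that of a double cover of an affine space, by a generic point. -/
theorem VeryGen.cone_not_stably_rational {B : Type*} [Finite B] (hc : VeryGen c)
    {e : Fin (r + 3) → (Fin (k + 2) → Bool)} (he : PfNumbering e) (ξ : Fin (k + 2 + 1) → B)
    (hξ : Function.Injective ξ) (I : Ideal (MvPolynomial (B ⊕ Fin (r + 3)) ℂ))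
    (hI : I = Ideal.span {coneEq e c ξ}) [IsDomain (MvPolynomial (B ⊕ Fin (r + 3)) ℂ ⧸ I)]
    (m d : ℕ)
    (φ : FractionRing (MvPolynomial (Fin m) (MvPolynomial (B ⊕ Fin (r + 3)) ℂ ⧸ I)) ≃ₐ[ℂ]
      FractionRing (MvPolynomial (Fin d) ℂ)) : False := by
  let ξ' : Fin (k + 2 + 1) → Fin m ⊕ B := fun j => Sum.inr (ξ j)
  have hξ' : Function.Injective ξ' := Sum.inr_injective.comp hξ
  let η : Fin (k + 2 + 1) → TV (Fin m ⊕ B) r := fun j => Sum.inl (ξ' j)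
  have hη : Function.Injective η := Sum.inl_injective.comp hξ'
  haveI : IsDomain (QA _ (Dgen e c η)) := (hc.nsq e η hη).isDomain
  obtain ⟨z, hz⟩ := hc.exists_point_double_cover e ξ' hξ'
  have hpt : ∃ u : Fin m ⊕ B → FractionRing (QA _ (Dgen e c η)),
      u = fun b => algebraMap (QA _ (Dgen e c η)) _
        (algebraMap (MvPolynomial (TV (Fin m ⊕ B) r) ℂ) _ (X (Sum.inl b))) := ⟨_, rfl⟩
  obtain ⟨u, hu⟩ := hpt
  replace hz : ∀ f : MvPolynomial ((Fin m ⊕ B) ⊕ Fin (r + 3)) ℂ,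
      aeval (Sum.elim u z) f = 0 ↔ coneEq e c ξ' ∣ f := by
    rw [hu]; exact hz
  -- the inclusion of the coordinates of the multicone
  let s : B ⊕ Fin (r + 3) → (Fin m ⊕ B) ⊕ Fin (r + 3) :=
    Sum.elim (fun b => Sum.inl (Sum.inr b)) Sum.inr
  have hs : rename s (coneEq e c ξ) = coneEq e c ξ' := by
    unfold coneEq
    refine (dq_map (rename (R := ℂ) s).toRingHom _ _).symm.trans ?_
    congr 1
    · funext i
      exact aa_rename s e c (fun j => Sum.inl (ξ j)) i
    · funext i
      exact rename_X _ _
  let θ₀ : (MvPolynomial (B ⊕ Fin (r + 3)) ℂ ⧸ I) →ₐ[ℂ] FractionRing (QA _ (Dgen e c η)) :=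
    Ideal.Quotient.liftₐ I ((aeval (Sum.elim u z)).comp (rename s)) fun p hp => by
      rw [hI, Ideal.mem_span_singleton] at hp
      refine (hz _).2 ?_
      rw [← hs]
      exact map_dvd (rename (R := ℂ) s) hp
  let θ : MvPolynomial (Fin m) (MvPolynomial (B ⊕ Fin (r + 3)) ℂ ⧸ I) →ₐ[ℂ]
      FractionRing (QA _ (Dgen e c η)) :=
    aevalTower θ₀ (fun i => u (Sum.inl i))
  -- the coordinates of the product of the multicone with an affine space
  let π : MvPolynomial ((Fin m ⊕ B) ⊕ Fin (r + 3)) ℂ →ₐ[ℂ]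
      MvPolynomial (Fin m) (MvPolynomial (B ⊕ Fin (r + 3)) ℂ ⧸ I) :=
    aeval (Sum.elim (Sum.elim X fun b => C (Ideal.Quotient.mk I (X (Sum.inl b))))
      fun i => C (Ideal.Quotient.mk I (X (Sum.inr i))))
  have hπs : ∀ p, π (rename s p) = C (Ideal.Quotient.mk I p) := by
    intro p
    have h : π.comp (rename s) =
        ((Algebra.ofId (MvPolynomial (B ⊕ Fin (r + 3)) ℂ ⧸ I)
          (MvPolynomial (Fin m) (MvPolynomial (B ⊕ Fin (r + 3)) ℂ ⧸ I))).restrictScalars ℂ).comp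
          (Ideal.Quotient.mkₐ ℂ I) := by
      refine MvPolynomial.algHom_ext fun v => ?_
      rcases v with b | i
      · simp [π, s, Algebra.ofId_apply, algebraMap_eq]
      · simp [π, s, Algebra.ofId_apply, algebraMap_eq]
    exact DFunLike.congr_fun h p
  have hπ : Function.Surjective π := by
    intro g
    induction g using MvPolynomial.induction_on with
    | C a =>
      obtain ⟨p, rfl⟩ := Ideal.Quotient.mk_surjective a
      exact ⟨_, hπs p⟩
    | add p q hp hq =>
      obtain ⟨p, rfl⟩ := hp
      obtain ⟨q, rfl⟩ := hq
      exact ⟨_, map_add π p q⟩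
    | mul_X p i hp =>
      obtain ⟨p, rfl⟩ := hp
      exact ⟨p * X (Sum.inl (Sum.inl i)), by rw [map_mul]; simp [π]⟩
  have hθ₀ : ∀ p, θ₀ (Ideal.Quotient.mk I p) = aeval (Sum.elim u z) (rename s p) := fun p => rfl
  have hθπ : ∀ f, θ (π f) = aeval (Sum.elim u z) f := by
    intro f
    have h : θ.comp π = aeval (Sum.elim u z) := by
      refine MvPolynomial.algHom_ext fun v => ?_
      rcases v with (i | b) | i
      · simp [θ, π]
      · simp [θ, π, hθ₀, s]
      · simp [θ, π, hθ₀, s]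
    exact DFunLike.congr_fun h f
  have hθ : Function.Injective θ := by
    rw [injective_iff_map_eq_zero]
    intro g hg
    obtain ⟨f, rfl⟩ := hπ g
    rw [hθπ, hz, ← hs] at hg
    obtain ⟨h, rfl⟩ := hg
    rw [map_mul, hπs, Ideal.Quotient.eq_zero_iff_mem.2, map_zero, zero_mul]
    rw [hI]
    exact Ideal.mem_span_singleton_self _
  let κ : MvPolynomial (B ⊕ Fin (r + 3)) ℂ →ₐ[ℂ]
      FractionRing (MvPolynomial (Fin m) (MvPolynomial (B ⊕ Fin (r + 3)) ℂ ⧸ I)) :=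
    (IsScalarTower.toAlgHom ℂ (MvPolynomial (Fin m) (MvPolynomial (B ⊕ Fin (r + 3)) ℂ ⧸ I)) _).comp
      (π.comp (rename s))
  let ι : FractionRing (MvPolynomial (Fin m) (MvPolynomial (B ⊕ Fin (r + 3)) ℂ ⧸ I)) →ₐ[ℂ]
      FractionRing (QA _ (Dgen e c η)) := IsFractionRing.liftAlgHom (R := ℂ)
      (A := MvPolynomial (Fin m) (MvPolynomial (B ⊕ Fin (r + 3)) ℂ ⧸ I)) (g := θ) hθ
  have hι : ∀ p, ι (κ p) = aeval (Sum.elim u z) (rename s p) := fun p => by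
    rw [← hθπ]
    exact IsFractionRing.lift_algebraMap hθ _
  have hκ : κ (coneEq e c ξ) = 0 := by
    refine ι.toRingHom.injective ?_
    rw [map_zero]
    exact (hι _).trans ((hz _).2 (hs ▸ dvd_rfl))
  refine not_rational_of_embedding he hc η hη (fun j => κ (X (Sum.inl (ξ j))))
    (fun i => κ (X (Sum.inr i))) ?_ ?_ ι ?_ d φ
  · intro h
    have h0 : ι (κ (X (Sum.inr 0))) = 0 := by rw [congrFun h 0]; exact map_zero ι
    rw [hι, hz, rename_X] at h0
    exact hc.not_coneEq_dvd e ξ' hξ' h0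
  · refine Eq.trans ?_ hκ
    refine Eq.trans ?_ (dq_map κ.toRingHom _ _)
    congr 1
    funext i
    refine Eq.trans ?_ (aa_map e κ.toRingHom _ _ i).symm
    simp [-map_C, MvPolynomial.algHom_C]
  · intro j
    rw [hι, rename_X, aeval_X]
    simp only [s, Sum.elim_inl, hu]
    rfl

end Cone

/-! ### The quadric bundle and its affine charts -/

section Assembly
variable {k r : ℕ}

/-- The diagonal matrix of coefficients of the quadric bundle, as a line bundle valued
quadratic form on `⊕ O(0, -ee e i)` with values in `O(0, 1)`. -/
def theMat (n : ℕ) (e : Fin (r + 3) → (Fin (k + 2) → Bool))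
    (c : Fin (r + 3) → Fin (k + 2 + 1) → ℂ) :
    QB2.SymMat n (k + 2) (r + 1) 0 (fun i => (ee e i : ℤ)) 0 1 :=
  ⟨Matrix.diagonal (aa e (fun i j => C (c i j)) fun j => X (Sum.inr j)), by
    intro i j
    exact congrFun (congrFun (Matrix.diagonal_transpose (aa e (fun i j => C (c i j))
      fun j => (X (Sum.inr j) : QB2.PolyB n (k + 2)))) j) i, by
    intro i j
    by_cases hij : i = j
    · subst hij
      intro m hm
      rw [Matrix.diagonal_apply_eq] at hm
      -- the coefficient only involves the coordinates of the second factor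
      have hm' : coeff m (rename Sum.inr (aa e (fun i j => C (c i j))
          (fun j => (X j : MvPolynomial (Fin (k + 2 + 1)) ℂ)) i)) ≠ 0 := by
        rw [aa_rename]
        exact hm
      obtain ⟨u, rfl, hu⟩ := coeff_rename_ne_zero _ _ _ hm'
      have h := isHomogeneous_aa e c id i hu
      have hinl : ∀ l : Fin (n - (k + 2) + 1),
          Finsupp.mapDomain (Sum.inr : _ → Fin (n - (k + 2) + 1) ⊕ Fin (k + 2 + 1)) u
            (Sum.inl l) = 0 := fun l => Finsupp.mapDomain_of_notMem_range _ _ (by simp)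
      have hinr : ∀ l : Fin (k + 2 + 1),
          Finsupp.mapDomain (Sum.inr : _ → Fin (n - (k + 2) + 1) ⊕ Fin (k + 2 + 1)) u
            (Sum.inr l) = u l := fun l => Finsupp.mapDomain_apply Sum.inr_injective _ _
      refine ⟨by simp [hinl], ?_⟩
      simp only [hinr]
      have h' : ∑ l, u l = 2 * ee e i + 1 := by
        rw [← h, Finsupp.weight_apply, Finsupp.sum_fintype _ _ (by simp)]
        simp
      have h'' : (∑ l, (u l : ℤ)) = 2 * (ee e i : ℤ) + 1 := by exact_mod_cast h'
      rw [h'']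
      ring
    · intro m hm
      rw [Matrix.diagonal_apply_ne _ hij] at hm
      exact absurd (coeff_zero m) hm⟩

theorem qpoly_theMat (n : ℕ) (e : Fin (r + 3) → (Fin (k + 2) → Bool))
    (c : Fin (r + 3) → Fin (k + 2 + 1) → ℂ) :
    QB2.qpoly (theMat n e c) = coneEq e c Sum.inr := by
  unfold QB2.qpoly coneEq dq
  refine Finset.sum_congr rfl fun i _ => ?_
  rw [Finset.sum_eq_single i]
  · have h : (theMat n e c).1 i i =
        aa e (fun i j => C (c i j)) (fun j => X (Sum.inr j)) i := Matrix.diagonal_apply_eq _ _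
    rw [h, aa_rename]
    ring
  · intro j _ hj
    have h : (theMat n e c).1 i j = 0 := Matrix.diagonal_apply_ne _ (Ne.symm hj)
    rw [h, map_zero, zero_mul, zero_mul]
  · intro h
    exact absurd (Finset.mem_univ i) h

theorem isQuadricBundle_theMat (n : ℕ) (e : Fin (r + 3) → (Fin (k + 2) → Bool))
    {c : Fin (r + 3) → Fin (k + 2 + 1) → ℂ} (hc : VeryGen c) (hkr : k < r + 1) :
    QB2.IsQuadricBundle (theMat n e c) := by
  refine ⟨?_, fun x y _ hy => ?_⟩
  · have h : (Matrix.of fun i j => (theMat n e c).1 i j) =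
        Matrix.diagonal (aa e (fun i j => C (c i j)) fun j => X (Sum.inr j)) := rfl
    rw [h, Matrix.det_diagonal]
    exact Finset.prod_ne_zero_iff.2 fun i _ => hc.aa_zero_ne e _ Sum.inr_injective i
  · obtain ⟨i, hi⟩ := hc.flat e hkr y hy
    refine ⟨i, i, ?_⟩
    have h : (theMat n e c).1 i i =
        aa e (fun i j => C (c i j)) (fun j => X (Sum.inr j)) i := Matrix.diagonal_apply_eq _ _
    rw [h, aa_map]
    simpa using hi

/-- On an affine chart, the equation of the total space is obtained by replacing some of the
variables, among them `y_{i₂}` and `z_j`, by `1`. -/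
theorem chartSub_theMat (n : ℕ) (e : Fin (r + 3) → (Fin (k + 2) → Bool))
    (c : Fin (r + 3) → Fin (k + 2 + 1) → ℂ) (i₁ : Fin (n - (k + 2) + 1)) (i₂ : Fin (k + 2 + 1))
    (j : Fin (r + 3)) :
    ∃ (Y : Fin (k + 2 + 1) → QB2.Amb n (k + 2) (r + 1))
      (Z : Fin (r + 3) → QB2.Amb n (k + 2) (r + 1)),
      (∀ l, Y l = 1 ∨ ∃ v, Y l = X v) ∧ (∀ l, Z l = 1 ∨ ∃ v, Z l = X v) ∧ Y i₂ = 1 ∧ Z j = 1 ∧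
        QB2.chartSub i₁ i₂ j (QB2.qpoly (theMat n e c)) =
          dq (aa e (fun i j => C (c i j)) Y) Z := by
  obtain ⟨ψ, hψ⟩ : ∃ ψ : (Fin (n - (k + 2) + 1) ⊕ Fin (k + 2 + 1)) ⊕ Fin (r + 3) →
      QB2.Amb n (k + 2) (r + 1), ψ = fun v =>
    if v = Sum.inl (Sum.inl i₁) ∨ v = Sum.inl (Sum.inr i₂) ∨ v = Sum.inr j then 1 else X v :=
    ⟨_, rfl⟩
  have hψ' : ∀ v, ψ v = 1 ∨ ∃ w, ψ v = X w := fun v => by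
    rw [hψ]
    by_cases h : v = Sum.inl (Sum.inl i₁) ∨ v = Sum.inl (Sum.inr i₂) ∨ v = Sum.inr j
    · exact Or.inl (if_pos h)
    · exact Or.inr ⟨v, if_neg h⟩
  refine ⟨fun l => ψ (Sum.inl (Sum.inr l)), fun l => ψ (Sum.inr l), fun _ => hψ' _,
    fun _ => hψ' _, ?_, ?_, ?_⟩
  · rw [hψ]
    exact if_pos (Or.inr (Or.inl rfl))
  · rw [hψ]
    exact if_pos (Or.inr (Or.inr rfl))
  · rw [qpoly_theMat]
    have h1 : QB2.chartSub i₁ i₂ j (coneEq e c Sum.inr) = aeval ψ (coneEq e c Sum.inr) := by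
      rw [hψ]
      rfl
    refine h1.trans ?_
    refine (dq_map (aeval (R := ℂ) ψ).toRingHom _ _).symm.trans ?_
    congr 1
    · funext i
      refine (aa_map e (aeval (R := ℂ) ψ).toRingHom _ _ i).trans ?_
      simp [algebraMap_eq]
    · funext i
      simp

theorem smoothTotalSpace_theMat (n : ℕ) (e : Fin (r + 3) → (Fin (k + 2) → Bool))
    {c : Fin (r + 3) → Fin (k + 2 + 1) → ℂ} (hc : VeryGen c) :
    QB2.SmoothTotalSpace (theMat n e c) := by
  intro i₁ i₂ j p hp
  obtain ⟨Y, Z, hY, hZ, hYi, hZj, h⟩ := chartSub_theMat n e c i₁ i₂ j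
  rw [h] at hp
  obtain ⟨v, hv⟩ := hc.smooth e Y Z hY hZ hYi hZj p hp
  refine ⟨v, ?_⟩
  rw [h]
  exact hv

end Assembly

/-- **Theorem 1 (Schreieder).**  Let `n` and `r` be positive integers with `r ≤ 2ⁿ - 2`,
and let `k` be the unique integer with `2^{k-1} - 1 ≤ r ≤ 2ᵏ - 2`.  Then there is a
smooth unirational complex `r`-fold quadric bundle `X` over `S = ℙ^{n-k} × ℙ^k` which is
not stably rational. -/
theorem exists_smooth_unirational_quadric_bundle_not_stably_rational
    (n r k : ℕ) (hn : 0 < n) (hr : 0 < r) (hrn : r ≤ 2^n - 2)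
    (hk1 : 2^(k-1) - 1 ≤ r) (hk2 : r ≤ 2^k - 2) :
    ∃ (e₁ e₂ : Fin (r+2) → ℤ) (c₁ c₂ : ℤ) (A : QB2.SymMat n k r e₁ e₂ c₁ c₂),
      QB2.IsQuadricBundle A ∧ QB2.SmoothTotalSpace A ∧
      IsDomain (QB2.ConeRing A) ∧ IsUnirationalSpec (QB2.ConeRing A) ∧
      ¬ IsStablyRationalSpec (QB2.ConeRing A) := by
  obtain ⟨k, rfl⟩ : ∃ k', k = k' + 2 := by
    rcases k with _ | _ | k
    · simp at hk2
      omega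
    · simp at hk2
      omega
    · exact ⟨k, rfl⟩
  obtain ⟨r, rfl⟩ : ∃ r', r = r' + 1 := ⟨r - 1, by omega⟩
  have hpow : 4 ≤ 2 ^ (k + 2) := by
    have := Nat.one_le_two_pow (n := k)
    rw [pow_add]
    omega
  have hkr : k < r + 1 := by
    have h1 : k + 1 < 2 ^ (k + 1) := Nat.lt_two_pow_self
    have h2 : k + 2 - 1 = k + 1 := rfl
    rw [h2] at hk1
    omega
  obtain ⟨e, he⟩ := exists_pfNumbering (k := k) (r := r) (by omega)
  obtain ⟨c, hc⟩ := exists_veryGen k r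
  have hI : Ideal.span {QB2.qpoly (theMat n e c)} = Ideal.span {coneEq e c Sum.inr} := by
    rw [qpoly_theMat]
  obtain ⟨d, f, hf⟩ := hc.exists_cone_embedding e _ Sum.inr_injective _ hI
  have hdom : IsDomain (QB2.ConeRing (theMat n e c)) := hf.isDomain f.toRingHom
  refine ⟨_, _, _, _, theMat n e c, isQuadricBundle_theMat n e hc hkr,
    smoothTotalSpace_theMat n e hc, hdom, ?_, ?_⟩
  · let f' : QB2.ConeRing (theMat n e c) →ₐ[ℂ] RatFF d := f
    exact ⟨d, ⟨IsFractionRing.liftAlgHom (R := ℂ) (A := QB2.ConeRing (theMat n e c)) (g := f') hf⟩⟩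
  · rintro ⟨m, d', ⟨φ⟩⟩
    haveI : IsDomain (QB2.Amb n (k + 2) (r + 1) ⧸ Ideal.span {QB2.qpoly (theMat n e c)}) := hdom
    exact hc.cone_not_stably_rational he _ Sum.inr_injective _ hI m d' φ
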